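/- arXiv:1504.04107 — 15 statements merged into one kernel-verified Lean document; each statement's English description precedes it below -/
import Mathlib

section
/- Let V be a real vector space and N : V → ℝ a convex function. Let f : V → V and h_FE : V → ℝ with h_FE(u) > 0 for all u, and assume the forward Euler condition: for all u ∈ V and all real h with 0 ≤ h ≤ h_FE(u) one has N(u + h·f(u)) ≤ N(u). Fix an integer k ≥ 1, a sequence (u_n)_{n≥0} in V, nonnegative step sizes h_n, and for each n ≥ k nonnegative coefficients α_{j,n}, β_{j,n} (0 ≤ j ≤ k−1) with Σ_{j=0}^{k−1} α_{j,n} = 1, such that u_n = Σ_{j=0}^{k−1} ( α_{j,n} u_{n−k+j} + h_n β_{j,n} f(u_{n−k+j}) ) and, for every j with β_{j,n} > 0, h_n ≤ (α_{j,n}/β_{j,n}) · h_FE(u_{n−k+j}). Then for every n ≥ k, N(u_n) ≤ max_{0 ≤ j ≤ k−1} N(u_{n−k+j}). -/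
/-- **Discrete monotonicity (SSP property) of variable step-size explicit linear
multistep methods.**  If `f` satisfies the forward Euler condition for the convex
functional `N`, the method has nonnegative coefficients summing to one, and the step
sizes obey the SSP restriction, then each computed value satisfies
`N (u n) ≤ max over the previous k values`. -/
theorem ssp_lmm_discrete_monotonicity
    (V : Type*) [AddCommGroup V] [Module ℝ V]
    (N : V → ℝ) (hN : ConvexOn ℝ Set.univ N)
    (f : V → V) (hFE : V → ℝ) (hFEpos : ∀ u, 0 < hFE u)
    (hfe : ∀ (u : V) (h : ℝ), 0 ≤ h → h ≤ hFE u → N (u + h • f u) ≤ N u)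
    (k : ℕ) (hk : 1 ≤ k)
    (u : ℕ → V) (h : ℕ → ℝ) (α β : ℕ → ℕ → ℝ)
    (hh : ∀ n, k ≤ n → 0 ≤ h n)
    (hαnn : ∀ n, k ≤ n → ∀ j < k, 0 ≤ α j n)
    (hβnn : ∀ n, k ≤ n → ∀ j < k, 0 ≤ β j n)
    (hsum : ∀ n, k ≤ n → (∑ j ∈ Finset.range k, α j n) = 1)
    (hrec : ∀ n, k ≤ n →
      u n = ∑ j ∈ Finset.range k,
        (α j n • u (n - k + j) + (h n * β j n) • f (u (n - k + j))))
    (hstep : ∀ n, k ≤ n → ∀ j < k, 0 < β j n →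
      h n ≤ (α j n / β j n) * hFE (u (n - k + j))) :
    ∀ n, k ≤ n →
      N (u n) ≤ (Finset.range k).sup'
        (Finset.nonempty_range_iff.mpr (by omega))
        (fun j => N (u (n - k + j))) := by
  intro n hn
  have key : ∀ j < k, h n * β j n ≤ α j n * hFE (u (n - k + j)) := by
    intro j hj
    rcases (hβnn n hn j hj).eq_or_lt with hb | hb
    · rw [← hb, mul_zero]
      exact mul_nonneg (hαnn n hn j hj) (hFEpos _).le
    · have h1 := mul_le_mul_of_nonneg_right (hstep n hn j hj hb) hb.le
      have h2 : α j n / β j n * hFE (u (n - k + j)) * β j n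
          = α j n * hFE (u (n - k + j)) := by
        field_simp
      rwa [h2] at h1
  have hnn : ∀ j < k, 0 ≤ h n * β j n := fun j hj =>
    mul_nonneg (hh n hn) (hβnn n hn j hj)
  have heq : u n = ∑ j ∈ Finset.range k,
      α j n • (u (n - k + j) + (h n * β j n / α j n) • f (u (n - k + j))) := by
    rw [hrec n hn]
    refine Finset.sum_congr rfl fun j hj => ?_
    have hj' := Finset.mem_range.mp hj
    rw [smul_add, smul_smul]
    by_cases ha : α j n = 0
    · have h1 := key j hj'
      rw [ha, zero_mul] at h1
      rw [le_antisymm h1 (hnn j hj')]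
      simp
    · rw [mul_div_cancel₀ _ ha]
  have hbound : ∀ j < k,
      N (u (n - k + j) + (h n * β j n / α j n) • f (u (n - k + j)))
        ≤ N (u (n - k + j)) := by
    intro j hj
    refine hfe _ _ (div_nonneg (hnn j hj) (hαnn n hn j hj)) ?_
    exact div_le_of_le_mul₀ (hαnn n hn j hj) (hFEpos _).le
      ((key j hj).trans_eq (mul_comm _ _))
  have hJ := hN.map_sum_le (t := Finset.range k) (w := fun j => α j n)
    (p := fun j => u (n - k + j) + (h n * β j n / α j n) • f (u (n - k + j)))
    (fun j hj => hαnn n hn j (Finset.mem_range.mp hj)) (hsum n hn)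
    (fun _ _ => Set.mem_univ _)
  rw [← heq] at hJ
  refine hJ.trans ?_
  set M := (Finset.range k).sup' (Finset.nonempty_range_iff.mpr (by omega))
    (fun j => N (u (n - k + j))) with hM
  calc _ ≤ ∑ j ∈ Finset.range k, α j n * M := by
        refine Finset.sum_le_sum fun j hj => ?_
        have hj' := Finset.mem_range.mp hj
        rw [smul_eq_mul]
        refine mul_le_mul_of_nonneg_left ((hbound j hj').trans ?_) (hαnn n hn j hj')
        exact Finset.le_sup' (fun j => N (u (n - k + j))) hj
    _ = M := by rw [← Finset.sum_mul, hsum n hn, one_mul]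
end

section
/- Let p ≥ 2 be an integer and suppose there exist a real r > 0 and nonnegative vectors δ, β satisfying the order-p conditions with parameter r. Then the supremum r* = sup{ r > 0 : there exist nonnegative δ, β satisfying the order-p conditions with parameter r } is finite, and it is attained: there exist nonnegative vectors δ*, β* satisfying the order-p conditions with parameter r*. In other words, if a k-step formula of order p with positive SSP coefficient exists, then a k-step formula of order p whose SSP coefficient equals the optimal one exists. -/
/-- Cumulative step-size ratios: `OmegaSum ω j = ω 1 + ⋯ + ω j` (with `OmegaSum ω 0 = 0`). -/
noncomputable def OmegaSum (ω : ℕ → ℝ) (j : ℕ) : ℝ := ∑ i ∈ Finset.range j, ω (i + 1)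

/-- The order-`p` conditions with parameter `r` for a `k`-step explicit linear multistep
formula with coefficient vectors `δ`, `β` and step-size ratios `ω`:
`Σ_{j<k} (δ j + r β j) = 1` and, for `1 ≤ m ≤ p`,
`Σ_{j<k} ( Ω_j^m (δ j + r β j) + m Ω_j^{m-1} β j ) = Ω_k^m`. -/
def OrderCond (k p : ℕ) (ω : ℕ → ℝ) (r : ℝ) (δ β : ℕ → ℝ) : Prop :=
  (∑ j ∈ Finset.range k, (δ j + r * β j)) = 1 ∧
  ∀ m : ℕ, 1 ≤ m → m ≤ p →
    (∑ j ∈ Finset.range k,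
        ((OmegaSum ω j) ^ m * (δ j + r * β j)
          + (m : ℝ) * (OmegaSum ω j) ^ (m - 1) * β j))
      = (OmegaSum ω k) ^ m

theorem OmegaSum_le_aux (k : ℕ) (ω : ℕ → ℝ) (hω : ∀ i, 1 ≤ i → i ≤ k → 0 < ω i)
    (a b : ℕ) (hab : a ≤ b) (hb : b ≤ k) : OmegaSum ω a ≤ OmegaSum ω b := by
  unfold OmegaSum
  apply Finset.sum_le_sum_of_subset_of_nonneg
  · exact Finset.range_mono hab
  · intro i hi _
    have := Finset.mem_range.1 hi
    exact (hω (i + 1) (by omega) (by omega)).le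

theorem OrderCond_bounds (k p : ℕ) (hk : 1 ≤ k) (hp : 2 ≤ p)
    (ω : ℕ → ℝ) (hω : ∀ i, 1 ≤ i → i ≤ k → 0 < ω i) (r : ℝ) (hr : 0 < r) (δ β : ℕ → ℝ)
    (hδ : ∀ j < k, 0 ≤ δ j) (hβ : ∀ j < k, 0 ≤ β j) (h : OrderCond k p ω r δ β) :
    r ≤ 1 / ω k ∧ (∀ j < k, δ j ≤ 1) ∧ (∀ j < k, β j ≤ OmegaSum ω k) := by
  obtain ⟨h0, hm⟩ := h
  have h1 := hm 1 le_rfl (by omega)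
  simp only [pow_one, Nat.cast_one, one_mul, Nat.sub_self, pow_zero] at h1
  rw [Finset.sum_add_distrib] at h1
  have hγ : ∀ j < k, 0 ≤ δ j + r * β j := fun j hj =>
    add_nonneg (hδ j hj) (mul_nonneg hr.le (hβ j hj))
  have hΩ : ∀ j, j ≤ k → 0 ≤ OmegaSum ω j := fun j hj => by
    have := OmegaSum_le_aux k ω hω 0 j (Nat.zero_le _) hj
    simpa [OmegaSum] using this
  have hωk := hω k hk le_rfl
  have hlast : OmegaSum ω k = OmegaSum ω (k - 1) + ω k := by
    obtain ⟨n, rfl⟩ : ∃ n, k = n + 1 := ⟨k - 1, by omega⟩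
    simp [OmegaSum, Finset.sum_range_succ]
  have hA : ∑ j ∈ Finset.range k, OmegaSum ω j * (δ j + r * β j) ≤ OmegaSum ω (k - 1) := by
    calc _ ≤ ∑ j ∈ Finset.range k, OmegaSum ω (k - 1) * (δ j + r * β j) := by
          apply Finset.sum_le_sum
          intro j hj
          have hj := Finset.mem_range.1 hj
          exact mul_le_mul_of_nonneg_right
            (OmegaSum_le_aux k ω hω _ _ (by omega) (by omega)) (hγ j hj)
      _ = _ := by rw [← Finset.mul_sum, h0, mul_one]
  have hA0 : 0 ≤ ∑ j ∈ Finset.range k, OmegaSum ω j * (δ j + r * β j) :=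
    Finset.sum_nonneg fun j hj =>
      mul_nonneg (hΩ j (Finset.mem_range.1 hj).le) (hγ j (Finset.mem_range.1 hj))
  have hB : ω k ≤ ∑ j ∈ Finset.range k, β j := by linarith
  have hD0 : 0 ≤ ∑ j ∈ Finset.range k, δ j :=
    Finset.sum_nonneg fun j hj => hδ j (Finset.mem_range.1 hj)
  refine ⟨?_, ?_, ?_⟩
  · rw [Finset.sum_add_distrib, ← Finset.mul_sum] at h0
    rw [le_div_iff₀ hωk]
    nlinarith [mul_le_mul_of_nonneg_left hB hr.le]
  · intro j hj
    have := Finset.single_le_sum (f := fun j => δ j + r * β j)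
      (fun i hi => hγ i (Finset.mem_range.1 hi)) (Finset.mem_range.2 hj)
    have h2 := mul_nonneg hr.le (hβ j hj)
    linarith
  · intro j hj
    have := Finset.single_le_sum (f := β)
      (fun i hi => hβ i (Finset.mem_range.1 hi)) (Finset.mem_range.2 hj)
    linarith

theorem OrderCond_congr_aux (k p : ℕ) (ω : ℕ → ℝ) (r : ℝ) (δ β δ' β' : ℕ → ℝ)
    (hδ : ∀ j < k, δ' j = δ j) (hβ : ∀ j < k, β' j = β j) (h : OrderCond k p ω r δ β) :
    OrderCond k p ω r δ' β' := by
  refine ⟨?_, fun m h1 h2 => ?_⟩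
  · rw [← h.1]
    refine Finset.sum_congr rfl fun j hj => ?_
    rw [hδ j (Finset.mem_range.1 hj), hβ j (Finset.mem_range.1 hj)]
  · rw [← h.2 m h1 h2]
    refine Finset.sum_congr rfl fun j hj => ?_
    rw [hδ j (Finset.mem_range.1 hj), hβ j (Finset.mem_range.1 hj)]

theorem OrderCond_isClosed (k p : ℕ) (ω : ℕ → ℝ) :
    IsClosed {x : ℝ × (ℕ → ℝ) × (ℕ → ℝ) | OrderCond k p ω x.1 x.2.1 x.2.2} := by
  unfold OrderCond
  simp only [Set.ofPred_and, Set.ofPred_forall]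
  refine IsClosed.inter (isClosed_eq (by fun_prop) (by fun_prop)) ?_
  exact isClosed_iInter fun m => isClosed_iInter fun _ => isClosed_iInter fun _ =>
    isClosed_eq (by fun_prop) (by fun_prop)

/-- **Existence of an optimal formula.**  If for `p ≥ 2` some `k`-step formula of order
`p` with positive SSP coefficient exists, then the set of achievable positive SSP
parameters is bounded above, and its supremum is attained by some formula. -/
theorem optimal_ssp_formula_exists
    (k p : ℕ) (hk : 1 ≤ k) (hp : 2 ≤ p)
    (ω : ℕ → ℝ) (hω : ∀ i, 1 ≤ i → i ≤ k → 0 < ω i)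
    (hex : ∃ r : ℝ, 0 < r ∧ ∃ δ β : ℕ → ℝ,
      (∀ j < k, 0 ≤ δ j) ∧ (∀ j < k, 0 ≤ β j) ∧ OrderCond k p ω r δ β) :
    BddAbove {r : ℝ | 0 < r ∧ ∃ δ β : ℕ → ℝ,
      (∀ j < k, 0 ≤ δ j) ∧ (∀ j < k, 0 ≤ β j) ∧ OrderCond k p ω r δ β} ∧
    ∃ δ β : ℕ → ℝ, (∀ j < k, 0 ≤ δ j) ∧ (∀ j < k, 0 ≤ β j) ∧
      OrderCond k p ω
        (sSup {r : ℝ | 0 < r ∧ ∃ δ β : ℕ → ℝ,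
          (∀ j < k, 0 ≤ δ j) ∧ (∀ j < k, 0 ≤ β j) ∧ OrderCond k p ω r δ β})
        δ β := by
  set S := {r : ℝ | 0 < r ∧ ∃ δ β : ℕ → ℝ,
      (∀ j < k, 0 ≤ δ j) ∧ (∀ j < k, 0 ≤ β j) ∧ OrderCond k p ω r δ β} with hS
  have hbdd : BddAbove S := by
    refine ⟨1 / ω k, ?_⟩
    rintro r ⟨hr, δ, β, hδ, hβ, h⟩
    exact (OrderCond_bounds k p hk hp ω hω r hr δ β hδ hβ h).1
  refine ⟨hbdd, ?_⟩
  let K : Set (ℝ × (ℕ → ℝ) × (ℕ → ℝ)) :=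
    (Set.Icc 0 (1 / ω k) ×ˢ ((Set.univ.pi fun _ => Set.Icc 0 1) ×ˢ
      (Set.univ.pi fun _ => Set.Icc 0 (OmegaSum ω k)))) ∩
    {x | OrderCond k p ω x.1 x.2.1 x.2.2}
  have hK : IsCompact K :=
    (isCompact_Icc.prod ((isCompact_univ_pi fun _ => isCompact_Icc).prod
      (isCompact_univ_pi fun _ => isCompact_Icc))).inter_right (OrderCond_isClosed k p ω)
  have hcl : IsClosed (Prod.fst '' K) := (hK.image continuous_fst).isClosed
  have hΩ : 0 ≤ OmegaSum ω k := by
    have := OmegaSum_le_aux k ω hω 0 k (Nat.zero_le _) le_rfl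
    simpa [OmegaSum] using this
  have hsub : S ⊆ Prod.fst '' K := by
    rintro r ⟨hr, δ, β, hδ, hβ, h⟩
    obtain ⟨b1, b2, b3⟩ := OrderCond_bounds k p hk hp ω hω r hr δ β hδ hβ h
    refine ⟨(r, (fun j => if j < k then δ j else 0), (fun j => if j < k then β j else 0)),
      ⟨⟨⟨hr.le, b1⟩, ?_, ?_⟩, ?_⟩, rfl⟩
    · intro j _
      by_cases hj : j < k
      · simpa [hj] using ⟨hδ j hj, b2 j hj⟩
      · simp [hj]
    · intro j _
      by_cases hj : j < k
      · simpa [hj] using ⟨hβ j hj, b3 j hj⟩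
      · simpa [hj] using hΩ
    · exact OrderCond_congr_aux k p ω r δ β _ _ (fun j hj => by simp [hj])
        (fun j hj => by simp [hj]) h
  have hmem : sSup S ∈ Prod.fst '' K :=
    closure_minimal hsub hcl (csSup_mem_closure hex hbdd)
  obtain ⟨⟨r, δ, β⟩, ⟨⟨_, hδ, hβ⟩, h⟩, hr⟩ := hmem
  refine ⟨δ, β, fun j _ => (hδ j (Set.mem_univ j)).1, fun j _ => (hβ j (Set.mem_univ j)).1, ?_⟩
  rw [← hr]
  exact h
end

section
/- Let k ≥ 2 and suppose Ω_k > 2 (so Ω_{k−1} = Ω_k − 1 > 1). Set r = (Ω_k − 2)/(Ω_k − 1), and define δ by δ₀ = 1/Ω_{k−1}² and δ_j = 0 for 1 ≤ j ≤ k−1, and β by β_{k−1} = (Ω_{k−1} + 1)/Ω_{k−1} and β_j = 0 for 0 ≤ j ≤ k−2. Then: (a) δ, β are nonnegative and satisfy the order-2 conditions with parameter r; (b) for any real s > 0 and nonnegative vectors δ', β' satisfying the order-2 conditions with parameter s, one has s ≤ r; and (c) the pair (δ, β) above is the unique pair of nonnegative vectors satisfying the order-2 conditions with parameter r. That is, the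 optimal SSP coefficient among second-order k-step formulae equals (Ω_k − 2)/(Ω_k − 1) and is attained by the stated formula. -/
lemma sum_ends (n : ℕ) (f : ℕ → ℝ) (h : ∀ j, 1 ≤ j → j < n + 1 → f j = 0) :
    ∑ j ∈ Finset.range (n + 2), f j = f 0 + f (n + 1) := by
  rw [Finset.sum_range_succ, Finset.sum_range_succ', Finset.sum_eq_zero]
  · ring
  · intro j hj
    rw [Finset.mem_range] at hj
    exact h (j + 1) (by omega) (by omega)

lemma beta_coef_pos {a s x : ℝ} (ha : 1 < a) (hs : a - 1 ≤ s * a) (h0 : 0 ≤ x) (hx : x < a) :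
    0 < s * (x * (a + 1 - x)) + (a + 1 - 2 * x) := by
  have h1 : 0 < (a - x) * ((a + 1) + (a - 1) * x) := by
    apply mul_pos (by linarith)
    have : 0 ≤ (a - 1) * x := mul_nonneg (by linarith) h0
    linarith
  have h2 : (a - 1) * (x * (a + 1 - x)) ≤ (s * a) * (x * (a + 1 - x)) :=
    mul_le_mul_of_nonneg_right hs (mul_nonneg h0 (by linarith))
  have h3 : 0 < a * (s * (x * (a + 1 - x)) + (a + 1 - 2 * x)) := by nlinarith
  exact pos_of_mul_pos_right h3 (by linarith)

lemma core (n : ℕ) (x : ℕ → ℝ) (a s : ℝ) (δ β : ℕ → ℝ) (hx0 : x 0 = 0) (hxa : x (n + 1) = a)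
    (hpos : ∀ j, 1 ≤ j → j < n + 2 → 0 < x j) (hlt : ∀ j, j < n + 1 → x j < a)
    (ha : 1 < a) (hs : a - 1 ≤ s * a)
    (hδ : ∀ j < n + 2, 0 ≤ δ j) (hβ : ∀ j < n + 2, 0 ≤ β j)
    (e0 : ∑ j ∈ Finset.range (n + 2), (δ j + s * β j) = 1)
    (e1 : ∑ j ∈ Finset.range (n + 2), (x j * (δ j + s * β j) + β j) = a + 1)
    (e2 : ∑ j ∈ Finset.range (n + 2), (x j ^ 2 * (δ j + s * β j) + 2 * x j * β j)
      = (a + 1) ^ 2) :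
    s * a = a - 1 ∧ δ 0 = 1 / a ^ 2 ∧ β (n + 1) = (a + 1) / a ∧
      (∀ j, 1 ≤ j → j < n + 2 → δ j = 0) ∧ (∀ j, j < n + 1 → β j = 0) := by
  have hle : ∀ j, j < n + 2 → x j ≤ a := by
    intro j hj
    rcases Nat.lt_or_ge j (n + 1) with h | h
    · exact (hlt j h).le
    · have : j = n + 1 := by omega
      rw [this, hxa]
  have hnn : ∀ j, j < n + 2 → 0 ≤ x j := by
    intro j hj
    rcases Nat.eq_zero_or_pos j with h | h
    · rw [h, hx0]
    · exact (hpos j h hj).le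
  have hc : ∀ j, j < n + 2 → 0 ≤ s * (x j * (a + 1 - x j)) + (a + 1 - 2 * x j) := by
    intro j hj
    rcases Nat.lt_or_ge j (n + 1) with h | h
    · exact (beta_coef_pos ha hs (hnn j hj) (hlt j h)).le
    · have : j = n + 1 := by omega
      rw [this, hxa]
      nlinarith
  have hd : ∀ j, j < n + 2 → 0 ≤ x j * (a + 1 - x j) := fun j hj =>
    mul_nonneg (hnn j hj) (by linarith [hle j hj])
  have hsum : ∑ j ∈ Finset.range (n + 2), (δ j * (x j * (a + 1 - x j)) +
      β j * (s * (x j * (a + 1 - x j)) + (a + 1 - 2 * x j))) = 0 := by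
    have : (a + 1) * ∑ j ∈ Finset.range (n + 2), (x j * (δ j + s * β j) + β j) -
        ∑ j ∈ Finset.range (n + 2), (x j ^ 2 * (δ j + s * β j) + 2 * x j * β j) = 0 := by
      rw [e1, e2]; ring
    rw [← this, Finset.mul_sum, ← Finset.sum_sub_distrib]
    refine Finset.sum_congr rfl fun j _ => ?_
    ring
  have hz : ∀ j, j < n + 2 → δ j * (x j * (a + 1 - x j)) = 0 ∧
      β j * (s * (x j * (a + 1 - x j)) + (a + 1 - 2 * x j)) = 0 := by
    have h1 := (Finset.sum_eq_zero_iff_of_nonneg (fun j hj => by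
      rw [Finset.mem_range] at hj
      exact add_nonneg (mul_nonneg (hδ j hj) (hd j hj)) (mul_nonneg (hβ j hj) (hc j hj)))).1 hsum
    intro j hj
    have h2 := h1 j (Finset.mem_range.2 hj)
    exact (add_eq_zero_iff_of_nonneg (mul_nonneg (hδ j hj) (hd j hj))
      (mul_nonneg (hβ j hj) (hc j hj))).1 h2
  have hδ0 : ∀ j, 1 ≤ j → j < n + 2 → δ j = 0 := by
    intro j h1 hj
    refine (mul_eq_zero.1 (hz j hj).1).resolve_right (ne_of_gt ?_)
    exact mul_pos (hpos j h1 hj) (by linarith [hle j hj])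
  have hβ0 : ∀ j, j < n + 1 → β j = 0 := by
    intro j hj
    exact (mul_eq_zero.1 (hz j (by omega)).2).resolve_right
      (ne_of_gt (beta_coef_pos ha hs (hnn j (by omega)) (hlt j hj)))
  have a0 : a ≠ 0 := by linarith
  rw [sum_ends n _ (fun j h1 h2 => by rw [hδ0 j h1 (by omega), hβ0 j h2]; ring),
    hβ0 0 (by omega), hδ0 (n + 1) (by omega) (by omega)] at e0 e1 e2
  rw [hx0, hxa] at e1 e2
  generalize β (n + 1) = b at *
  have hb : b * a = a + 1 := by linear_combination e2 - a * e1
  have hb0 : a + 1 ≠ 0 := by linarith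
  have hsa : s * a = a - 1 := by
    have : (a + 1) * (s * a - (a - 1)) = 0 := by
      linear_combination a * e1 - (s * a + 1) * hb
    have := (mul_eq_zero.1 this).resolve_left hb0
    linarith
  refine ⟨hsa, ?_, ?_, hδ0, hβ0⟩
  · rw [eq_div_iff (by positivity)]
    linear_combination a ^ 2 * e0 - s * a * hb - (a + 1) * hsa
  · rw [eq_div_iff a0, hb]

/-- **Optimal second-order formula.**  For `k ≥ 2` with `ω_k = 1` and `Ω_k > 2`, the
formula with `δ₀ = 1/Ω_{k−1}²`, `β_{k−1} = (Ω_{k−1}+1)/Ω_{k−1}` and all other entries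
zero is nonnegative, satisfies the order-2 conditions with parameter
`r = (Ω_k − 2)/(Ω_k − 1)`, no larger parameter is achievable, and it is the unique such
formula for this `r`. -/
theorem optimal_second_order_formula
    (k : ℕ) (hk : 2 ≤ k)
    (ω : ℕ → ℝ) (hω : ∀ i, 1 ≤ i → i ≤ k → 0 < ω i) (hωk : ω k = 1)
    (hΩk : 2 < OmegaSum ω k)
    (r : ℝ) (hr : r = (OmegaSum ω k - 2) / (OmegaSum ω k - 1))
    (δ β : ℕ → ℝ)
    (hδdef : δ = fun j => if j = 0 then 1 / (OmegaSum ω (k - 1)) ^ 2 else 0)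
    (hβdef : β = fun j => if j = k - 1 then
      (OmegaSum ω (k - 1) + 1) / OmegaSum ω (k - 1) else 0) :
    ((∀ j < k, 0 ≤ δ j) ∧ (∀ j < k, 0 ≤ β j) ∧ OrderCond k 2 ω r δ β) ∧
    (∀ s : ℝ, 0 < s → ∀ δ' β' : ℕ → ℝ,
      (∀ j < k, 0 ≤ δ' j) → (∀ j < k, 0 ≤ β' j) → OrderCond k 2 ω s δ' β' → s ≤ r) ∧
    (∀ δ' β' : ℕ → ℝ,
      (∀ j < k, 0 ≤ δ' j) → (∀ j < k, 0 ≤ β' j) → OrderCond k 2 ω r δ' β' →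
      ∀ j < k, δ' j = δ j ∧ β' j = β j) := by
  obtain ⟨n, rfl⟩ : ∃ n, k = n + 2 := ⟨k - 2, by omega⟩
  have hk1 : n + 2 - 1 = n + 1 := rfl
  rw [hk1] at hδdef hβdef
  have hx0 : OmegaSum ω 0 = 0 := by simp [OmegaSum]
  have hsucc : ∀ j, OmegaSum ω (j + 1) = OmegaSum ω j + ω (j + 1) := fun j => by
    simp [OmegaSum, Finset.sum_range_succ]
  have hW : OmegaSum ω (n + 2) = OmegaSum ω (n + 1) + 1 := by rw [hsucc (n + 1), hωk]
  have hmono : ∀ j i, i < j → j < n + 2 → OmegaSum ω i < OmegaSum ω j := by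
    intro j
    induction j with
    | zero => intro i hi; omega
    | succ j ih =>
      intro i hi hj
      have h1 := hω (j + 1) (by omega) (by omega)
      rw [hsucc]
      rcases Nat.lt_or_ge i j with h | h
      · linarith [ih i h (by omega)]
      · have : i = j := by omega
        rw [this]; linarith
  have hpos : ∀ j, 1 ≤ j → j < n + 2 → 0 < OmegaSum ω j := by
    intro j h1 hj
    have := hmono j 0 (by omega) hj
    rwa [hx0] at this
  have hlt : ∀ j, j < n + 1 → OmegaSum ω j < OmegaSum ω (n + 1) := fun j hj =>
    hmono (n + 1) j hj (by omega)
  have ha : 1 < OmegaSum ω (n + 1) := by linarith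
  have a0 : OmegaSum ω (n + 1) ≠ 0 := by linarith
  have key : ∀ s δ' β', OmegaSum ω (n + 1) - 1 ≤ s * OmegaSum ω (n + 1) →
      (∀ j < n + 2, 0 ≤ δ' j) → (∀ j < n + 2, 0 ≤ β' j) → OrderCond (n + 2) 2 ω s δ' β' → _ :=
    fun s δ' β' hs h1 h2 ho =>
      core n (OmegaSum ω) (OmegaSum ω (n + 1)) s δ' β' hx0 rfl hpos hlt ha hs h1 h2 ho.1
        (by simpa [hW] using ho.2 1 (by norm_num) (by norm_num))
        (by simpa [hW] using ho.2 2 (by norm_num) (by norm_num))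
  have hr' : r = (OmegaSum ω (n + 1) - 1) / OmegaSum ω (n + 1) := by
    rw [hr, hW]; congr 1 <;> ring
  have hra : r * OmegaSum ω (n + 1) = OmegaSum ω (n + 1) - 1 := by
    rw [hr', div_mul_cancel₀ _ a0]
  refine ⟨⟨?_, ?_, ?_, ?_⟩, ?_, ?_⟩
  · intro j _
    rw [hδdef]
    dsimp only
    split_ifs <;> positivity
  · intro j _
    rw [hβdef]
    dsimp only
    split_ifs
    · exact div_nonneg (by linarith) (by linarith)
    · exact le_rfl
  · have hz : ∀ j, 1 ≤ j → j < n + 1 → δ j + r * β j = 0 := by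
      intro j h1 h2
      simp [hδdef, hβdef, show j ≠ 0 by omega, show j ≠ n + 1 by omega]
    rw [sum_ends n _ hz]
    simp [hδdef, hβdef, hr']
    field_simp
    ring
  · intro m h1 h2
    rw [sum_ends n _ (fun j h1 h2 => by
      simp [hδdef, hβdef, show j ≠ 0 by omega, show j ≠ n + 1 by omega]), hW, hx0]
    have hm : m = 1 ∨ m = 2 := by omega
    rcases hm with rfl | rfl
    · simp [hδdef, hβdef, hr']
      field_simp
      ring
    · simp [hδdef, hβdef, hr']
      field_simp
      ring
  · intro s _ δ' β' h1 h2 ho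
    by_contra! hsr
    have h3 : r * OmegaSum ω (n + 1) < s * OmegaSum ω (n + 1) :=
      mul_lt_mul_of_pos_right hsr (by linarith)
    have h4 := (key s δ' β' (by linarith) h1 h2 ho).1
    linarith
  · intro δ' β' h1 h2 ho j hj
    obtain ⟨-, hd0, hbn, hd, hb⟩ := key r δ' β' hra.ge h1 h2 ho
    rw [hδdef, hβdef]
    dsimp only
    constructor
    · split_ifs with h
      · rw [h, hd0]
      · exact hd j (by omega) hj
    · split_ifs with h
      · rw [h, hbn]
      · exact hb j (by omega)
end

section
/- Let k ≥ 2 and write Ω = Ω_{k−1}, and assume Ω ≥ 2. Define coefficient vectors α, β (indexed 0 ≤ j ≤ k−1) by α_{k−1} = (Ω+1)²(Ω−2)/Ω³, β_{k−1} = (Ω+1)²/Ω², α₀ = (3Ω+2)/Ω³, β₀ = (Ω+1)/Ω², and all other entries zero. Then: (a) α and β are nonnegative and satisfy the third-order conditions in (α, β) form: Σ_{j=0}^{k−1} α_j = 1 and Σ_{j=0}^{k−1} ( Ω_j^m α_j + m Ω_j^{m−1} β_j ) = Ω_k^m for m = 1, 2, 3; and (b) the SSP coefficient of this formula, namely min(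 α_{k−1}/β_{k−1}, α₀/β₀ ), equals (Ω − 2)/Ω if 2 ≤ Ω ≤ 2(1+√2), and equals (3Ω + 2)/(Ω(Ω + 1)) if Ω > 2(1+√2). -/
/-- **The family of third-order formulae \eqref{VSSSSPLMMk3} and its SSP coefficient.**
With `Ω = Ω_{k−1} ≥ 2` and `ω_k = 1`, the coefficients
`α_{k−1} = (Ω+1)²(Ω−2)/Ω³`, `β_{k−1} = (Ω+1)²/Ω²`, `α₀ = (3Ω+2)/Ω³`, `β₀ = (Ω+1)/Ω²`
(all other entries zero) are nonnegative and satisfy the third-order conditions, and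
the SSP coefficient `min(α_{k−1}/β_{k−1}, α₀/β₀)` equals `(Ω−2)/Ω` for
`2 ≤ Ω ≤ 2(1+√2)` and `(3Ω+2)/(Ω(Ω+1))` for `Ω > 2(1+√2)`. -/
theorem third_order_formula_ssp_coefficient
    (k : ℕ) (hk : 2 ≤ k)
    (ω : ℕ → ℝ) (hω : ∀ i, 1 ≤ i → i ≤ k → 0 < ω i) (hωk : ω k = 1)
    (Ω : ℝ) (hΩ : Ω = OmegaSum ω (k - 1)) (hΩ2 : 2 ≤ Ω)
    (α β : ℕ → ℝ)
    (hαdef : α = fun j => if j = k - 1 then (Ω + 1) ^ 2 * (Ω - 2) / Ω ^ 3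
      else if j = 0 then (3 * Ω + 2) / Ω ^ 3 else 0)
    (hβdef : β = fun j => if j = k - 1 then (Ω + 1) ^ 2 / Ω ^ 2
      else if j = 0 then (Ω + 1) / Ω ^ 2 else 0) :
    ((∀ j < k, 0 ≤ α j) ∧ (∀ j < k, 0 ≤ β j) ∧
      (∑ j ∈ Finset.range k, α j) = 1 ∧
      (∀ m : ℕ, 1 ≤ m → m ≤ 3 →
        (∑ j ∈ Finset.range k,
            ((OmegaSum ω j) ^ m * α j + (m : ℝ) * (OmegaSum ω j) ^ (m - 1) * β j))
          = (OmegaSum ω k) ^ m)) ∧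
    (Ω ≤ 2 * (1 + Real.sqrt 2) →
      min (α (k - 1) / β (k - 1)) (α 0 / β 0) = (Ω - 2) / Ω) ∧
    (2 * (1 + Real.sqrt 2) < Ω →
      min (α (k - 1) / β (k - 1)) (α 0 / β 0) = (3 * Ω + 2) / (Ω * (Ω + 1))) := by
  obtain ⟨n, rfl⟩ : ∃ n, k = n + 2 := ⟨k - 2, by omega⟩
  have e : n + 2 - 1 = n + 1 := by omega
  rw [e] at hΩ hαdef hβdef ⊢
  have hpos : 0 < Ω := by linarith
  have hne : Ω ≠ 0 := hpos.ne'
  have hne1 : Ω + 1 ≠ 0 := by positivity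
  have h2 : 0 ≤ Ω - 2 := by linarith
  have hO0 : OmegaSum ω 0 = 0 := by simp [OmegaSum]
  have hOk : OmegaSum ω (n + 2) = Ω + 1 := by
    rw [hΩ, ← hωk]; simp only [OmegaSum]; rw [Finset.sum_range_succ]
  have a1 : α (n + 1) = (Ω + 1) ^ 2 * (Ω - 2) / Ω ^ 3 := by simp [hαdef]
  have a0 : α 0 = (3 * Ω + 2) / Ω ^ 3 := by simp [hαdef]
  have b1 : β (n + 1) = (Ω + 1) ^ 2 / Ω ^ 2 := by simp [hβdef]
  have b0 : β 0 = (Ω + 1) / Ω ^ 2 := by simp [hβdef]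
  have am : ∀ j ∈ Finset.range n, α (j + 1) = 0 := by
    intro j hj
    have : j ≠ n := (Finset.mem_range.mp hj).ne
    simp [hαdef, this]
  have bm : ∀ j ∈ Finset.range n, β (j + 1) = 0 := by
    intro j hj
    have : j ≠ n := (Finset.mem_range.mp hj).ne
    simp [hβdef, this]
  have r1 : α (n + 1) / β (n + 1) = (Ω - 2) / Ω := by
    rw [a1, b1]; field_simp
  have r0 : α 0 / β 0 = (3 * Ω + 2) / (Ω * (Ω + 1)) := by
    rw [a0, b0]; field_simp
  have hs : Real.sqrt 2 ^ 2 = 2 := Real.sq_sqrt (by norm_num)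
  have hs0 : 0 ≤ Real.sqrt 2 := Real.sqrt_nonneg 2
  refine ⟨⟨?_, ?_, ?_, ?_⟩, ?_, ?_⟩
  · intro j _
    rw [hαdef]; dsimp only
    split_ifs <;> positivity
  · intro j _
    rw [hβdef]; dsimp only
    split_ifs <;> positivity
  · rw [Finset.sum_range_succ, Finset.sum_range_succ', Finset.sum_eq_zero am, a0, a1]
    field_simp
    ring
  · intro m hm1 hm3
    rw [Finset.sum_range_succ, Finset.sum_range_succ', Finset.sum_eq_zero
      (fun j hj => by rw [am j hj, bm j hj]; ring), a0, a1, b0, b1, hO0, hOk, ← hΩ]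
    interval_cases m <;> norm_num <;> field_simp <;> ring
  · intro h
    rw [r1, r0]
    apply min_eq_left
    rw [div_le_div_iff₀ hpos (by positivity)]
    have : Ω ^ 2 - 4 * Ω - 4 ≤ 0 := by nlinarith
    nlinarith
  · intro h
    rw [r1, r0]
    apply min_eq_right
    rw [div_le_div_iff₀ (by positivity) hpos]
    have : 0 ≤ Ω ^ 2 - 4 * Ω - 4 := by nlinarith
    nlinarith
end

section
/- Let k ≥ 2 with ω_k = 1, write Ω = Ω_{k−1}, and assume 2 < Ω ≤ 2(1+√2). Set r = (Ω − 2)/Ω and define δ by δ₀ = (4(Ω+1) − Ω²)/Ω³ and δ_j = 0 otherwise, and β by β₀ = (Ω+1)/Ω², β_{k−1} = (Ω+1)²/Ω², and β_j = 0 otherwise. Then δ and β are nonnegative and satisfy the order-3 conditions with parameter r, and moreover for any real s > 0 and any nonnegative vectors δ', β' satisfying the order-3 conditions with parameter s one has s ≤ r. That is, for 2 < Ω_{k−1} ≤ 2(1+√2) the stated third-order formula has the optimal SSP coefficient (Ω_{k−1} − 2)/Ω_{k−1}. -/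
/-- **Optimality of the third-order formula for `2 < Ω_{k−1} ≤ 2(1+√2)`.**
With `ω_k = 1`, `Ω = Ω_{k−1}` and `2 < Ω ≤ 2(1+√2)`, the formula with
`δ₀ = (4(Ω+1) − Ω²)/Ω³`, `β₀ = (Ω+1)/Ω²`, `β_{k−1} = (Ω+1)²/Ω²` (all other entries
zero) is nonnegative, satisfies the order-3 conditions with parameter
`r = (Ω − 2)/Ω`, and no third-order `k`-step formula achieves a larger parameter. -/
theorem optimal_third_order_formula
    (k : ℕ) (hk : 2 ≤ k)
    (ω : ℕ → ℝ) (hω : ∀ i, 1 ≤ i → i ≤ k → 0 < ω i) (hωk : ω k = 1)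
    (Ω : ℝ) (hΩ : Ω = OmegaSum ω (k - 1))
    (hΩlo : 2 < Ω) (hΩhi : Ω ≤ 2 * (1 + Real.sqrt 2))
    (r : ℝ) (hr : r = (Ω - 2) / Ω)
    (δ β : ℕ → ℝ)
    (hδdef : δ = fun j => if j = 0 then (4 * (Ω + 1) - Ω ^ 2) / Ω ^ 3 else 0)
    (hβdef : β = fun j => if j = k - 1 then (Ω + 1) ^ 2 / Ω ^ 2
      else if j = 0 then (Ω + 1) / Ω ^ 2 else 0) :
    ((∀ j < k, 0 ≤ δ j) ∧ (∀ j < k, 0 ≤ β j) ∧ OrderCond k 3 ω r δ β) ∧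
    (∀ s : ℝ, 0 < s → ∀ δ' β' : ℕ → ℝ,
      (∀ j < k, 0 ≤ δ' j) → (∀ j < k, 0 ≤ β' j) → OrderCond k 3 ω s δ' β' → s ≤ r) := by
  obtain ⟨n, rfl⟩ : ∃ n, k = n + 2 := ⟨k - 2, by omega⟩
  have hk1 : n + 2 - 1 = n + 1 := by omega
  rw [hk1] at hΩ hβdef
  have h0 : OmegaSum ω 0 = 0 := by simp [OmegaSum]
  have hT : OmegaSum ω (n + 2) = Ω + 1 := by
    rw [hΩ, OmegaSum, Finset.sum_range_succ, hωk, OmegaSum]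
  have hΩpos : 0 < Ω := by linarith
  have hx0 : ∀ j < n + 2, j ≠ 0 → 0 < OmegaSum ω j := by
    intro j hj hj0
    unfold OmegaSum
    apply Finset.sum_pos
    · intro i hi
      have := Finset.mem_range.mp hi
      exact hω _ (by omega) (by omega)
    · exact ⟨0, Finset.mem_range.mpr (by omega)⟩
  have hxΩ : ∀ j < n + 2, OmegaSum ω j ≤ Ω := by
    intro j hj
    rw [hΩ]
    unfold OmegaSum
    apply Finset.sum_le_sum_of_subset_of_nonneg
    · intro i hi
      have := Finset.mem_range.mp hi
      exact Finset.mem_range.mpr (by omega)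
    · intro i hi _
      have := Finset.mem_range.mp hi
      exact (hω _ (by omega) (by omega)).le
  refine ⟨⟨?_, ?_, ?_⟩, ?_⟩
  · intro j _
    rw [hδdef]
    dsimp only
    split_ifs
    · apply div_nonneg _ (by positivity)
      have h2 : Real.sqrt 2 ^ 2 = 2 := Real.sq_sqrt (by norm_num)
      have h3 : 0 ≤ Real.sqrt 2 := Real.sqrt_nonneg 2
      nlinarith
    · exact le_rfl
  · intro j _
    rw [hβdef]
    dsimp only
    split_ifs <;> positivity
  · have key : ∀ g : ℕ → ℝ, (∀ j, j < n → g (j + 1) = 0) →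
        ∑ j ∈ Finset.range (n + 2), g j = g 0 + g (n + 1) := by
      intro g hg
      rw [Finset.sum_range_succ, Finset.sum_range_succ', Finset.sum_eq_zero, zero_add]
      intro j hj
      exact hg j (Finset.mem_range.mp hj)
    have hδ0 : δ 0 = (4 * (Ω + 1) - Ω ^ 2) / Ω ^ 3 := by simp [hδdef]
    have hδs : ∀ j, δ (j + 1) = 0 := by intro j; simp [hδdef]
    have hβ0 : β 0 = (Ω + 1) / Ω ^ 2 := by simp [hβdef]
    have hβn : β (n + 1) = (Ω + 1) ^ 2 / Ω ^ 2 := by simp [hβdef]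
    have hβs : ∀ j, j < n → β (j + 1) = 0 := by
      intro j hj
      simp [hβdef, hj.ne]
    refine ⟨?_, ?_⟩
    · rw [key _ (fun j hj => by rw [hδs, hβs j hj]; ring), hδ0, hδs, hβ0, hβn, hr]
      field_simp
      ring
    · intro m hm1 hm3
      rw [key _ (fun j hj => by rw [hδs, hβs j hj]; ring), hδ0, hδs, hβ0, hβn, hr, hT, h0, ← hΩ]
      interval_cases m
      all_goals
        norm_num
        try field_simp
        try ring
  · intro s hs δ' β' hδ' hβ' ⟨_, hm⟩
    by_contra hlt
    push Not at hlt
    have hsΩ : Ω - 2 < s * Ω := by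
      rw [hr, div_lt_iff₀ hΩpos] at hlt
      exact hlt
    have e2 := hm 2 (by norm_num) (by norm_num)
    have e3 := hm 3 (by norm_num) (by norm_num)
    rw [hT] at e2 e3
    norm_num at e2 e3
    have hB : ∀ x : ℝ, 0 ≤ x → x ≤ Ω → 0 < s * x * (Ω + 1 - x) + 2 * (Ω + 1) - 3 * x := by
      intro x hx hxO
      have h1 : s * x * 1 ≤ s * x * (Ω + 1 - x) :=
        mul_le_mul_of_nonneg_left (by linarith) (by positivity)
      have h2 : 0 < Ω * (s * x + 2 * (Ω + 1) - 3 * x) := by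
        have e : Ω * (s * x + 2 * (Ω + 1) - 3 * x)
          = (2 * Ω + 2) * (Ω - x) + x * (s * Ω - (Ω - 2)) := by ring
        rw [e]
        have a1 : 0 ≤ (2 * Ω + 2) * (Ω - x) := mul_nonneg (by linarith) (by linarith)
        rcases hx.eq_or_lt with h | h
        · rw [← h]
          nlinarith
        · have := mul_pos h (sub_pos.mpr hsΩ)
          linarith
      have h3 := pos_of_mul_pos_right h2 hΩpos.le
      linarith
    have hsum : ∑ j ∈ Finset.range (n + 2),
        (OmegaSum ω j ^ 2 * (Ω + 1 - OmegaSum ω j) * δ' j + OmegaSum ω j *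
          (s * OmegaSum ω j * (Ω + 1 - OmegaSum ω j) + 2 * (Ω + 1) - 3 * OmegaSum ω j) * β' j)
        = 0 := by
      have : (0 : ℝ) = (Ω + 1) * (Ω + 1) ^ 2 - (Ω + 1) ^ 3 := by ring
      rw [this, ← e3]
      conv_rhs => rw [← e2]
      rw [Finset.mul_sum, ← Finset.sum_sub_distrib]
      apply Finset.sum_congr rfl
      intro j _
      ring
    have hxn : ∀ j < n + 2, 0 ≤ OmegaSum ω j := by
      intro j hj
      by_cases h : j = 0
      · rw [h, h0]
      · exact (hx0 j hj h).le
    have hA : ∀ j < n + 2, 0 ≤ OmegaSum ω j ^ 2 * (Ω + 1 - OmegaSum ω j) * δ' j := by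
      intro j hj
      have h1 := hxΩ j hj
      exact mul_nonneg (mul_nonneg (sq_nonneg _) (by linarith)) (hδ' j hj)
    have hC : ∀ j < n + 2, 0 ≤ OmegaSum ω j *
          (s * OmegaSum ω j * (Ω + 1 - OmegaSum ω j) + 2 * (Ω + 1) - 3 * OmegaSum ω j) * β' j := by
      intro j hj
      exact mul_nonneg (mul_nonneg (hxn j hj) (hB _ (hxn j hj) (hxΩ j hj)).le) (hβ' j hj)
    rw [Finset.sum_eq_zero_iff_of_nonneg (fun j hj =>
      add_nonneg (hA j (Finset.mem_range.mp hj)) (hC j (Finset.mem_range.mp hj)))] at hsum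
    rw [Finset.sum_eq_zero] at e2
    · have : 0 < (Ω + 1) ^ 2 := by positivity
      linarith
    · intro j hj
      have hj' := Finset.mem_range.mp hj
      by_cases h : j = 0
      · rw [h, h0]; ring
      · have hp := hx0 j hj' h
        have hb := hB _ hp.le (hxΩ j hj')
        have h1 := hxΩ j hj'
        have ha := hA j hj'
        have hc := hC j hj'
        have hz := hsum j hj
        have z1 : OmegaSum ω j ^ 2 * (Ω + 1 - OmegaSum ω j) * δ' j = 0 := by linarith
        have z2 : OmegaSum ω j * (s * OmegaSum ω j * (Ω + 1 - OmegaSum ω j)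
          + 2 * (Ω + 1) - 3 * OmegaSum ω j) * β' j = 0 := by linarith
        have p1 : OmegaSum ω j ^ 2 * (Ω + 1 - OmegaSum ω j) ≠ 0 :=
          (mul_pos (pow_pos hp 2) (by linarith)).ne'
        have d0 := (mul_eq_zero.mp z1).resolve_left p1
        have b0 := (mul_eq_zero.mp z2).resolve_left (mul_pos hp hb).ne'
        rw [d0, b0]
        ring
end

section
/- Let K₁, K₂ ≥ 1 be real numbers, let p be a positive integer, and let k be a positive integer with k > p³K₁K₂/2. Suppose the step-size ratios satisfy 1/K₁ ≤ ω_j ≤ K₂ for all 1 ≤ j ≤ k. Then there exist a real r > 0 and nonnegative vectors δ, β satisfying the order-p conditions with parameter r; i.e., there exists a k-step explicit linear multistep formula of order p with positive SSP coefficient. -/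
open Polynomial in
/-- Schur's inequality near the right endpoint. -/
lemma schur_end (n : ℕ) (hn : 1 ≤ n) (Q : ℝ[X]) (hQ : Q.degree < n)
    (hb : ∀ x ∈ Set.Icc (-1 : ℝ) 1, |Q.eval x| * √(1 - x ^ 2) ≤ 1)
    (x : ℝ) (hx0 : Real.cos (Real.pi / (2 * n)) ≤ x) (hx1 : x ≤ 1) : |Q.eval x| ≤ n := by
  have hn0 : n ≠ 0 := by omega
  have hnR : (0 : ℝ) < n := by positivity
  set v : ℕ → ℝ := fun k => Real.cos ((2 * k + 1) * Real.pi / (2 * n)) with hv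
  set s := Finset.range n with hs
  have hinj : Set.InjOn v s :=
    (Finset.range n).nodup_map_iff_injOn.mp (Chebyshev.roots_T_real_nodup n)
  set N := Lagrange.nodal s v with hN
  set κ := (Chebyshev.T ℝ n).leadingCoeff with hκ
  have hκpos : 0 < κ := by
    rw [hκ, Chebyshev.leadingCoeff_T]; positivity
  have hT : Chebyshev.T ℝ n = C κ * N := by
    have h1 := Chebyshev.roots_T_real n
    have h2 : Multiset.card (Chebyshev.T ℝ n).roots = (Chebyshev.T ℝ n).natDegree := by
      rw [h1, Chebyshev.natDegree_T]
      change Finset.card _ = _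
      rw [Finset.card_image_of_injOn hinj]; simp [hs]
    have h3 := C_leadingCoeff_mul_prod_multiset_X_sub_C h2
    rw [← h3, h1, hN, Lagrange.nodal_eq]
    congr 1
    change ∏ a ∈ Finset.image v s, (X - C a) = _
    rw [Finset.prod_image hinj]
  have hTd : derivative (Chebyshev.T ℝ n) = C κ * derivative N := by
    rw [hT, derivative_C_mul]
  have hvlt : ∀ i ∈ s, v i ≤ x := by
    intro i hi
    refine le_trans ?_ hx0
    have hi' : (i : ℝ) + 1 ≤ n := by
      have := Finset.mem_range.mp hi
      exact_mod_cast this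
    apply Real.cos_le_cos_of_nonneg_of_le_pi
    · positivity
    · rw [div_le_iff₀ (by positivity)]
      nlinarith [Real.pi_pos]
    · gcongr
      nlinarith [Real.pi_pos, (Nat.cast_nonneg i : (0 : ℝ) ≤ i)]
  have hnode : ∀ i ∈ s, |Q.eval (v i)| ≤ κ / n * |(Lagrange.nodal (s.erase i) v).eval (v i)| := by
    intro i hi
    have hi' : (i : ℝ) + 1 ≤ n := by
      have := Finset.mem_range.mp hi
      exact_mod_cast this
    set θ : ℝ := (2 * i + 1) * Real.pi / (2 * n) with hθ
    have hvi : v i = Real.cos θ := rfl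
    have hθ0 : 0 < θ := by positivity
    have hθ1 : θ < Real.pi := by
      rw [hθ, div_lt_iff₀ (by positivity)]
      nlinarith [Real.pi_pos]
    have hsin : 0 < Real.sin θ := Real.sin_pos_of_pos_of_lt_pi hθ0 hθ1
    have e1 : (Lagrange.nodal (s.erase i) v).eval (v i) = (derivative N).eval (v i) :=
      (Lagrange.eval_nodal_derivative_eval_node_eq hi).symm
    have e2 : κ * (derivative N).eval (v i) = n * (Chebyshev.U ℝ (n - 1)).eval (v i) := by
      have := congrArg (eval (v i)) hTd
      rw [Chebyshev.T_derivative_eq_U] at this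
      simpa using this.symm
    have e3 := Chebyshev.U_real_cos θ ((n : ℤ) - 1)
    have e4 : |Real.sin (n * θ)| = 1 := by
      have hc : Real.cos (n * θ) = 0 := by
        rw [Real.cos_eq_zero_iff]
        refine ⟨i, ?_⟩
        rw [hθ]; push_cast; field_simp
      have := Real.sin_sq_add_cos_sq (n * θ)
      rw [hc] at this
      rw [← sq_eq_sq₀ (abs_nonneg _) zero_le_one, sq_abs]
      linarith
    have e5 : |(Chebyshev.U ℝ (n - 1)).eval (v i)| * Real.sin θ = 1 := by
      have h9 : |(Chebyshev.U ℝ (n - 1)).eval (Real.cos θ) * Real.sin θ| = 1 := by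
        rw [e3]
        convert e4 using 3
        push_cast; ring
      rwa [abs_mul, abs_of_pos hsin] at h9
    have e6 : |Q.eval (v i)| * Real.sin θ ≤ 1 := by
      have := hb (v i) ⟨Real.neg_one_le_cos _, Real.cos_le_one _⟩
      have h7 : √(1 - v i ^ 2) = Real.sin θ := by
        rw [hvi, ← Real.sin_sq, Real.sqrt_sq hsin.le]
      rwa [h7] at this
    have e8 : κ * |(derivative N).eval (v i)| = n * |(Chebyshev.U ℝ (n - 1)).eval (v i)| := by
      have h9 := congrArg abs e2
      rwa [abs_mul, abs_mul, abs_of_pos hκpos, abs_of_pos hnR] at h9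
    rw [e1, div_mul_eq_mul_div, e8, mul_div_cancel_left₀ _ hnR.ne']
    exact le_of_mul_le_mul_right (e6.trans e5.ge) hsin
  have hnz : ∀ i ∈ s, 0 < |(Lagrange.nodal (s.erase i) v).eval (v i)| := by
    intro i hi
    rw [abs_pos, Lagrange.eval_nodal, Finset.prod_ne_zero_iff]
    intro j hj
    obtain ⟨h1, h2⟩ := Finset.mem_erase.mp hj
    exact sub_ne_zero.mpr fun h => h1 (hinj hi h2 h).symm
  have hQx : Q.eval x = ∑ i ∈ s, Q.eval (v i) / (Lagrange.nodal (s.erase i) v).eval (v i) *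
      (Lagrange.nodal (s.erase i) v).eval x := by
    have hcard : Q.degree < s.card := by rw [hs, Finset.card_range]; exact hQ
    conv_lhs => rw [Lagrange.eq_interpolate hinj hcard, Lagrange.interpolate_eq_sum]
    simp [eval_finsetSum, Lagrange.eval_nodal, eval_prod]
  have hTx : |(derivative (Chebyshev.T ℝ n)).eval x| ≤ n ^ 2 := by
    have hxm : -1 ≤ x := (Real.neg_one_le_cos _).trans hx0
    have := Chebyshev.abs_iterate_derivative_T_real_le n 1 (abs_le.mpr ⟨hxm, hx1⟩)
    simp only [Function.iterate_one] at this
    refine this.trans ?_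
    rw [Chebyshev.derivative_T_eval_one]
    simp
  have hTe : (derivative (Chebyshev.T ℝ n)).eval x
      = κ * ∑ i ∈ s, (Lagrange.nodal (s.erase i) v).eval x := by
    rw [hTd, hN, Lagrange.derivative_nodal]
    simp [eval_finsetSum]
  calc |Q.eval x| ≤ ∑ i ∈ s, κ / n * (Lagrange.nodal (s.erase i) v).eval x := by
        rw [hQx]
        refine (Finset.abs_sum_le_sum_abs _ _).trans (Finset.sum_le_sum fun i hi => ?_)
        have hpos : 0 ≤ (Lagrange.nodal (s.erase i) v).eval x := by
          rw [Lagrange.eval_nodal]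
          exact Finset.prod_nonneg fun j hj => sub_nonneg.mpr (hvlt j (Finset.mem_of_mem_erase hj))
        rw [abs_mul, abs_of_nonneg hpos, abs_div]
        refine mul_le_mul_of_nonneg_right ?_ hpos
        rw [div_le_iff₀ (hnz i hi)]
        exact hnode i hi
    _ = (derivative (Chebyshev.T ℝ n)).eval x / n := by
        rw [hTe, ← Finset.mul_sum]; ring
    _ ≤ n := by
        rw [div_le_iff₀ hnR, ← sq]
        exact (le_abs_self _).trans hTx

open Polynomial in
/-- Schur's inequality. -/
lemma schur_ineq (n : ℕ) (hn : 1 ≤ n) (Q : ℝ[X]) (hQ : Q.degree < n)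
    (hb : ∀ x ∈ Set.Icc (-1 : ℝ) 1, |Q.eval x| * √(1 - x ^ 2) ≤ 1)
    (x : ℝ) (hx : x ∈ Set.Icc (-1 : ℝ) 1) : |Q.eval x| ≤ n := by
  have hnR : (1 : ℝ) ≤ n := by exact_mod_cast hn
  by_cases h1 : Real.cos (Real.pi / (2 * n)) ≤ x
  · exact schur_end n hn Q hQ hb x h1 hx.2
  by_cases h2 : Real.cos (Real.pi / (2 * n)) ≤ -x
  · have := schur_end n hn (Q.comp (-X)) ?_ ?_ (-x) h2 (by linarith [hx.1])
    · simpa using this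
    · have e : (Q.comp (-X)).natDegree = Q.natDegree := by
        rw [natDegree_comp]; simp
      by_cases hQ0 : Q = 0
      · simp [hQ0]
      have : Q.natDegree < n := (natDegree_lt_iff_degree_lt hQ0).mpr hQ
      refine degree_le_natDegree.trans_lt ?_
      rw [e]; exact_mod_cast this
    · intro y hy
      have := hb (-y) ⟨by linarith [hy.2], by linarith [hy.1]⟩
      simpa using this
  push Not at h1 h2
  set t : ℝ := Real.pi / (2 * n) with ht
  have hc0 : |x| ≤ Real.cos t := abs_le.mpr ⟨by linarith, by linarith⟩
  have ht0 : 0 ≤ t := by positivity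
  have ht1 : t ≤ Real.pi / 2 := by
    rw [ht]; gcongr; linarith
  have hs := Real.mul_le_sin ht0 ht1
  have hs' : 2 / Real.pi * t = 1 / n := by
    rw [ht]; field_simp
  have hsq : 1 / (n : ℝ) ≤ √(1 - x ^ 2) := by
    apply Real.le_sqrt_of_sq_le
    have h3 : x ^ 2 ≤ Real.cos t ^ 2 := by
      rw [← sq_abs x]; gcongr
    have h4 := Real.sin_sq_add_cos_sq t
    have h5 : (1 / (n : ℝ)) ^ 2 ≤ Real.sin t ^ 2 := by
      rw [← hs']; gcongr
    linarith
  have h6 := hb x hx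
  have h7 : |Q.eval x| * (1 / n) ≤ 1 := le_trans (by gcongr) h6
  rw [mul_one_div, div_le_one (by linarith)] at h7
  exact h7

open Polynomial in
/-- Rotation decomposition of a polynomial evaluated at `a x - b s`, `s² = 1 - x²`. -/
lemma rot_decomp (a b : ℝ) (P : ℝ[X]) : ∀ n : ℕ, P.natDegree ≤ n →
    ∃ A B : ℝ[X], A.natDegree ≤ n ∧ B.degree < n ∧
      (∀ x s : ℝ, s ^ 2 = 1 - x ^ 2 → P.eval (a * x - b * s) = A.eval x + s * B.eval x) ∧
      A.eval 1 = P.eval a ∧ B.eval 1 = -b * (derivative P).eval a := by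
  intro n
  induction n generalizing P with
  | zero =>
    intro h
    have hP := eq_C_of_natDegree_le_zero h
    refine ⟨P, 0, h, by simp, ?_, ?_, ?_⟩
    · intro x s _
      rw [hP]; simp
    · rw [hP]; simp
    · rw [hP]; simp
  | succ n ih =>
    intro h
    obtain ⟨A, B, hA, hB, hAB, hA1, hB1⟩ := ih P.divX (by rw [natDegree_divX_eq_natDegree_tsub_one]; omega)
    have hP : P = X * P.divX + C (P.coeff 0) := (X_mul_divX_add P).symm
    have hA' : A.degree ≤ n := natDegree_le_iff_degree_le.mp hA
    refine ⟨C a * X * A - C b * (1 - X ^ 2) * B + C (P.coeff 0), C a * X * B - C b * A, ?_, ?_, ?_, ?_, ?_⟩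
    · by_cases hB0 : B = 0
      · subst hB0
        simp only [mul_zero, sub_zero]
        compute_degree!
        omega
      have hBn : B.natDegree < n := (natDegree_lt_iff_degree_lt hB0).mpr hB
      refine natDegree_add_le_of_degree_le ((natDegree_sub_le _ _).trans (max_le ?_ ?_)) (by simp)
      · refine natDegree_mul_le.trans ?_
        have : (C a * X : ℝ[X]).natDegree ≤ 1 := by compute_degree
        omega
      · refine natDegree_mul_le.trans ?_
        have : (C b * (1 - X ^ 2) : ℝ[X]).natDegree ≤ 2 := by compute_degree
        omega
    · have h1 : (C a * X * B).degree < ((n + 1 : ℕ) : WithBot ℕ) := by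
        by_cases hB0 : B = 0
        · simp [hB0]
        have hBn : B.natDegree < n := (natDegree_lt_iff_degree_lt hB0).mpr hB
        refine degree_le_natDegree.trans_lt ?_
        have h2 : (C a * X : ℝ[X]).natDegree ≤ 1 := by compute_degree
        have h3 : (C a * X * B).natDegree < n + 1 := natDegree_mul_le.trans_lt (by omega)
        exact_mod_cast h3
      have h2 : (C b * A).degree < ((n + 1 : ℕ) : WithBot ℕ) := by
        refine degree_le_natDegree.trans_lt ?_
        have h3 : (C b * A).natDegree < n + 1 := (natDegree_C_mul_le _ _).trans_lt (by omega)
        exact_mod_cast h3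
      exact (degree_sub_le _ _).trans_lt (max_lt h1 h2)
    · intro x s hs
      have := hAB x s hs
      conv_lhs => rw [hP]
      simp only [eval_add, eval_mul, eval_X, eval_C, eval_sub, eval_one, eval_pow]
      rw [this, ← hs]; ring
    · conv_rhs => rw [hP]
      simp only [eval_add, eval_mul, eval_X, eval_C, eval_sub, eval_one, eval_pow, hA1]; ring
    · conv_rhs => rw [hP]
      simp only [derivative_add, derivative_mul, derivative_X, derivative_C, eval_add, eval_mul, eval_X,
        eval_C, eval_sub, eval_one, eval_zero, hA1, hB1]; ring

open Polynomial in
/-- Bernstein's inequality for algebraic polynomials. -/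
lemma bernstein_ineq (n : ℕ) (hn : 1 ≤ n) (P : ℝ[X]) (hP : P.natDegree ≤ n)
    (hb : ∀ x ∈ Set.Icc (-1 : ℝ) 1, |P.eval x| ≤ 1)
    (a : ℝ) (ha : a ∈ Set.Icc (-1 : ℝ) 1) : |(derivative P).eval a| * √(1 - a ^ 2) ≤ n := by
  set b := √(1 - a ^ 2) with hbdef
  have hb2 : b ^ 2 = 1 - a ^ 2 := Real.sq_sqrt (by nlinarith [ha.1, ha.2])
  obtain ⟨A, B, hA, hB, hAB, hA1, hB1⟩ := rot_decomp a b P n hP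
  have key := schur_ineq n hn B hB ?_ 1 (by simp)
  · rw [hB1, abs_mul, abs_neg, abs_of_nonneg (Real.sqrt_nonneg _)] at key
    linarith
  · intro x hx
    set s := √(1 - x ^ 2) with hsdef
    have hs0 : 0 ≤ s := Real.sqrt_nonneg _
    have hs2 : s ^ 2 = 1 - x ^ 2 := Real.sq_sqrt (by nlinarith [hx.1, hx.2])
    have h1 := hAB x s hs2
    have h2 := hAB x (-s) (by rw [neg_sq]; exact hs2)
    have m1 : |a * x - b * s| ≤ 1 := by
      rw [← sq_le_one_iff_abs_le_one]; nlinarith [sq_nonneg (a * s + b * x)]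
    have m2 : |a * x - b * -s| ≤ 1 := by
      rw [← sq_le_one_iff_abs_le_one]; nlinarith [sq_nonneg (a * s - b * x)]
    have b1 := abs_le.mp (hb _ (abs_le.mp m1))
    have b2 := abs_le.mp (hb _ (abs_le.mp m2))
    rw [h1] at b1; rw [h2] at b2
    rw [← abs_of_nonneg hs0, ← abs_mul, abs_le]
    constructor <;> nlinarith [b1.1, b1.2, b2.1, b2.2]

open Polynomial in
/-- Markov's inequality on `[-1,1]`. -/
lemma markov_ineq (n : ℕ) (hn : 1 ≤ n) (P : ℝ[X]) (hP : P.natDegree ≤ n)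
    (hb : ∀ x ∈ Set.Icc (-1 : ℝ) 1, |P.eval x| ≤ 1)
    (a : ℝ) (ha : a ∈ Set.Icc (-1 : ℝ) 1) : |(derivative P).eval a| ≤ (n : ℝ) ^ 2 := by
  have hnR : (0 : ℝ) < n := by positivity
  have := schur_ineq n hn (C (1 / (n : ℝ)) * derivative P) ?_ ?_ a ha
  · rw [eval_mul, eval_C, abs_mul, abs_of_pos (by positivity), one_div, inv_mul_le_iff₀ hnR] at this
    rwa [sq]
  · refine degree_le_natDegree.trans_lt ?_
    have h1 : (C (1 / (n : ℝ)) * derivative P).natDegree < n :=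
      (natDegree_C_mul_le _ _).trans_lt ((natDegree_derivative_le P).trans_lt (by omega))
    exact_mod_cast h1
  · intro x hx
    have := bernstein_ineq n hn P hP hb x hx
    rw [eval_mul, eval_C, abs_mul, abs_of_pos (by positivity), one_div, mul_assoc,
      inv_mul_le_iff₀ hnR, mul_one]
    exact this

open Polynomial in
/-- Markov's inequality on `[0,L]`, in terms of oscillation. -/
lemma markov_interval (n : ℕ) (hn : 1 ≤ n) (q : ℝ[X]) (hq : q.natDegree ≤ n)
    (L lo hi : ℝ) (hL : 0 < L)
    (hb : ∀ x ∈ Set.Icc (0 : ℝ) L, lo ≤ q.eval x ∧ q.eval x ≤ hi)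
    (a : ℝ) (ha : a ∈ Set.Icc (0 : ℝ) L) :
    |(derivative q).eval a| ≤ (n : ℝ) ^ 2 * (hi - lo) / L := by
  have key : ∀ D : ℝ, hi - lo < D → |(derivative q).eval a| ≤ (n : ℝ) ^ 2 * D / L := by
    intro D hD
    have h0 := hb 0 ⟨le_rfl, hL.le⟩
    have hDpos : 0 < D := by linarith
    set P : ℝ[X] := C (2 / D) * (q.comp (C (L / 2) * X + C (L / 2)) - C ((hi + lo) / 2)) with hP
    have hlin : (C (L / 2) * X + C (L / 2) : ℝ[X]).natDegree ≤ 1 := by compute_degree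
    have hdeg : P.natDegree ≤ n := by
      refine (natDegree_C_mul_le _ _).trans ?_
      rw [natDegree_sub_C]
      refine natDegree_comp_le.trans ?_
      nlinarith
    have := markov_ineq n hn P hdeg ?_ (2 * a / L - 1) ⟨?_, ?_⟩
    · have e : (derivative P).eval (2 * a / L - 1) = L / D * (derivative q).eval a := by
        rw [hP]
        simp only [derivative_mul, derivative_C, zero_mul, zero_add, derivative_sub, sub_zero,
          derivative_comp, derivative_add, derivative_X, mul_one, add_zero, eval_mul, eval_C,
          eval_comp, eval_add, eval_X]
        have : L / 2 * (2 * a / L - 1) + L / 2 = a := by field_simp; ring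
        rw [this]; field_simp
      rw [e, abs_mul, abs_of_pos (by positivity)] at this
      rw [le_div_iff₀ hL]
      rw [div_mul_eq_mul_div, div_le_iff₀ hDpos] at this
      linarith
    · intro x hx
      have hm : L / 2 * x + L / 2 ∈ Set.Icc (0 : ℝ) L := by
        constructor <;> nlinarith [hx.1, hx.2]
      have := hb _ hm
      simp only [hP, eval_mul, eval_C, eval_sub, eval_comp, eval_add, eval_X]
      rw [abs_mul, abs_of_pos (by positivity), div_mul_eq_mul_div, div_le_one hDpos]
      have : |q.eval (L / 2 * x + L / 2) - (hi + lo) / 2| ≤ D / 2 := by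
        rw [abs_le]; constructor <;> linarith [this.1, this.2]
      linarith
    · have : 0 ≤ 2 * a / L := by have := ha.1; positivity
      linarith
    · have : 2 * a / L ≤ 2 := by rw [div_le_iff₀ hL]; linarith [ha.2]
      linarith
  have hlim : Filter.Tendsto (fun D : ℝ => (n : ℝ) ^ 2 * D / L) (nhdsWithin (hi - lo) (Set.Ioi (hi - lo)))
      (nhds ((n : ℝ) ^ 2 * (hi - lo) / L)) := by
    apply tendsto_nhdsWithin_of_tendsto_nhds
    have : Continuous (fun D : ℝ => (n : ℝ) ^ 2 * D / L) := by fun_prop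
    exact this.tendsto _
  refine ge_of_tendsto hlim ?_
  filter_upwards [self_mem_nhdsWithin] with D hD
  exact key D hD

/-- Farkas' lemma for finitely many vectors in an open half space. -/
lemma farkas_pos {N : ℕ} {ι : Type} [Fintype ι] (a : ι → Fin N → ℝ) (v : Fin N → ℝ)
    (l : (Fin N → ℝ) →ₗ[ℝ] ℝ) (ha : ∀ i, 0 < l (a i)) (hv : 0 < l v)
    (h : ∀ f : (Fin N → ℝ) →ₗ[ℝ] ℝ, (∀ i, 0 ≤ f (a i)) → 0 ≤ f v) :
    ∃ c : ι → ℝ, (∀ i, 0 ≤ c i) ∧ ∑ i, c i • a i = v := by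
  classical
  set Φ : (ι → ℝ) →ₗ[ℝ] (Fin N → ℝ) :=
    ∑ i, (LinearMap.proj (R := ℝ) (φ := fun _ : ι => ℝ) i).smulRight ((l (a i))⁻¹ • a i) with hΦ
  have hΦa : ∀ c, Φ c = ∑ i, c i • (l (a i))⁻¹ • a i := by
    intro c; simp [hΦ]
  have hcomp : IsCompact (Φ '' stdSimplex ℝ ι) :=
    (isCompact_stdSimplex ℝ ι).image Φ.continuous_of_finiteDimensional
  have hconv : Convex ℝ (Φ '' stdSimplex ℝ ι) := (convex_stdSimplex ℝ ι).linear_image Φ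
  by_cases hm : (l v)⁻¹ • v ∈ Φ '' stdSimplex ℝ ι
  · obtain ⟨c, hc, hcv⟩ := hm
    refine ⟨fun i => l v * (c i * (l (a i))⁻¹), fun i => ?_, ?_⟩
    · have := hc.1 i
      have := ha i
      positivity
    · rw [hΦa] at hcv
      have h2 := congrArg (fun w => l v • w) hcv
      simp only [smul_smul, mul_inv_cancel₀ hv.ne', one_smul, Finset.smul_sum] at h2
      exact h2
  · exfalso
    obtain ⟨f, u, hfv, hfb⟩ := geometric_hahn_banach_point_closed hconv hcomp.isClosed hm
    have := h ((f : (Fin N → ℝ) →ₗ[ℝ] ℝ) - u • l) ?_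
    · simp only [LinearMap.sub_apply, LinearMap.smul_apply, ContinuousLinearMap.coe_coe,
        smul_eq_mul, map_smul] at this hfv
      rw [inv_mul_lt_iff₀ hv] at hfv
      linarith
    · intro i
      have h1 := hfb (Φ (Pi.single i 1)) ⟨_, single_mem_stdSimplex ℝ i, rfl⟩
      have h2 : Φ (Pi.single i 1) = (l (a i))⁻¹ • a i := by
        rw [hΦa, Finset.sum_eq_single i]
        · simp
        · intro j _ hj; simp [Pi.single_eq_of_ne hj]
        · simp
      rw [h2, map_smul, smul_eq_mul, lt_inv_mul_iff₀ (ha i)] at h1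
      simp only [LinearMap.sub_apply, LinearMap.smul_apply, ContinuousLinearMap.coe_coe,
        smul_eq_mul]
      linarith

open Polynomial in
/-- Counting the grid intervals on which a polynomial, nonnegative on the grid, gets negative. -/
lemma count_bad (p k : ℕ) (hp : 1 ≤ p) (hk : 1 ≤ k) (Om : ℕ → ℝ)
    (hmono : ∀ i j, i ≤ j → j ≤ k → Om i ≤ Om j) (f : ℝ[X]) (hf : f.natDegree ≤ p - 1)
    (hpos : ∀ j < k, 0 ≤ f.eval (Om j)) (bad : Finset ℕ) (hbad : bad ⊆ Finset.range k)
    (x : ℕ → ℝ) (hx : ∀ j ∈ bad, x j ∈ Set.Icc (Om j) (Om (j + 1)) ∧ f.eval (x j) < 0) :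
    2 * bad.card ≤ p := by
  classical
  obtain ⟨η, hη, hη0⟩ : ∃ η : ℝ, (∀ j ∈ bad, f.eval (x j) + η < 0) ∧ 0 < η := by
    have h1 : ∀ᶠ η in nhdsWithin (0 : ℝ) (Set.Ioi 0), ∀ j ∈ bad, f.eval (x j) + η < 0 := by
      rw [Filter.eventually_all_finset]
      intro j hj
      apply eventually_nhdsWithin_of_eventually_nhds
      have : Filter.Tendsto (fun η : ℝ => f.eval (x j) + η) (nhds 0) (nhds (f.eval (x j) + 0)) := by
        have : Continuous (fun η : ℝ => f.eval (x j) + η) := by fun_prop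
        exact this.tendsto _
      rw [add_zero] at this
      exact this.eventually_lt_const (hx j hj).2
    obtain ⟨η, h⟩ := (h1.and self_mem_nhdsWithin).exists
    exact ⟨η, h.1, h.2⟩
  set g : ℝ[X] := f + C η with hg
  have hge : ∀ t, g.eval t = f.eval t + η := by intro t; simp [hg]
  have hgdeg : g.natDegree ≤ p - 1 := by rw [hg, natDegree_add_C]; exact hf
  have hgpos : ∀ j < k, 0 < g.eval (Om j) := by
    intro j hj; rw [hge]; linarith [hpos j hj]
  have hg0 : g ≠ 0 := by
    intro h; have := hgpos 0 (by omega); rw [h] at this; simp at this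
  have hcont : ∀ s : Set ℝ, ContinuousOn (fun t => g.eval t) s := fun s => g.continuous.continuousOn
  have hy : ∀ j ∈ bad, ∃ y, Om j < y ∧ y < x j ∧ g.eval y = 0 := by
    intro j hj
    have hjk := Finset.mem_range.mp (hbad hj)
    have h1 := hgpos j hjk
    have h2 : g.eval (x j) < 0 := by rw [hge]; exact hη j hj
    obtain ⟨y, hy, hy0⟩ := intermediate_value_Icc' (hx j hj).1.1 (hcont _)
      (show (0 : ℝ) ∈ Set.Icc (g.eval (x j)) (g.eval (Om j)) from ⟨h2.le, h1.le⟩)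
    simp only at hy0
    refine ⟨y, lt_of_le_of_ne hy.1 ?_, lt_of_le_of_ne hy.2 ?_, hy0⟩
    · rintro rfl; linarith
    · rintro rfl; linarith
  have hz : ∀ j ∈ bad.erase (k - 1), ∃ z, x j < z ∧ z < Om (j + 1) ∧ g.eval z = 0 := by
    intro j hj'
    obtain ⟨hne, hj⟩ := Finset.mem_erase.mp hj'
    have hjk := Finset.mem_range.mp (hbad hj)
    have h1 := hgpos (j + 1) (by omega)
    have h2 : g.eval (x j) < 0 := by rw [hge]; exact hη j hj
    obtain ⟨y, hy, hy0⟩ := intermediate_value_Icc (hx j hj).1.2 (hcont _)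
      (show (0 : ℝ) ∈ Set.Icc (g.eval (x j)) (g.eval (Om (j + 1))) from ⟨h2.le, h1.le⟩)
    simp only at hy0
    refine ⟨y, lt_of_le_of_ne hy.1 ?_, lt_of_le_of_ne hy.2 ?_, hy0⟩
    · rintro rfl; linarith
    · rintro rfl; linarith
  choose! y hy1 hy2 hy3 using hy
  choose! z hz1 hz2 hz3 using hz
  have hsep : ∀ i ∈ bad, ∀ j ∈ bad, ∀ s t : ℝ, Om i < s → s ≤ Om (i + 1) → Om j < t → t ≤ Om (j + 1) →
      s = t → i = j := by
    intro i hi j hj s t h1 h2 h3 h4 h5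
    have hik := Finset.mem_range.mp (hbad hi)
    have hjk := Finset.mem_range.mp (hbad hj)
    rcases lt_trichotomy i j with h | h | h
    · have := hmono (i + 1) j (by omega) (by omega)
      linarith
    · exact h
    · have := hmono (j + 1) i (by omega) (by omega)
      linarith
  have hyinj : Set.InjOn y bad := by
    intro i hi j hj hij
    exact hsep i hi j hj (y i) (y j) (hy1 i hi) ((hy2 i hi).le.trans (hx i hi).1.2)
      (hy1 j hj) ((hy2 j hj).le.trans (hx j hj).1.2) hij
  have hzinj : Set.InjOn z (bad.erase (k - 1) : Finset ℕ) := by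
    intro i hi j hj hij
    have hi' := Finset.mem_of_mem_erase hi
    have hj' := Finset.mem_of_mem_erase hj
    exact hsep i hi' j hj' (z i) (z j) ((hx i hi').1.1.trans_lt (hz1 i hi)) (hz2 i hi).le
      ((hx j hj').1.1.trans_lt (hz1 j hj)) (hz2 j hj).le hij
  have hdisj : Disjoint (bad.image y) ((bad.erase (k - 1)).image z) := by
    rw [Finset.disjoint_left]
    intro t ht1 ht2
    obtain ⟨i, hi, rfl⟩ := Finset.mem_image.mp ht1
    obtain ⟨j, hj, hij⟩ := Finset.mem_image.mp ht2
    have hj' := Finset.mem_of_mem_erase hj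
    have := hsep i hi j hj' (y i) (z j) (hy1 i hi) ((hy2 i hi).le.trans (hx i hi).1.2)
      ((hx j hj').1.1.trans_lt (hz1 j hj)) (hz2 j hj).le hij.symm
    subst this
    linarith [hy2 i hi, hz1 i hj]
  have hsub : (bad.image y ∪ (bad.erase (k - 1)).image z) ⊆ g.roots.toFinset := by
    intro t ht
    rw [Multiset.mem_toFinset, mem_roots hg0, IsRoot]
    rcases Finset.mem_union.mp ht with h | h
    · obtain ⟨i, hi, rfl⟩ := Finset.mem_image.mp h
      exact hy3 i hi
    · obtain ⟨i, hi, rfl⟩ := Finset.mem_image.mp h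
      exact hz3 i hi
  have hcard := Finset.card_le_card hsub
  rw [Finset.card_union_of_disjoint hdisj, Finset.card_image_of_injOn hyinj,
    Finset.card_image_of_injOn hzinj] at hcard
  have h1 := Finset.pred_card_le_card_erase (s := bad) (a := k - 1)
  have h2 := (Multiset.toFinset_card_le g.roots).trans (card_roots' g)
  omega

open Polynomial in
/-- The main estimate. -/
lemma core_estimate (p k : ℕ) (hp : 1 ≤ p) (hk : 1 ≤ k) (Om : ℕ → ℝ) (K th : ℝ)
    (hmono : ∀ i j, i ≤ j → j ≤ k → Om i ≤ Om j) (h0 : Om 0 = 0) (hL : 0 < Om k)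
    (hgap : ∀ j < k, Om (j + 1) - Om j ≤ K)
    (hth : (p : ℝ) ^ 3 * K / 2 ≤ th * Om k) (hth1 : th < 1)
    (q : ℝ[X]) (hq : q.natDegree ≤ p) (hpos : ∀ j < k, 0 ≤ (derivative q).eval (Om j)) :
    ∃ D : ℝ, 0 ≤ D ∧ (∀ x ∈ Set.Icc 0 (Om k), q.eval x ≤ q.eval 0 + D) ∧
      q.eval 0 + (1 - th) * D ≤ q.eval (Om k) := by
  classical
  set L := Om k with hLdef
  have hne : (Set.Icc 0 L).Nonempty := ⟨0, le_rfl, hL.le⟩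
  obtain ⟨x, hx, hxmax⟩ := isCompact_Icc.exists_isMaxOn hne (q.continuous.continuousOn (s := Set.Icc 0 L))
  obtain ⟨y, hy, hymin⟩ := isCompact_Icc.exists_isMinOn hne (q.continuous.continuousOn (s := Set.Icc 0 L))
  have hmax : ∀ t ∈ Set.Icc 0 L, q.eval t ≤ q.eval x := fun t ht => hxmax ht
  have hmin : ∀ t ∈ Set.Icc 0 L, q.eval y ≤ q.eval t := fun t ht => hymin ht
  set D := q.eval x - q.eval y with hD
  have hD0 : 0 ≤ D := by linarith [hmax y hy]
  have h0m : (0 : ℝ) ∈ Set.Icc 0 L := ⟨le_rfl, hL.le⟩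
  have hLm : L ∈ Set.Icc 0 L := ⟨hL.le, le_rfl⟩
  refine ⟨D, hD0, fun t ht => by linarith [hmax t ht, hmin 0 h0m], ?_⟩
  set M := (p : ℝ) ^ 2 * D / L with hM
  have hM0 : 0 ≤ M := by positivity
  have hmark : ∀ t ∈ Set.Icc 0 L, |(derivative q).eval t| ≤ M :=
    markov_interval p hp q hq L (q.eval y) (q.eval x) hL (fun t ht => ⟨hmin t ht, hmax t ht⟩)
  set φ : ℝ → ℝ := fun t => max (-(derivative q).eval t) 0 with hφ
  have hφc : Continuous φ := by
    have := (derivative q).continuous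
    exact (this.neg).max continuous_const
  have hφ0 : ∀ t, 0 ≤ φ t := fun t => le_max_right _ _
  have hφi : ∀ a b, IntervalIntegrable φ MeasureTheory.volume a b :=
    fun a b => hφc.intervalIntegrable a b
  set N : ℝ → ℝ := fun t => ∫ s in (0 : ℝ)..t, φ s with hN
  have hNsub : ∀ a b, N b - N a = ∫ s in a..b, φ s := by
    intro a b
    exact intervalIntegral.integral_interval_sub_left (hφi _ _) (hφi _ _)
  have hNmono : ∀ a b, a ≤ b → N a ≤ N b := by
    intro a b hab
    have := intervalIntegral.integral_nonneg hab (fun u _ => hφ0 u) (μ := MeasureTheory.volume)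
    linarith [hNsub a b]
  have hN0 : N 0 = 0 := by simp [hN]
  have hG : ∀ a b, a ≤ b → q.eval a + N a ≤ q.eval b + N b := by
    intro a b hab
    have hdi : IntervalIntegrable (fun t => (derivative q).eval t) MeasureTheory.volume a b :=
      (derivative q).continuous.intervalIntegrable a b
    have e1 : ∫ t in a..b, (derivative q).eval t = q.eval b - q.eval a :=
      intervalIntegral.integral_eq_sub_of_hasDerivAt (fun t _ => q.hasDerivAt t) hdi
    have e2 := intervalIntegral.integral_add hdi (hφi a b)
    have e3 : 0 ≤ ∫ t in a..b, ((derivative q).eval t + φ t) := by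
      apply intervalIntegral.integral_nonneg hab
      intro u _
      have : -(derivative q).eval u ≤ φ u := le_max_left _ _
      linarith
    linarith [hNsub a b]
  -- bad intervals
  set bad := (Finset.range k).filter
    (fun j => ∃ t ∈ Set.Icc (Om j) (Om (j + 1)), (derivative q).eval t < 0) with hbad
  have hcount : 2 * bad.card ≤ p := by
    have hex : ∀ j ∈ bad, ∃ t, t ∈ Set.Icc (Om j) (Om (j + 1)) ∧ (derivative q).eval t < 0 := by
      intro j hj
      obtain ⟨t, h1, h2⟩ := (Finset.mem_filter.mp hj).2
      exact ⟨t, h1, h2⟩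
    choose! t ht using hex
    exact count_bad p k hp hk Om hmono (derivative q)
      ((natDegree_derivative_le q).trans (by omega)) hpos bad (Finset.filter_subset _ _) t ht
  have hK0 : 0 ≤ K := le_trans (by linarith [hmono 0 1 (by omega) hk]) (hgap 0 (by omega))
  have hNL : N L ≤ th * D := by
    have e1 : N L = ∑ j ∈ Finset.range k, ∫ s in Om j..Om (j + 1), φ s := by
      rw [intervalIntegral.sum_integral_adjacent_intervals (fun j _ => hφi _ _), h0]
    have e2 : ∀ j ∈ Finset.range k,
        ∫ s in Om j..Om (j + 1), φ s ≤ if j ∈ bad then M * K else 0 := by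
      intro j hj
      have hjk := Finset.mem_range.mp hj
      have hle := hmono j (j + 1) (by omega) (by omega)
      have hlo := hmono 0 j (by omega) (by omega)
      have hhi := hmono (j + 1) k (by omega) le_rfl
      rw [h0] at hlo
      split_ifs with hb
      · have : ∫ s in Om j..Om (j + 1), φ s ≤ ∫ s in Om j..Om (j + 1), M := by
          apply intervalIntegral.integral_mono_on hle (hφi _ _) (by simp)
          intro s hs
          refine max_le ?_ hM0
          exact (neg_le_abs _).trans (hmark s ⟨hlo.trans hs.1, hs.2.trans hhi⟩)
        rw [intervalIntegral.integral_const, smul_eq_mul] at this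
        nlinarith [hgap j hjk]
      · apply le_of_eq
        have hz : ∀ s ∈ Set.uIcc (Om j) (Om (j + 1)), φ s = 0 := by
          intro s hs
          rw [Set.uIcc_of_le hle] at hs
          apply max_eq_right
          by_contra hcon
          push Not at hcon
          exact hb (Finset.mem_filter.mpr ⟨hj, s, hs, by linarith⟩)
        rw [intervalIntegral.integral_congr (g := fun _ => (0 : ℝ)) hz]
        simp
    have e3 := Finset.sum_le_sum e2
    rw [← e1, Finset.sum_ite_mem, Finset.inter_eq_right.mpr (Finset.filter_subset _ _),
      Finset.sum_const, nsmul_eq_mul] at e3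
    have e4 : (bad.card : ℝ) ≤ p / 2 := by
      have : (2 * bad.card : ℝ) ≤ p := by exact_mod_cast hcount
      linarith
    calc N L ≤ bad.card * (M * K) := e3
      _ ≤ p / 2 * (M * K) := by gcongr
      _ = ((p : ℝ) ^ 3 * K / 2) * D / L := by rw [hM]; field_simp
      _ ≤ (th * L) * D / L := by gcongr
      _ = th * D := by field_simp
  rcases le_total x y with hxy | hxy
  · have h1 := hG x y hxy
    have h2 := hNmono 0 x hx.1
    have h3 := hNmono y L hy.2
    have h4 : D = 0 := by nlinarith
    rw [h4]
    have := hmax 0 h0m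
    have := hmin L hLm
    linarith
  · have h1 := hG x L hx.2
    have h2 := hG 0 y hy.1
    have h3 := hNmono y x hxy
    linarith

open Polynomial in
/-- The polynomial attached to a linear functional. -/
lemma functional_poly (p : ℕ) (f : (Fin (p + 1) → ℝ) →ₗ[ℝ] ℝ) :
    ∃ q : ℝ[X], q.natDegree ≤ p ∧
      (∀ x : ℝ, f (fun m => x ^ (m : ℕ)) = q.eval x) ∧
      (∀ x : ℝ, f (fun m => ((m : ℕ) : ℝ) * x ^ ((m : ℕ) - 1)) = (derivative q).eval x) := by
  refine ⟨∑ m : Fin (p + 1), C (f (fun j => if m = j then 1 else 0)) * X ^ (m : ℕ), ?_, ?_, ?_⟩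
  · apply natDegree_sum_le_of_forall_le
    intro i _
    exact (natDegree_C_mul_X_pow_le _ _).trans (by omega)
  · intro x
    rw [LinearMap.pi_apply_eq_sum_univ f, eval_finsetSum]
    refine Finset.sum_congr rfl fun i _ => ?_
    rw [eval_mul, eval_C, eval_pow, eval_X, smul_eq_mul, mul_comm]
  · intro x
    rw [LinearMap.pi_apply_eq_sum_univ f, derivative_sum, eval_finsetSum]
    refine Finset.sum_congr rfl fun i _ => ?_
    rw [derivative_C_mul, derivative_X_pow, eval_mul, eval_mul, eval_C, eval_C, eval_pow, eval_X,
      smul_eq_mul, mul_comm]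

/-- **Existence of formulae of arbitrarily high order.**  If the step-size ratios are
bounded as `1/K₁ ≤ ω_j ≤ K₂` and `k > p³K₁K₂/2`, then there exists a `k`-step formula
of order `p` with positive SSP coefficient. -/
theorem high_order_formula_exists
    (K₁ K₂ : ℝ) (hK₁ : 1 ≤ K₁) (hK₂ : 1 ≤ K₂)
    (p k : ℕ) (hp : 1 ≤ p) (hkpos : 1 ≤ k)
    (hk : (p : ℝ) ^ 3 * K₁ * K₂ / 2 < (k : ℝ))
    (ω : ℕ → ℝ) (hω : ∀ i, 1 ≤ i → i ≤ k → 1 / K₁ ≤ ω i ∧ ω i ≤ K₂) :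
    ∃ r : ℝ, 0 < r ∧ ∃ δ β : ℕ → ℝ,
      (∀ j < k, 0 ≤ δ j) ∧ (∀ j < k, 0 ≤ β j) ∧ OrderCond k p ω r δ β := by
  have hK1 : 0 < K₁ := by linarith
  have hK2 : 0 < K₂ := by linarith
  have hkR : (0 : ℝ) < k := by exact_mod_cast hkpos
  have hpR : (0 : ℝ) < p := by exact_mod_cast hp
  set Om : ℕ → ℝ := OmegaSum ω with hOm
  have h0 : Om 0 = 0 := by simp [hOm, OmegaSum]
  have hsucc : ∀ j, Om (j + 1) = Om j + ω (j + 1) := by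
    intro j; simp [hOm, OmegaSum, Finset.sum_range_succ]
  have hlow : ∀ j, j < k → 1 / K₁ ≤ ω (j + 1) := fun j hj => (hω (j + 1) (by omega) (by omega)).1
  have hinv : 0 < 1 / K₁ := by positivity
  have hgap : ∀ j < k, Om (j + 1) - Om j ≤ K₂ := by
    intro j hj
    have := (hω (j + 1) (by omega) (by omega)).2
    rw [hsucc]; linarith
  have hmono : ∀ i j, i ≤ j → j ≤ k → Om i ≤ Om j := by
    intro i j hij
    induction j, hij using Nat.le_induction with
    | base => intro _; exact le_rfl
    | succ n hn ih =>
      intro hnk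
      have h1 := ih (by omega)
      have h2 := hlow n (by omega)
      rw [hsucc]; linarith
  have hgrow : ∀ j, j ≤ k → (j : ℝ) * (1 / K₁) ≤ Om j := by
    intro j
    induction j with
    | zero => intro _; simp [h0]
    | succ n ih =>
      intro hn
      have h1 := ih (by omega)
      have h2 := hlow n (by omega)
      rw [hsucc]; push_cast; linarith
  have hLk := hgrow k le_rfl
  have hL : 0 < Om k := lt_of_lt_of_le (by positivity) hLk
  obtain ⟨th, hthdef⟩ : ∃ th : ℝ, th = (p : ℝ) ^ 3 * K₁ * K₂ / 2 / k := ⟨_, rfl⟩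
  have hth0 : 0 < th := by rw [hthdef]; positivity
  have hth1 : th < 1 := by rw [hthdef, div_lt_one hkR]; exact hk
  have hth : (p : ℝ) ^ 3 * K₂ / 2 ≤ th * Om k := by
    have h1 : (p : ℝ) ^ 3 * K₂ / 2 = th * (k * (1 / K₁)) := by
      rw [hthdef]; field_simp
    rw [h1]
    exact mul_le_mul_of_nonneg_left hLk hth0.le
  obtain ⟨ε, hεdef⟩ : ∃ ε : ℝ, ε = (1 - th) / k := ⟨_, rfl⟩
  have hε : 0 < ε := by rw [hεdef]; exact div_pos (by linarith) hkR
  have hεk : ε * k = 1 - th := by rw [hεdef]; field_simp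
  have hnn : ∀ j, j ≤ k → 0 ≤ Om j := by
    intro j hj; rw [← h0]; exact hmono 0 j (by omega) hj
  let A : Fin k ⊕ Fin k → Fin (p + 1) → ℝ := Sum.elim
    (fun j m => Om j ^ (m : ℕ)) (fun j m => ((m : ℕ) : ℝ) * Om j ^ ((m : ℕ) - 1))
  let P : ℝ → Fin (p + 1) → ℝ := fun x m => x ^ (m : ℕ)
  let v : Fin (p + 1) → ℝ := P (Om k) - ε • ∑ j : Fin k, P (Om j)
  let i0 : Fin (p + 1) := ⟨0, by omega⟩
  let i1 : Fin (p + 1) := ⟨1, by omega⟩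
  let l : (Fin (p + 1) → ℝ) →ₗ[ℝ] ℝ := 
    (LinearMap.proj i0 : (Fin (p + 1) → ℝ) →ₗ[ℝ] ℝ) + (LinearMap.proj i1 : (Fin (p + 1) → ℝ) →ₗ[ℝ] ℝ)
  have hlP : ∀ x, l (P x) = 1 + x := by intro x; simp [l, P, i0, i1]
  have hsumbound : ∀ (g : ℝ → ℝ) (B : ℝ), (∀ j : Fin k, g (Om j) ≤ B) →
      ε * ∑ j : Fin k, g (Om j) ≤ (1 - th) * B := by
    intro g B hB
    have h1 : ∑ j : Fin k, g (Om j) ≤ k * B := by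
      have := Finset.sum_le_sum (s := Finset.univ) (fun (j : Fin k) _ => hB j)
      simpa using this
    calc ε * ∑ j : Fin k, g (Om j) ≤ ε * (k * B) := mul_le_mul_of_nonneg_left h1 hε.le
      _ = (1 - th) * B := by rw [← mul_assoc, hεk]
  obtain ⟨c, hc0, hc⟩ := farkas_pos A v l (by
    rintro (j | j)
    · change 0 < l (P (Om j))
      rw [hlP]
      have := hnn j j.2.le
      linarith
    · simp [l, A, i0, i1]) (by
    have h1 : l v = (1 + Om k) - ε * ∑ j : Fin k, (1 + Om j) := by
      simp only [v, map_sub, map_smul, map_sum, hlP, smul_eq_mul]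
    have h2 := hsumbound (fun x => 1 + x) (1 + Om k) (fun j => by
      have := hmono j k j.2.le le_rfl
      simpa using this)
    rw [h1]
    nlinarith) (by
    intro f hf
    obtain ⟨q, hqd, hq, hq'⟩ := functional_poly p f
    have hpos : ∀ j < k, 0 ≤ q.derivative.eval (Om j) := by
      intro j hj
      rw [← hq']
      exact hf (Sum.inr ⟨j, hj⟩)
    obtain ⟨D, hD, hDu, hDl⟩ :=
      core_estimate p k hp hkpos Om K₂ th hmono h0 hL hgap hth hth1 q hqd hpos
    have hq0 : 0 ≤ q.eval 0 := by
      rw [← h0, ← hq]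
      exact hf (Sum.inl ⟨0, by omega⟩)
    have h1 : f v = q.eval (Om k) - ε * ∑ j : Fin k, q.eval (Om j) := by
      have hP : ∀ x, f (P x) = q.eval x := hq
      simp only [v, map_sub, map_smul, map_sum, hP, smul_eq_mul]
    have h2 := hsumbound (fun x => q.eval x) (q.eval 0 + D) (fun j =>
      hDu _ ⟨hnn j j.2.le, hmono j k j.2.le le_rfl⟩)
    rw [h1]
    nlinarith [mul_nonneg hth0.le hq0])
  -- the components of the Farkas identity
  have hcomp : ∀ m : ℕ, m ≤ p →
      ∑ j : Fin k, (Om j ^ m * (ε + c (Sum.inl j)) + (m : ℝ) * Om j ^ (m - 1) * c (Sum.inr j))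
        = Om k ^ m := by
    intro m hm
    have h1 := congrFun hc ⟨m, by omega⟩
    simp only [Fintype.sum_sum_type, A, v, P, Sum.elim_inl, Sum.elim_inr,
      Finset.sum_apply, Pi.smul_apply, Pi.sub_apply, smul_eq_mul] at h1
    rw [Finset.mul_sum] at h1
    have h2 : ∑ j : Fin k, (Om j ^ m * (ε + c (Sum.inl j))
          + (m : ℝ) * Om j ^ (m - 1) * c (Sum.inr j))
        = ∑ j : Fin k, ε * Om j ^ m + (∑ j : Fin k, c (Sum.inl j) * Om j ^ m
          + ∑ j : Fin k, c (Sum.inr j) * ((m : ℝ) * Om j ^ (m - 1))) := by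
      rw [← Finset.sum_add_distrib, ← Finset.sum_add_distrib]
      refine Finset.sum_congr rfl fun j _ => ?_
      ring
    rw [h2, h1]; ring
  obtain ⟨S, hS⟩ : ∃ S : ℝ, S = ∑ j : Fin k, c (Sum.inr j) := ⟨_, rfl⟩
  have hS0 : 0 ≤ S := by rw [hS]; exact Finset.sum_nonneg fun j _ => hc0 _
  have hSj : ∀ j : Fin k, c (Sum.inr j) ≤ S := by
    intro j; rw [hS]
    exact Finset.single_le_sum (f := fun j : Fin k => c (Sum.inr j))
      (fun j _ => hc0 _) (Finset.mem_univ j)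
  obtain ⟨r, hr⟩ : ∃ r : ℝ, r = ε / (1 + S) := ⟨_, rfl⟩
  have hr0 : 0 < r := by rw [hr]; positivity
  have hrS : r * (1 + S) = ε := by rw [hr]; field_simp
  let β : ℕ → ℝ := fun j => if h : j < k then c (Sum.inr ⟨j, h⟩) else 0
  let δ : ℕ → ℝ := fun j => if h : j < k then ε + c (Sum.inl ⟨j, h⟩) - r * c (Sum.inr ⟨j, h⟩) else 0
  have hβ : ∀ j : Fin k, β j = c (Sum.inr j) := by intro j; simp [β]
  have hδ : ∀ j : Fin k, δ j + r * β j = ε + c (Sum.inl j) := by intro j; simp [β, δ]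
  refine ⟨r, hr0, δ, β, ?_, ?_, ?_, ?_⟩
  · intro j hj
    simp only [δ, hj, dif_pos]
    have h1 := hSj ⟨j, hj⟩
    have h2 := hc0 (Sum.inl ⟨j, hj⟩)
    nlinarith
  · intro j hj
    simp only [β, hj, dif_pos]
    exact hc0 _
  · rw [Finset.sum_range]
    simp only [hδ]
    simpa using hcomp 0 (by omega)
  · intro m _ hm
    rw [Finset.sum_range]
    simp only [hδ]
    simp only [hβ]
    exact hcomp m hm
end

section
/- Fix an integer k ≥ 3 and real numbers 0 < μ⁻ ≤ μ⁺. Let (μ_n)_{n ≥ k} be a sequence with μ⁻ ≤ μ_n ≤ μ⁺ for all n, let h₁, …, h_{k−1} be positive reals, and define recursively for n ≥ k: h_n = S_n · μ_n / (S_n + μ_n), where S_n = Σ_{j=1}^{k−1} h_{n−j}. Then ((k−2)/(k−1))·μ⁻ ≤ liminf_{n→∞} h_n ≤ limsup_{n→∞} h_n ≤ ((k−2)/(k−1))·μ⁺. In particular, if μ_n is constantly equal to μ > 0, then h_n → ((k−2)/(k−1))·μ as n → ∞. -/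
lemma greedy_mono {x y a b : ℝ} (hx : 0 < x) (ha : 0 < a) (hxy : x ≤ y) (hab : a ≤ b) :
    x * a / (x + a) ≤ y * b / (y + b) := by
  have hy : 0 < y := by linarith
  have hb : 0 < b := by linarith
  rw [div_le_div_iff₀ (by positivity) (by positivity)]
  have h1 : 0 ≤ x * y * (b - a) := mul_nonneg (by positivity) (by linarith)
  have h2 : 0 ≤ a * b * (y - x) := mul_nonneg (by positivity) (by linarith)
  nlinarith

lemma greedy_core
    (k : ℕ) (hk : 3 ≤ k)
    (μm μp : ℝ) (hμm : 0 < μm) (hμmp : μm ≤ μp)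
    (μ : ℕ → ℝ) (hμ : ∀ n, k ≤ n → μm ≤ μ n ∧ μ n ≤ μp)
    (h : ℕ → ℝ) (hpos : ∀ j, 1 ≤ j → j ≤ k - 1 → 0 < h j)
    (hrec : ∀ n, k ≤ n →
      h n = (∑ j ∈ Finset.Icc 1 (k - 1), h (n - j)) * μ n
        / ((∑ j ∈ Finset.Icc 1 (k - 1), h (n - j)) + μ n)) :
    (((k : ℝ) - 2) / ((k : ℝ) - 1)) * μm ≤ Filter.liminf h Filter.atTop ∧
    Filter.liminf h Filter.atTop ≤ Filter.limsup h Filter.atTop ∧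
    Filter.limsup h Filter.atTop ≤ (((k : ℝ) - 2) / ((k : ℝ) - 1)) * μp ∧
    Filter.IsBoundedUnder (· ≤ ·) Filter.atTop h ∧
    Filter.IsBoundedUnder (· ≥ ·) Filter.atTop h := by
  obtain ⟨m, hm⟩ : ∃ m : ℝ, m = (k : ℝ) - 1 := ⟨_, rfl⟩
  have hk' : (3 : ℝ) ≤ k := by exact_mod_cast hk
  have hm2 : 2 ≤ m := by linarith
  have hm0 : 0 < m := by linarith
  have hμp : 0 < μp := by linarith
  rw [show (k : ℝ) - 2 = m - 1 by rw [hm]; ring, ← hm]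
  have hcard : ((Finset.Icc 1 (k - 1)).card : ℝ) = m := by
    rw [Nat.card_Icc, hm]
    have : k - 1 + 1 - 1 = k - 1 := by omega
    rw [this, Nat.cast_sub (by omega)]; simp
  have sum_ge : ∀ (n : ℕ) (a : ℝ), (∀ j ∈ Finset.Icc 1 (k - 1), a ≤ h (n - j)) →
      m * a ≤ ∑ j ∈ Finset.Icc 1 (k - 1), h (n - j) := by
    intro n a ha
    have := Finset.card_nsmul_le_sum _ _ a ha
    rwa [nsmul_eq_mul, hcard] at this
  have sum_le : ∀ (n : ℕ) (a : ℝ), (∀ j ∈ Finset.Icc 1 (k - 1), h (n - j) ≤ a) →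
      ∑ j ∈ Finset.Icc 1 (k - 1), h (n - j) ≤ m * a := by
    intro n a ha
    have := Finset.sum_le_card_nsmul _ _ a ha
    rwa [nsmul_eq_mul, hcard] at this
  have step_lo : ∀ (n : ℕ) (a : ℝ), k ≤ n → 0 < a →
      (∀ j ∈ Finset.Icc 1 (k - 1), a ≤ h (n - j)) → m * a * μm / (m * a + μm) ≤ h n := by
    intro n a hn ha hj
    rw [hrec n hn]
    exact greedy_mono (by positivity) hμm (sum_ge n a hj) (hμ n hn).1
  -- uniform positive lower bound
  obtain ⟨c, hc0, hc⟩ : ∃ c : ℝ, 0 < c ∧ ∀ n, 1 ≤ n → c ≤ h n := by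
    have hne : (Finset.Icc 1 (k - 1)).Nonempty := ⟨1, by simp; omega⟩
    obtain ⟨i, hi, hmin⟩ := Finset.exists_min_image _ h hne
    have hi' := Finset.mem_Icc.mp hi
    have hμ1 : 0 < (m - 1) / m * μm := mul_pos (div_pos (by linarith) hm0) hμm
    refine ⟨min (h i) ((m - 1) / m * μm), lt_min (hpos i hi'.1 hi'.2) hμ1, ?_⟩
    set c := min (h i) ((m - 1) / m * μm) with hcdef
    have hc0 : 0 < c := lt_min (hpos i hi'.1 hi'.2) hμ1
    have hc2 : m * c ≤ (m - 1) * μm := by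
      have : c ≤ (m - 1) / m * μm := min_le_right _ _
      calc m * c ≤ m * ((m - 1) / m * μm) := by gcongr
        _ = _ := by field_simp
    intro n
    induction n using Nat.strong_induction_on with
    | _ n ih =>
      intro hn
      by_cases hnk : n ≤ k - 1
      · exact (min_le_left _ _).trans (hmin n (Finset.mem_Icc.mpr ⟨hn, hnk⟩))
      · refine le_trans ?_ (step_lo n c (by omega) hc0 ?_)
        · rw [le_div_iff₀ (by positivity)]
          nlinarith
        · intro j hj
          rw [Finset.mem_Icc] at hj
          exact ih _ (by omega) (by omega)
  have hub : ∀ n, k ≤ n → h n ≤ μp := by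
    intro n hn
    have hS := sum_ge n c (fun j hj => hc _ (by rw [Finset.mem_Icc] at hj; omega))
    have hmc : 0 < m * c := by positivity
    have hμn := hμ n hn
    rw [hrec n hn, div_le_iff₀ (by linarith)]
    set S := ∑ j ∈ Finset.Icc 1 (k - 1), h (n - j)
    have h1 : S * μ n ≤ S * μp := mul_le_mul_of_nonneg_left hμn.2 (by linarith)
    have h2 : 0 ≤ μp * μ n := mul_nonneg hμp.le (by linarith)
    linarith
  have step_hi : ∀ (n : ℕ) (a : ℝ), k ≤ n →
      (∀ j ∈ Finset.Icc 1 (k - 1), h (n - j) ≤ a) → h n ≤ m * a * μp / (m * a + μp) := by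
    intro n a hn hj
    have hS := sum_ge n c (fun j hj => hc _ (by rw [Finset.mem_Icc] at hj; omega))
    have hmc : 0 < m * c := by positivity
    have hμn := hμ n hn
    rw [hrec n hn]
    exact greedy_mono (by linarith) (by linarith) (sum_le n a hj) hμn.2
  have ev_ub : ∀ᶠ n in Filter.atTop, h n ≤ μp := Filter.eventually_atTop.mpr ⟨k, hub⟩
  have ev_lb : ∀ᶠ n in Filter.atTop, c ≤ h n := Filter.eventually_atTop.mpr ⟨1, hc⟩
  have bu : Filter.IsBoundedUnder (· ≤ ·) Filter.atTop h := ⟨μp, by simpa using ev_ub⟩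
  have bl : Filter.IsBoundedUnder (· ≥ ·) Filter.atTop h := ⟨c, by simpa using ev_lb⟩
  have hLU : Filter.liminf h Filter.atTop ≤ Filter.limsup h Filter.atTop :=
    Filter.liminf_le_limsup bu bl
  have hL0 : c ≤ Filter.liminf h Filter.atTop :=
    Filter.le_liminf_of_le bu.isCoboundedUnder_ge ev_lb
  refine ⟨?_, hLU, ?_, bu, bl⟩
  · set L := Filter.liminf h Filter.atTop with hL
    have hLpos : 0 < L := by linarith
    have key : ∀ a, 0 < a → a < L → m * a * μm ≤ L * (m * a + μm) := by
      intro a ha haL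
      have hev : ∀ᶠ n in Filter.atTop, a < h n := Filter.eventually_lt_of_lt_liminf haL bl
      obtain ⟨N, hN⟩ := Filter.eventually_atTop.mp hev
      rw [← div_le_iff₀ (by positivity)]
      refine Filter.le_liminf_of_le bu.isCoboundedUnder_ge
        (Filter.eventually_atTop.mpr ⟨N + k, fun n hn => step_lo n a (by omega) ha ?_⟩)
      intro j hj
      rw [Finset.mem_Icc] at hj
      exact (hN _ (by omega)).le
    have lim : m * L * μm ≤ L * (m * L + μm) := by
      have h1 : Filter.Tendsto (fun a : ℝ => m * a * μm) (nhdsWithin L (Set.Iio L))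
          (nhds (m * L * μm)) :=
        (Continuous.tendsto (by fun_prop) L).mono_left nhdsWithin_le_nhds
      have h2 : Filter.Tendsto (fun a : ℝ => L * (m * a + μm)) (nhdsWithin L (Set.Iio L))
          (nhds (L * (m * L + μm))) :=
        (Continuous.tendsto (by fun_prop) L).mono_left nhdsWithin_le_nhds
      refine le_of_tendsto_of_tendsto h1 h2 ?_
      filter_upwards [Ioo_mem_nhdsLT hLpos] with a ha using key a ha.1 ha.2
    have : m * μm ≤ m * L + μm := by
      refine le_of_mul_le_mul_left ?_ hLpos
      linarith
    rw [div_mul_eq_mul_div, div_le_iff₀ hm0]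
    linarith
  · set U := Filter.limsup h Filter.atTop with hU
    have hUpos : 0 < U := by linarith
    have key : ∀ a, U < a → U * (m * a + μp) ≤ m * a * μp := by
      intro a haU
      have ha : 0 < a := by linarith
      have hev : ∀ᶠ n in Filter.atTop, h n < a := Filter.eventually_lt_of_limsup_lt haU bu
      obtain ⟨N, hN⟩ := Filter.eventually_atTop.mp hev
      rw [← le_div_iff₀ (by positivity)]
      refine Filter.limsup_le_of_le bl.isCoboundedUnder_le
        (Filter.eventually_atTop.mpr ⟨N + k, fun n hn => step_hi n a (by omega) ?_⟩)
      intro j hj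
      rw [Finset.mem_Icc] at hj
      exact (hN _ (by omega)).le
    have lim : U * (m * U + μp) ≤ m * U * μp := by
      have h1 : Filter.Tendsto (fun a : ℝ => m * a * μp) (nhdsWithin U (Set.Ioi U))
          (nhds (m * U * μp)) :=
        (Continuous.tendsto (by fun_prop) U).mono_left nhdsWithin_le_nhds
      have h2 : Filter.Tendsto (fun a : ℝ => U * (m * a + μp)) (nhdsWithin U (Set.Ioi U))
          (nhds (U * (m * U + μp))) :=
        (Continuous.tendsto (by fun_prop) U).mono_left nhdsWithin_le_nhds
      refine le_of_tendsto_of_tendsto h2 h1 ?_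
      filter_upwards [self_mem_nhdsWithin] with a ha using key a ha
    have : m * U + μp ≤ m * μp := by
      refine le_of_mul_le_mul_left ?_ hUpos
      linarith
    rw [div_mul_eq_mul_div, le_div_iff₀ hm0]
    linarith


/-- **Asymptotic behavior of the greedy step size for the second-order methods.**
For the recursion `h_n = S_n μ_n / (S_n + μ_n)` with `S_n = Σ_{j=1}^{k−1} h_{n−j}` and
`μ⁻ ≤ μ_n ≤ μ⁺`, the step sizes satisfy
`((k−2)/(k−1))·μ⁻ ≤ liminf h_n ≤ limsup h_n ≤ ((k−2)/(k−1))·μ⁺`; in particular, if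
`μ_n` is constantly `μ > 0` then `h_n → ((k−2)/(k−1))·μ`. -/
theorem second_order_greedy_step_size_asymptotics
    (k : ℕ) (hk : 3 ≤ k)
    (μm μp : ℝ) (hμm : 0 < μm) (hμmp : μm ≤ μp)
    (μ : ℕ → ℝ) (hμ : ∀ n, k ≤ n → μm ≤ μ n ∧ μ n ≤ μp)
    (h : ℕ → ℝ) (hpos : ∀ j, 1 ≤ j → j ≤ k - 1 → 0 < h j)
    (hrec : ∀ n, k ≤ n →
      h n = (∑ j ∈ Finset.Icc 1 (k - 1), h (n - j)) * μ n
        / ((∑ j ∈ Finset.Icc 1 (k - 1), h (n - j)) + μ n)) :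
    (((k : ℝ) - 2) / ((k : ℝ) - 1)) * μm ≤ Filter.liminf h Filter.atTop ∧
    Filter.liminf h Filter.atTop ≤ Filter.limsup h Filter.atTop ∧
    Filter.limsup h Filter.atTop ≤ (((k : ℝ) - 2) / ((k : ℝ) - 1)) * μp ∧
    (∀ μ₀ : ℝ, 0 < μ₀ → (∀ n, k ≤ n → μ n = μ₀) →
      Filter.Tendsto h Filter.atTop (nhds ((((k : ℝ) - 2) / ((k : ℝ) - 1)) * μ₀))) := by
  obtain ⟨h1, h2, h3, -, -⟩ := greedy_core k hk μm μp hμm hμmp μ hμ h hpos hrec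
  refine ⟨h1, h2, h3, fun μ₀ h0 hc => ?_⟩
  obtain ⟨g1, -, g3, bu, bl⟩ := greedy_core k hk μ₀ μ₀ h0 le_rfl μ
    (fun n hn => ⟨(hc n hn).ge, (hc n hn).le⟩) h hpos hrec
  exact tendsto_of_le_liminf_of_limsup_le g1 g3 bu bl
end

section
/- Fix k ∈ {4, 5} and real numbers 0 < μ⁻ ≤ μ⁺. Let (μ_n)_{n ≥ k} be a sequence with μ⁻ ≤ μ_n ≤ μ⁺ for all n, let h₁, …, h_{k−1} be positive reals, and define recursively for n ≥ k: h_n = S_n · μ_n / (S_n + 2μ_n), where S_n = Σ_{j=1}^{k−1} h_{n−j}. Then ((k−3)/(k−1))·μ⁻ ≤ liminf_{n→∞} h_n ≤ limsup_{n→∞} h_n ≤ ((k−3)/(k−1))·μ⁺. In particular, if μ_n is constantly equal to μ > 0, then h_n → ((k−3)/(k−1))·μ as n → ∞. -/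
/-- Monotonicity of the step map, lower version. -/
lemma step_lower {S s x y : ℝ} (hs : 0 < s) (hx : 0 < x) (hS : s ≤ S) (hxy : x ≤ y) :
    s * x / (s + 2 * x) ≤ S * y / (S + 2 * y) := by
  have hS0 : 0 < S := lt_of_lt_of_le hs hS
  have hy0 : 0 < y := lt_of_lt_of_le hx hxy
  rw [div_le_div_iff₀ (by positivity) (by positivity)]
  have h1 : 0 ≤ s * S * (y - x) := mul_nonneg (by positivity) (by linarith)
  have h2 : 0 ≤ 2 * x * y * (S - s) := mul_nonneg (by positivity) (by linarith)
  nlinarith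

lemma core_asymptotics
    (m : ℕ) (hm : 3 ≤ m)
    (a b : ℝ) (ha : 0 < a)
    (μ : ℕ → ℝ) (hμ : ∀ n, m + 1 ≤ n → a ≤ μ n ∧ μ n ≤ b)
    (h : ℕ → ℝ) (hpos : ∀ j, 1 ≤ j → j ≤ m → 0 < h j)
    (hrec : ∀ n, m + 1 ≤ n →
      h n = (∑ j ∈ Finset.Icc 1 m, h (n - j)) * μ n
        / ((∑ j ∈ Finset.Icc 1 m, h (n - j)) + 2 * μ n)) :
    Filter.IsBoundedUnder (· ≤ ·) Filter.atTop h ∧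
    Filter.IsBoundedUnder (· ≥ ·) Filter.atTop h ∧
    (((m : ℝ) - 2) / (m : ℝ)) * a ≤ Filter.liminf h Filter.atTop ∧
    Filter.liminf h Filter.atTop ≤ Filter.limsup h Filter.atTop ∧
    Filter.limsup h Filter.atTop ≤ (((m : ℝ) - 2) / (m : ℝ)) * b := by
  have hmR : (3 : ℝ) ≤ m := by exact_mod_cast hm
  have hm0 : (0 : ℝ) < m := by linarith
  have hab : a ≤ b := (hμ (m+1) le_rfl).1.trans (hμ (m+1) le_rfl).2
  have hb : 0 < b := ha.trans_le hab
  -- lower bound on the sums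
  have hlow : ∀ c : ℝ, ∀ n, (∀ j ∈ Finset.Icc 1 m, c ≤ h (n - j)) →
      m * c ≤ ∑ j ∈ Finset.Icc 1 m, h (n - j) := by
    intro c n hc
    have := Finset.card_nsmul_le_sum (Finset.Icc 1 m) (fun j => h (n - j)) c hc
    simpa using this
  have hupp : ∀ c : ℝ, ∀ n, (∀ j ∈ Finset.Icc 1 m, h (n - j) ≤ c) →
      ∑ j ∈ Finset.Icc 1 m, h (n - j) ≤ m * c := by
    intro c n hc
    have := Finset.sum_le_card_nsmul (Finset.Icc 1 m) (fun j => h (n - j)) c hc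
    simpa using this
  -- uniform positive lower bound
  obtain ⟨c, hc0, hca, hch⟩ : ∃ c : ℝ, 0 < c ∧ m * c + 2 * a ≤ m * a ∧
      ∀ j, 1 ≤ j → j ≤ m → c ≤ h j := by
    have hne : (Finset.Icc 1 m).Nonempty := ⟨1, by simp; omega⟩
    obtain ⟨i, hi, hmin⟩ := Finset.exists_min_image (Finset.Icc 1 m) h hne
    rw [Finset.mem_Icc] at hi
    refine ⟨min (h i) ((m - 2) / m * a), lt_min (hpos i hi.1 hi.2) ?_, ?_, ?_⟩
    · have : (0 : ℝ) < m - 2 := by linarith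
      positivity
    · have h1 : m * min (h i) (((m : ℝ) - 2) / m * a) ≤ m * (((m : ℝ) - 2) / m * a) :=
        mul_le_mul_of_nonneg_left (min_le_right _ _) hm0.le
      have h2 : (m : ℝ) * (((m : ℝ) - 2) / m * a) = (m - 2) * a := by field_simp
      linarith
    · intro j h1 h2
      exact (min_le_left _ _).trans (hmin j (Finset.mem_Icc.2 ⟨h1, h2⟩))
  have hcall : ∀ n, 1 ≤ n → c ≤ h n := by
    intro n
    induction n using Nat.strong_induction_on with
    | _ n ih =>
      intro hn
      by_cases hnm : n ≤ m
      · exact hch n hn hnm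
      · have hS := hlow c n (fun j hj => by
          rw [Finset.mem_Icc] at hj
          exact ih (n - j) (by omega) (by omega))
        rw [hrec n (by omega)]
        refine le_trans ?_ (step_lower (by positivity) ha hS (hμ n (by omega)).1)
        rw [le_div_iff₀ (by positivity)]
        nlinarith
  have hSpos : ∀ n, m + 1 ≤ n → 0 < ∑ j ∈ Finset.Icc 1 m, h (n - j) := by
    intro n hn
    refine lt_of_lt_of_le (by positivity : 0 < m * c) (hlow c n fun j hj => ?_)
    rw [Finset.mem_Icc] at hj
    exact hcall _ (by omega)
  have hballs : ∀ n, m + 1 ≤ n → h n ≤ b := by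
    intro n hn
    have hS := hSpos n hn
    have hμn := hμ n hn
    have hμ0 : 0 < μ n := ha.trans_le hμn.1
    rw [hrec n hn, div_le_iff₀ (by positivity)]
    nlinarith [mul_pos hb hμ0]
  have hBa : Filter.IsBoundedUnder (· ≤ ·) Filter.atTop h :=
    Filter.isBoundedUnder_of_eventually_le
      (Filter.eventually_atTop.2 ⟨m + 1, fun n hn => hballs n hn⟩)
  have hBb : Filter.IsBoundedUnder (· ≥ ·) Filter.atTop h :=
    Filter.isBoundedUnder_of_eventually_ge
      (Filter.eventually_atTop.2 ⟨1, fun n hn => hcall n hn⟩)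
  have hLU : Filter.liminf h Filter.atTop ≤ Filter.limsup h Filter.atTop :=
    Filter.liminf_le_limsup hBa hBb
  have hcL : c ≤ Filter.liminf h Filter.atTop :=
    Filter.le_liminf_of_le hBa.isCoboundedUnder_ge
      (Filter.eventually_atTop.2 ⟨1, fun n hn => hcall n hn⟩)
  have hUb : Filter.limsup h Filter.atTop ≤ b :=
    Filter.limsup_le_of_le hBb.isCoboundedUnder_le
      (Filter.eventually_atTop.2 ⟨m + 1, fun n hn => hballs n hn⟩)
  refine ⟨hBa, hBb, ?_, hLU, ?_⟩
  · set L := Filter.liminf h Filter.atTop with hL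
    have hL0 : 0 < L := hc0.trans_le hcL
    have key : ∀ x, 0 < x → x < L → m * x * a ≤ L * (m * x + 2 * a) := by
      intro x hx hxL
      obtain ⟨N, hN⟩ := Filter.eventually_atTop.1 (Filter.eventually_lt_of_lt_liminf hxL hBb)
      rw [← div_le_iff₀ (by positivity)]
      refine Filter.le_liminf_of_le hBa.isCoboundedUnder_ge
        (Filter.eventually_atTop.2 ⟨N + m + 1, fun n hn => ?_⟩)
      rw [hrec n (by omega)]
      refine step_lower (by positivity) ha (hlow x n fun j hj => ?_) (hμ n (by omega)).1
      rw [Finset.mem_Icc] at hj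
      exact (hN _ (by omega)).le
    by_contra hcon
    push Not at hcon
    have h2 : m * L < (m - 2) * a := by
      have := mul_lt_mul_of_pos_left hcon hm0
      have h2 : (m : ℝ) * (((m : ℝ) - 2) / m * a) = (m - 2) * a := by field_simp
      linarith
    have hd : 0 < m * (a - L) := by nlinarith
    have h3 : L ≤ 2 * L * a / (m * (a - L)) := by
      refine le_of_forall_lt_imp_le_of_dense fun x hx => ?_
      rcases le_or_gt x 0 with h0 | h0
      · exact h0.trans (by positivity)
      · rw [le_div_iff₀ hd]
        nlinarith [key x h0 hx]
    rw [le_div_iff₀ hd] at h3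
    nlinarith
  · set U := Filter.limsup h Filter.atTop with hU
    have hU0 : 0 < U := hc0.trans_le (hcL.trans hLU)
    have key : ∀ x, U < x → U * (m * x + 2 * b) ≤ m * x * b := by
      intro x hxU
      have hx : 0 < x := hU0.trans hxU
      obtain ⟨N, hN⟩ := Filter.eventually_atTop.1 (Filter.eventually_lt_of_limsup_lt hxU hBa)
      rw [← le_div_iff₀ (by positivity)]
      refine Filter.limsup_le_of_le hBb.isCoboundedUnder_le
        (Filter.eventually_atTop.2 ⟨N + m + 1, fun n hn => ?_⟩)
      rw [hrec n (by omega)]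
      have hμn := hμ n (by omega)
      refine step_lower (hSpos n (by omega)) (ha.trans_le hμn.1)
        (hupp x n fun j hj => ?_) hμn.2
      rw [Finset.mem_Icc] at hj
      exact (hN _ (by omega)).le
    have hd : 0 < m * (b - U) := by
      have h1 := key (U + 1) (by linarith)
      have h2 : 0 < U * b := by positivity
      by_contra h3
      push Not at h3
      nlinarith [mul_nonneg (by linarith : (0:ℝ) ≤ U + 1) (by linarith : 0 ≤ -(m * (b - U)))]
    have h3 : 2 * U * b / (m * (b - U)) ≤ U := by
      refine le_of_forall_gt_imp_ge_of_dense fun x hx => ?_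
      rw [div_le_iff₀ hd]
      nlinarith [key x hx]
    rw [div_le_iff₀ hd] at h3
    have h4 : 2 * b ≤ m * (b - U) := by
      refine le_of_mul_le_mul_left ?_ hU0
      linarith
    rw [div_mul_eq_mul_div, le_div_iff₀ hm0]
    linarith

/-- **Asymptotic behavior of the greedy step size for the third-order methods.**
For `k ∈ {4, 5}` and the recursion `h_n = S_n μ_n / (S_n + 2μ_n)` with
`S_n = Σ_{j=1}^{k−1} h_{n−j}` and `μ⁻ ≤ μ_n ≤ μ⁺`, the step sizes satisfy
`((k−3)/(k−1))·μ⁻ ≤ liminf h_n ≤ limsup h_n ≤ ((k−3)/(k−1))·μ⁺`; in particular, if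
`μ_n` is constantly `μ > 0` then `h_n → ((k−3)/(k−1))·μ`. -/
theorem third_order_greedy_step_size_asymptotics
    (k : ℕ) (hk : k = 4 ∨ k = 5)
    (μm μp : ℝ) (hμm : 0 < μm) (hμmp : μm ≤ μp)
    (μ : ℕ → ℝ) (hμ : ∀ n, k ≤ n → μm ≤ μ n ∧ μ n ≤ μp)
    (h : ℕ → ℝ) (hpos : ∀ j, 1 ≤ j → j ≤ k - 1 → 0 < h j)
    (hrec : ∀ n, k ≤ n →
      h n = (∑ j ∈ Finset.Icc 1 (k - 1), h (n - j)) * μ n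
        / ((∑ j ∈ Finset.Icc 1 (k - 1), h (n - j)) + 2 * μ n)) :
    (((k : ℝ) - 3) / ((k : ℝ) - 1)) * μm ≤ Filter.liminf h Filter.atTop ∧
    Filter.liminf h Filter.atTop ≤ Filter.limsup h Filter.atTop ∧
    Filter.limsup h Filter.atTop ≤ (((k : ℝ) - 3) / ((k : ℝ) - 1)) * μp ∧
    (∀ μ₀ : ℝ, 0 < μ₀ → (∀ n, k ≤ n → μ n = μ₀) →
      Filter.Tendsto h Filter.atTop (nhds ((((k : ℝ) - 3) / ((k : ℝ) - 1)) * μ₀))) := by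
  obtain ⟨m, rfl, hm⟩ : ∃ m, k = m + 1 ∧ 3 ≤ m := ⟨k - 1, by omega, by omega⟩
  have e1 : ((m + 1 : ℕ) : ℝ) - 3 = m - 2 := by push_cast; ring
  have e2 : ((m + 1 : ℕ) : ℝ) - 1 = m := by push_cast; ring
  rw [e1, e2]
  simp only [Nat.add_sub_cancel] at hpos hrec
  obtain ⟨_, _, h1, h2, h3⟩ := core_asymptotics m hm μm μp hμm μ hμ h hpos hrec
  refine ⟨h1, h2, h3, fun μ₀ h0 hc => ?_⟩
  obtain ⟨hA, hB, h4, _, h6⟩ := core_asymptotics m hm μ₀ μ₀ h0 μ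
    (fun n hn => ⟨(hc n hn).ge, (hc n hn).le⟩) h hpos hrec
  exact tendsto_of_le_liminf_of_limsup_le h4 h6 hA hB
end

section
/- Let r ≥ 0 be real, and let p and k be positive integers with given positive step-size ratios ω₁, …, ω_k. Then the following are equivalent: (i) for every real s > r there exist NO nonnegative vectors δ, β satisfying the order-p conditions with parameter s (i.e., every k-step formula of order p has SSP coefficient at most r); (ii) there exists a nonzero real polynomial q of degree at most p such that q(Ω_j) ≥ 0 for all 0 ≤ j ≤ k−1, q'(Ω_j) + r·q(Ω_j) ≥ 0 for all 0 ≤ j ≤ k−1, and q(Ω_k) = 0. -/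
open Polynomial in
lemma aux_functional (k p : ℕ) (ω : ℕ → ℝ) (s : ℝ) (δ β : ℕ → ℝ)
    (h : OrderCond k p ω s δ β) (q : Polynomial ℝ) (hq : q.natDegree ≤ p) :
    ∑ j ∈ Finset.range k, (δ j * q.eval (OmegaSum ω j) + β j *
      ((Polynomial.derivative q).eval (OmegaSum ω j) + s * q.eval (OmegaSum ω j)))
      = q.eval (OmegaSum ω k) := by
  have key : ∀ m ≤ p, ∑ j ∈ Finset.range k, (δ j * (OmegaSum ω j) ^ m + β j *
      (((m : ℝ) * (OmegaSum ω j) ^ (m - 1)) + s * (OmegaSum ω j) ^ m)) = (OmegaSum ω k) ^ m := by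
    intro m hm
    rcases Nat.eq_zero_or_pos m with rfl | h0
    · have := h.1
      simp only [pow_zero, Nat.cast_zero, zero_mul, zero_add, mul_one]
      rw [← this]
      exact Finset.sum_congr rfl fun j _ => by ring
    · rw [← h.2 m h0 hm]
      exact Finset.sum_congr rfl fun j _ => by ring
  have e1 : ∀ x, q.eval x = ∑ m ∈ Finset.range (p+1), q.coeff m * x ^ m := fun x =>
    Polynomial.eval_eq_sum_range' (by omega) x
  have e2 : ∀ x, (derivative q).eval x =
      ∑ m ∈ Finset.range (p+1), q.coeff m * ((m : ℝ) * x ^ (m - 1)) := by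
    intro x
    conv_lhs => rw [q.as_sum_range_C_mul_X_pow' (show q.natDegree < p + 1 by omega)]
    simp [Polynomial.derivative_sum, Polynomial.eval_finsetSum, derivative_X_pow]
  rw [e1 (OmegaSum ω k)]
  have : ∀ j ∈ Finset.range k, (δ j * q.eval (OmegaSum ω j) + β j *
      ((Polynomial.derivative q).eval (OmegaSum ω j) + s * q.eval (OmegaSum ω j)))
      = ∑ m ∈ Finset.range (p+1), q.coeff m * (δ j * (OmegaSum ω j) ^ m + β j *
      (((m : ℝ) * (OmegaSum ω j) ^ (m - 1)) + s * (OmegaSum ω j) ^ m)) := by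
    intro j _
    rw [e1, e2]
    simp only [Finset.mul_sum, ← Finset.sum_add_distrib]
    exact Finset.sum_congr rfl fun j _ => by ring
  rw [Finset.sum_congr rfl this, Finset.sum_comm]
  refine Finset.sum_congr rfl fun m hm => ?_
  rw [← Finset.mul_sum, key m (by simpa [Nat.lt_succ_iff] using hm)]

lemma aux_mono (k : ℕ) (ω : ℕ → ℝ) (hω : ∀ i, 1 ≤ i → i ≤ k → 0 < ω i) (i j : ℕ) (hij : i < j)
    (hj : j ≤ k) : OmegaSum ω i < OmegaSum ω j := by
  induction j with
  | zero => omega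
  | succ n ih =>
    have h1 : OmegaSum ω (n+1) = OmegaSum ω n + ω (n+1) := by
      simp [OmegaSum, Finset.sum_range_succ]
    have h2 := hω (n+1) (by omega) hj
    rcases Nat.lt_succ_iff_lt_or_eq.mp hij with h | rfl
    · have := ih h (by omega); linarith
    · linarith

open Polynomial in
lemma aux_double (q : Polynomial ℝ) (a : ℝ) :
    (X - C a) ^ 2 ∣ q ↔ q.eval a = 0 ∧ (derivative q).eval a = 0 := by
  constructor
  · rintro ⟨t, rfl⟩
    simp [derivative_pow]
  · rintro ⟨h1, h2⟩
    obtain ⟨t, rfl⟩ := dvd_iff_isRoot.mpr h1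
    have : t.eval a = 0 := by simpa using h2
    obtain ⟨u, rfl⟩ := dvd_iff_isRoot.mpr this
    exact ⟨u, by ring⟩

open Polynomial in
lemma aux_easy (k p : ℕ)
    (ω : ℕ → ℝ) (hω : ∀ i, 1 ≤ i → i ≤ k → 0 < ω i) (r : ℝ)
    (q : Polynomial ℝ) (hq0 : q ≠ 0) (hqp : q.natDegree ≤ p)
    (h1 : ∀ j < k, 0 ≤ q.eval (OmegaSum ω j))
    (h2 : ∀ j < k, 0 ≤ (Polynomial.derivative q).eval (OmegaSum ω j)
          + r * q.eval (OmegaSum ω j))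
    (h3 : q.eval (OmegaSum ω k) = 0) (s : ℝ) (hs : r < s) (δ β : ℕ → ℝ)
    (hδ : ∀ j < k, 0 ≤ δ j) (hβ : ∀ j < k, 0 ≤ β j) (h : OrderCond k p ω s δ β) : False := by
  have hF := aux_functional k p ω s δ β h q hqp
  rw [h3] at hF
  have e : ∀ j, (derivative q).eval (OmegaSum ω j) + s * q.eval (OmegaSum ω j) =
    ((derivative q).eval (OmegaSum ω j) + r * q.eval (OmegaSum ω j)) +
      (s - r) * q.eval (OmegaSum ω j) := fun j => by ring
  have hnn : ∀ j < k, 0 ≤ (derivative q).eval (OmegaSum ω j) + s * q.eval (OmegaSum ω j) := by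
    intro j hj
    rw [e]
    exact add_nonneg (h2 j hj) (mul_nonneg (by linarith) (h1 j hj))
  rw [Finset.sum_eq_zero_iff_of_nonneg] at hF
  swap
  · intro j hj
    have hj := Finset.mem_range.mp hj
    exact add_nonneg (mul_nonneg (hδ j hj) (h1 j hj)) (mul_nonneg (hβ j hj) (hnn j hj))
  have hδz : ∀ j < k, 0 < δ j → q.eval (OmegaSum ω j) = 0 := by
    intro j hj hd
    have := hF j (Finset.mem_range.mpr hj)
    have a1 := mul_nonneg (hδ j hj) (h1 j hj)
    have a2 := mul_nonneg (hβ j hj) (hnn j hj)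
    have : δ j * q.eval (OmegaSum ω j) = 0 := by linarith
    rcases mul_eq_zero.mp this with h | h
    · linarith
    · exact h
  have hβz : ∀ j < k, 0 < β j → (X - C (OmegaSum ω j)) ^ 2 ∣ q := by
    intro j hj hd
    have := hF j (Finset.mem_range.mpr hj)
    have a1 := mul_nonneg (hδ j hj) (h1 j hj)
    have a2 := mul_nonneg (hβ j hj) (hnn j hj)
    have : β j * ((derivative q).eval (OmegaSum ω j) + s * q.eval (OmegaSum ω j)) = 0 := by
      linarith
    rcases mul_eq_zero.mp this with h | h
    · linarith
    · have h' := h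
      rw [e] at h
      have b1 := h2 j hj
      have b2 := mul_nonneg (show 0 ≤ s - r by linarith) (h1 j hj)
      have : (s - r) * q.eval (OmegaSum ω j) = 0 := by linarith
      have b3 : q.eval (OmegaSum ω j) = 0 := by
        rcases mul_eq_zero.mp this with h | h
        · linarith
        · exact h
      rw [b3] at h'
      exact (aux_double _ _).mpr ⟨b3, by linarith⟩
  classical
  set n : ℕ → ℕ := fun j => if 0 < β j then 2 else if 0 < δ j then 1 else 0 with hn
  set w : Polynomial ℝ := ∏ j ∈ Finset.range k, (X - C (OmegaSum ω j)) ^ n j with hw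
  have hwq : w ∣ q := by
    apply Finset.prod_dvd_of_coprime
    · intro i hi j hj hij
      have hi := Finset.mem_range.mp (Finset.mem_coe.mp hi)
      have hj := Finset.mem_range.mp (Finset.mem_coe.mp hj)
      apply IsCoprime.pow
      apply isCoprime_X_sub_C_of_isUnit_sub
      rw [isUnit_iff_ne_zero, sub_ne_zero]
      rcases lt_or_gt_of_ne hij with h | h
      · exact (aux_mono k ω hω i j h hj.le).ne
      · exact (aux_mono k ω hω j i h hi.le).ne'
    · intro j hj
      have hj := Finset.mem_range.mp hj
      simp only [hn]
      split_ifs with c1 c2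
      · exact hβz j hj c1
      · rw [pow_one]; exact dvd_iff_isRoot.mpr (hδz j hj c2)
      · simp
  have hwd : w.natDegree ≤ p := (natDegree_le_of_dvd hwq hq0).trans hqp
  have hW := aux_functional k p ω s δ β h w hwd
  have hdw : ∀ j < k, (X - C (OmegaSum ω j)) ^ n j ∣ w := fun j hj =>
    Finset.dvd_prod_of_mem (fun j => (X - C (OmegaSum ω j)) ^ n j) (Finset.mem_range.mpr hj)
  rw [Finset.sum_eq_zero] at hW
  · have : 0 < w.eval (OmegaSum ω k) := by
      rw [hw, eval_prod]
      apply Finset.prod_pos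
      intro j hj
      have hj := Finset.mem_range.mp hj
      have := aux_mono k ω hω j k hj le_rfl
      simp only [eval_pow, eval_sub, eval_X, eval_C]
      exact pow_pos (by linarith) _
    linarith
  · intro j hj
    have hj := Finset.mem_range.mp hj
    have hd := hdw j hj
    by_cases c1 : 0 < β j
    · simp only [hn, c1, if_true] at hd
      obtain ⟨u1, u2⟩ := (aux_double _ _).mp hd
      simp [u1, u2]
    · have hb : β j = 0 := le_antisymm (not_lt.mp c1) (hβ j hj)
      by_cases c2 : 0 < δ j
      · simp only [hn, c1, c2, if_true, if_false, pow_one] at hd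
        have : w.eval (OmegaSum ω j) = 0 := dvd_iff_isRoot.mp hd
        simp [this, hb]
      · have hd0 : δ j = 0 := le_antisymm (not_lt.mp c2) (hδ j hj)
        simp [hb, hd0]

/-- Value of the polynomial with coefficient vector `c`. -/
noncomputable def auxEv (p : ℕ) (c : Fin (p+1) → ℝ) (x : ℝ) : ℝ := ∑ m, c m * x ^ (m : ℕ)

/-- Value of the derivative of the polynomial with coefficient vector `c`. -/
noncomputable def auxDv (p : ℕ) (c : Fin (p+1) → ℝ) (x : ℝ) : ℝ :=
  ∑ m, c m * ((m : ℕ) * x ^ ((m : ℕ) - 1))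

/-- The dual feasibility condition. -/
def auxFeas (k p : ℕ) (ω : ℕ → ℝ) (s : ℝ) (c : Fin (p+1) → ℝ) : Prop :=
  (∀ j < k, 0 ≤ auxEv p c (OmegaSum ω j)) ∧
  (∀ j < k, 0 ≤ auxDv p c (OmegaSum ω j) + s * auxEv p c (OmegaSum ω j)) ∧
  auxEv p c (OmegaSum ω k) = 0

lemma aux_sep (k p : ℕ) (hk : 1 ≤ k) (ω : ℕ → ℝ) (s : ℝ) (hs : 0 < s)
    (h : ¬ ∃ δ β : ℕ → ℝ,
        (∀ j < k, 0 ≤ δ j) ∧ (∀ j < k, 0 ≤ β j) ∧ OrderCond k p ω s δ β) :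
    ∃ c : Fin (p+1) → ℝ, c ≠ 0 ∧ auxFeas k p ω s c := by
  classical
  let V : Fin k ⊕ Fin k → (Fin (p+1) → ℝ) := Sum.elim
    (fun j m => (OmegaSum ω j) ^ (m : ℕ))
    (fun j m => s⁻¹ * ((m : ℕ) * (OmegaSum ω j) ^ ((m : ℕ) - 1) + s * (OmegaSum ω j) ^ (m : ℕ)))
  let T : Fin (p+1) → ℝ := fun m => (OmegaSum ω k) ^ (m : ℕ)
  let L : (Fin k ⊕ Fin k → ℝ) →ₗ[ℝ] (Fin (p+1) → ℝ) := Fintype.linearCombination ℝ V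
  let A : Set (Fin (p+1) → ℝ) := L '' stdSimplex ℝ (Fin k ⊕ Fin k)
  have hA1 : Convex ℝ A := (convex_stdSimplex ℝ _).linear_image L
  have hA2 : IsCompact A := (isCompact_stdSimplex ℝ _).image L.continuous_of_finiteDimensional
  have hT : T ∉ A := by
    rintro ⟨w, ⟨hw0, hw1⟩, hw⟩
    apply h
    refine ⟨fun j => if hj : j < k then w (Sum.inl ⟨j, hj⟩) else 0,
      fun j => if hj : j < k then s⁻¹ * w (Sum.inr ⟨j, hj⟩) else 0, ?_, ?_, ?_, ?_⟩
    · intro j hj; simp only [hj, dif_pos]; exact hw0 _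
    · intro j hj; simp only [hj, dif_pos]; exact mul_nonneg (inv_nonneg.mpr hs.le) (hw0 _)
    · rw [Finset.sum_range, ← hw1, Fintype.sum_sum_type, ← Finset.sum_add_distrib]
      refine Finset.sum_congr rfl fun j _ => ?_
      simp [hs.ne']
    · intro m hm hmp
      have := congrFun hw ⟨m, by omega⟩
      simp only [L, Fintype.linearCombination_apply, Finset.sum_apply, Fintype.sum_sum_type, T, V,
        Sum.elim_inl, Sum.elim_inr, Pi.smul_apply, smul_eq_mul, Pi.add_apply] at this
      rw [Finset.sum_range, ← this, ← Finset.sum_add_distrib]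
      refine Finset.sum_congr rfl fun j _ => ?_
      simp only [Fin.is_lt, dif_pos, Fin.eta]
      field_simp
      ring
  obtain ⟨f, u, hu1, hu2⟩ := geometric_hahn_banach_point_closed hA1 hA2.isClosed hT
  have hfA : ∀ i, 0 < f (V i) - f T := by
    intro i
    have := hu2 (V i) ⟨Pi.single i 1, single_mem_stdSimplex ℝ i, by
      simp [L]⟩
    linarith
  have hf : ∀ v, f v = ∑ m, f (Pi.single m 1) * v m := by
    intro v
    conv_lhs => rw [pi_eq_sum_univ' v]
    simp [map_sum, mul_comm]
  let c : Fin (p+1) → ℝ := fun m => f (Pi.single m 1) - if m = 0 then f T else 0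
  have hev : ∀ x, auxEv p c x = f (fun m => x ^ (m : ℕ)) - f T := by
    intro x
    rw [hf (fun m => x ^ (m : ℕ))]
    simp [auxEv, c, sub_mul, Finset.sum_sub_distrib]
  have hdv : ∀ x, auxDv p c x = f (fun m => (m : ℕ) * x ^ ((m : ℕ) - 1)) := by
    intro x
    rw [hf]
    simp [auxDv, c, sub_mul, Finset.sum_sub_distrib]
  have hpos : ∀ j < k, 0 < auxEv p c (OmegaSum ω j) := by
    intro j hj
    rw [hev]
    exact hfA (Sum.inl ⟨j, hj⟩)
  refine ⟨c, ?_, fun j hj => (hpos j hj).le, fun j hj => ?_, ?_⟩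
  · intro hc
    have := hpos 0 hk
    rw [hc] at this
    simp [auxEv] at this
  · rw [hev, hdv]
    have := hfA (Sum.inr ⟨j, hj⟩)
    have e : V (Sum.inr ⟨j, hj⟩) = s⁻¹ • ((fun m : Fin (p+1) =>
        ((m : ℕ) : ℝ) * OmegaSum ω j ^ ((m : ℕ) - 1)) +
        s • (fun m : Fin (p+1) => OmegaSum ω j ^ (m : ℕ))) := by
      ext m; simp [V]
    rw [e, map_smul, map_add, map_smul, smul_eq_mul, smul_eq_mul] at this
    have := mul_pos hs this
    rw [mul_sub, mul_inv_cancel_left₀ hs.ne'] at this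
    linarith
  · rw [hev]; exact sub_self _

lemma auxEv_smul (p : ℕ) (a : ℝ) (c : Fin (p+1) → ℝ) (x : ℝ) :
    auxEv p (a • c) x = a * auxEv p c x := by
  simp [auxEv, Finset.mul_sum, mul_assoc]

lemma auxDv_smul (p : ℕ) (a : ℝ) (c : Fin (p+1) → ℝ) (x : ℝ) :
    auxDv p (a • c) x = a * auxDv p c x := by
  simp [auxDv, Finset.mul_sum, mul_assoc]

lemma auxEv_cont (p : ℕ) (x : ℝ) : Continuous fun c => auxEv p c x := by
  unfold auxEv; fun_prop

lemma auxDv_cont (p : ℕ) (x : ℝ) : Continuous fun c => auxDv p c x := by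
  unfold auxDv; fun_prop

open Filter Topology in
lemma aux_limit (k p : ℕ) (ω : ℕ → ℝ) (r : ℝ)
    (h : ∀ s, r < s → ∃ c : Fin (p+1) → ℝ, c ≠ 0 ∧ auxFeas k p ω s c) :
    ∃ c : Fin (p+1) → ℝ, c ≠ 0 ∧ auxFeas k p ω r c := by
  have h' : ∀ n : ℕ, ∃ c : Fin (p+1) → ℝ, c ∈ Metric.sphere (0 : Fin (p+1) → ℝ) 1 ∧
      auxFeas k p ω (r + 1 / ((n : ℝ) + 1)) c := by
    intro n
    obtain ⟨c, hc, h1, h2, h3⟩ := h (r + 1 / ((n : ℝ) + 1)) (by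
      have : 0 < 1 / ((n : ℝ) + 1) := by positivity
      linarith)
    have hi : 0 ≤ ‖c‖⁻¹ := by positivity
    refine ⟨‖c‖⁻¹ • c, ?_, fun j hj => ?_, fun j hj => ?_, ?_⟩
    · simp [norm_smul, hc]
    · rw [auxEv_smul]; exact mul_nonneg hi (h1 j hj)
    · rw [auxEv_smul, auxDv_smul]
      have := mul_nonneg hi (h2 j hj)
      linarith
    · rw [auxEv_smul, h3, mul_zero]
  choose c hc hF using h'
  obtain ⟨a, ha, φ, hφ, hlim⟩ := (isCompact_sphere (0 : Fin (p+1) → ℝ) 1).tendsto_subseq hc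
  have hs : Tendsto (fun n => r + 1 / (((φ n : ℕ) : ℝ) + 1)) atTop (𝓝 r) := by
    have := (tendsto_one_div_add_atTop_nhds_zero_nat (𝕜 := ℝ)).comp hφ.tendsto_atTop
    simpa using this.const_add r
  have hE : ∀ x, Tendsto (fun n => auxEv p (c (φ n)) x) atTop (𝓝 (auxEv p a x)) := fun x =>
    ((auxEv_cont p x).tendsto a).comp hlim
  have hD : ∀ x, Tendsto (fun n => auxDv p (c (φ n)) x) atTop (𝓝 (auxDv p a x)) := fun x =>
    ((auxDv_cont p x).tendsto a).comp hlim
  refine ⟨a, ?_, fun j hj => ?_, fun j hj => ?_, ?_⟩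
  · rintro rfl; simp at ha
  · exact ge_of_tendsto' (hE _) fun n => (hF (φ n)).1 j hj
  · exact ge_of_tendsto' ((hD _).add (hs.mul (hE _))) fun n => (hF (φ n)).2.1 j hj
  · refine tendsto_nhds_unique (hE _) ?_
    simp only [(hF _).2.2]
    exact tendsto_const_nhds

open Polynomial in
lemma aux_poly (p : ℕ) (c : Fin (p+1) → ℝ) (hc : c ≠ 0) :
    ∃ q : Polynomial ℝ, q ≠ 0 ∧ q.natDegree ≤ p ∧ (∀ x, q.eval x = auxEv p c x) ∧
      ∀ x, (derivative q).eval x = auxDv p c x := by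
  refine ⟨∑ m : Fin (p+1), C (c m) * X ^ (m : ℕ), ?_, ?_, ?_, ?_⟩
  · intro h
    apply hc
    ext i
    have := congrArg (fun q => q.coeff (i : ℕ)) h
    simpa [finsetSum_coeff, coeff_X_pow, Fin.val_inj] using this
  · apply natDegree_sum_le_of_forall_le
    intro m _
    exact (natDegree_C_mul_X_pow_le _ _).trans (by omega)
  · intro x; simp [eval_finsetSum, auxEv]
  · intro x; simp [eval_finsetSum, derivative_sum, auxDv, derivative_X_pow]

/-- **Duality characterization of upper bounds for the SSP coefficient.**
Every `k`-step formula of order `p` has SSP coefficient at most `r` if and only if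
there is a nonzero real polynomial `q` of degree at most `p` with `q(Ω_j) ≥ 0` and
`q'(Ω_j) + r q(Ω_j) ≥ 0` for `0 ≤ j ≤ k−1`, and `q(Ω_k) = 0`. -/
theorem ssp_duality_characterization
    (k p : ℕ) (hk : 1 ≤ k) (hp : 1 ≤ p)
    (ω : ℕ → ℝ) (hω : ∀ i, 1 ≤ i → i ≤ k → 0 < ω i)
    (r : ℝ) (hr : 0 ≤ r) :
    (∀ s : ℝ, r < s →
      ¬ ∃ δ β : ℕ → ℝ,
        (∀ j < k, 0 ≤ δ j) ∧ (∀ j < k, 0 ≤ β j) ∧ OrderCond k p ω s δ β)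
    ↔ ∃ q : Polynomial ℝ, q ≠ 0 ∧ q.natDegree ≤ p ∧
        (∀ j < k, 0 ≤ q.eval (OmegaSum ω j)) ∧
        (∀ j < k, 0 ≤ (Polynomial.derivative q).eval (OmegaSum ω j)
          + r * q.eval (OmegaSum ω j)) ∧
        q.eval (OmegaSum ω k) = 0 := by
  constructor
  · intro h
    obtain ⟨c, hc, h1, h2, h3⟩ := aux_limit k p ω r fun s hs =>
      aux_sep k p hk ω s (by linarith) (h s hs)
    obtain ⟨q, hq, hqp, he, hd⟩ := aux_poly p c hc
    refine ⟨q, hq, hqp, fun j hj => ?_, fun j hj => ?_, ?_⟩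
    · rw [he]; exact h1 j hj
    · rw [he, hd]; exact h2 j hj
    · rw [he]; exact h3
  · rintro ⟨q, hq, hqp, h1, h2, h3⟩ s hs ⟨δ, β, hδ, hβ, h⟩
    exact aux_easy k p ω hω r q hq hqp h1 h2 h3 s hs δ β hδ hβ h
end

section
/- Let r > 0 be real, and let p and k be positive integers with given positive step-size ratios ω₁, …, ω_k. Then exactly one of the following two statements holds: (i) there exist nonnegative vectors δ, β satisfying the order-p conditions with parameter r (i.e., there is a k-step formula of order p with SSP coefficient at least r); (ii) there exists a real polynomial q of degree at most p such that q(Ω_j) ≥ 0 for all 0 ≤ j ≤ k−1, q'(Ω_j) + r·q(Ω_j) ≥ 0 for all 0 ≤ j ≤ k−1, and q(Ω_k) < 0. -/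
/-- Derivative evaluation as a sum over coefficients. -/
theorem derivEvalSum (q : Polynomial ℝ) (p : ℕ) (h : q.natDegree ≤ p) (x : ℝ) :
    (Polynomial.derivative q).eval x
      = ∑ i ∈ Finset.range (p + 1), q.coeff i * ((i : ℝ) * x ^ (i - 1)) := by
  conv_lhs => rw [q.as_sum_range_C_mul_X_pow' (Nat.lt_succ_of_le h)]
  rw [Polynomial.derivative_sum, Polynomial.eval_finsetSum]
  refine Finset.sum_congr rfl fun i _ => ?_
  simp [Polynomial.derivative_X_pow]

/-- Duality identity. -/
theorem orderCond_dual (k p : ℕ) (ω : ℕ → ℝ) (r : ℝ) (δ β : ℕ → ℝ)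
    (h : OrderCond k p ω r δ β) (q : Polynomial ℝ) (hq : q.natDegree ≤ p) :
    q.eval (OmegaSum ω k) = ∑ j ∈ Finset.range k,
      (δ j * q.eval (OmegaSum ω j) + β j * ((Polynomial.derivative q).eval (OmegaSum ω j)
          + r * q.eval (OmegaSum ω j))) := by
  have key : ∀ m ∈ Finset.range (p + 1), (∑ j ∈ Finset.range k,
        ((OmegaSum ω j) ^ m * (δ j + r * β j)
          + (m : ℝ) * (OmegaSum ω j) ^ (m - 1) * β j))
      = (OmegaSum ω k) ^ m := by
    intro m hm
    rcases Nat.eq_zero_or_pos m with rfl | h0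
    · simpa using h.1
    · exact h.2 m h0 (by simpa [Nat.lt_succ_iff] using hm)
  rw [Polynomial.eval_eq_sum_range' (Nat.lt_succ_of_le hq)]
  rw [Finset.sum_congr rfl fun m hm => by rw [← key m hm]]
  simp only [Finset.mul_sum]
  rw [Finset.sum_comm]
  refine Finset.sum_congr rfl fun j _ => ?_
  rw [derivEvalSum q p hq, Polynomial.eval_eq_sum_range' (Nat.lt_succ_of_le hq)]
  simp only [Finset.mul_sum, ← Finset.sum_add_distrib]
  refine Finset.sum_congr rfl fun i _ => ?_
  ring

/-- The moment map. -/
noncomputable def momentMap (k p : ℕ) (ω : ℕ → ℝ) (r : ℝ) :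
    (Fin k ⊕ Fin k → ℝ) →ₗ[ℝ] (Fin (p + 1) → ℝ) :=
  Fintype.linearCombination ℝ (Sum.elim
    (fun j : Fin k => fun m : Fin (p + 1) => (OmegaSum ω j) ^ (m : ℕ))
    (fun j : Fin k => fun m : Fin (p + 1) => (OmegaSum ω j) ^ (m : ℕ)
      + ((m : ℕ) : ℝ) * (OmegaSum ω j) ^ ((m : ℕ) - 1) / r))

theorem exists_alternative (k p : ℕ) (ω : ℕ → ℝ) (r : ℝ) (hr : 0 < r) :
    (∃ δ β : ℕ → ℝ,
        (∀ j < k, 0 ≤ δ j) ∧ (∀ j < k, 0 ≤ β j) ∧ OrderCond k p ω r δ β) ∨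
      (∃ q : Polynomial ℝ, q.natDegree ≤ p ∧
        (∀ j < k, 0 ≤ q.eval (OmegaSum ω j)) ∧
        (∀ j < k, 0 ≤ (Polynomial.derivative q).eval (OmegaSum ω j)
          + r * q.eval (OmegaSum ω j)) ∧
        q.eval (OmegaSum ω k) < 0) := by
  classical
  set S := Set.image (momentMap k p ω r) (stdSimplex ℝ (Fin k ⊕ Fin k)) with hS
  set b : Fin (p + 1) → ℝ := fun m => (OmegaSum ω k) ^ (m : ℕ) with hb
  by_cases hmem : b ∈ S
  · left
    obtain ⟨x, ⟨hx0, hx1⟩, hx⟩ := hmem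
    have hr' := hr.ne'
    have hval : ∀ m ≤ p, (∑ j : Fin k, (x (Sum.inl j) * (OmegaSum ω j) ^ m
        + x (Sum.inr j) * ((OmegaSum ω j) ^ m + (m : ℝ) * (OmegaSum ω j) ^ (m - 1) / r)))
        = (OmegaSum ω k) ^ m := by
      intro m hm
      have := congrFun hx ⟨m, Nat.lt_succ_of_le hm⟩
      simpa [momentMap, Fintype.linearCombination_apply, hb, Finset.sum_apply,
        Finset.sum_add_distrib] using this
    refine ⟨fun j => if h : j < k then x (Sum.inl ⟨j, h⟩) else 0,
      fun j => if h : j < k then x (Sum.inr ⟨j, h⟩) / r else 0, ?_, ?_, ?_, ?_⟩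
    · intro j hj
      simp only [hj, dif_pos]
      exact hx0 _
    · intro j hj
      simp only [hj, dif_pos]
      exact div_nonneg (hx0 _) hr.le
    · rw [← Fin.sum_univ_eq_sum_range (fun j => (if h : j < k then x (Sum.inl ⟨j, h⟩) else 0)
        + r * (if h : j < k then x (Sum.inr ⟨j, h⟩) / r else 0))]
      rw [← hx1, Fintype.sum_sum_type, ← Finset.sum_add_distrib]
      refine Finset.sum_congr rfl fun j _ => ?_
      simp only [j.2, dif_pos]
      field_simp
    · intro m _ hm
      rw [← hval m hm]
      rw [← Fin.sum_univ_eq_sum_range (fun j => (OmegaSum ω j) ^ m *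
        ((if h : j < k then x (Sum.inl ⟨j, h⟩) else 0)
        + r * (if h : j < k then x (Sum.inr ⟨j, h⟩) / r else 0))
          + (m : ℝ) * (OmegaSum ω j) ^ (m - 1) *
            (if h : j < k then x (Sum.inr ⟨j, h⟩) / r else 0))]
      refine Finset.sum_congr rfl fun j _ => ?_
      simp only [j.2, dif_pos]
      field_simp
      ring
  · right
    have hconv : Convex ℝ S := (convex_stdSimplex ℝ _).linear_image _
    have hcomp : IsCompact S :=
      (isCompact_stdSimplex ℝ _).image (LinearMap.continuous_of_finiteDimensional _)
    obtain ⟨f, u, hfb, hfS⟩ := geometric_hahn_banach_point_closed hconv hcomp.isClosed hmem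
    have hf : ∀ v : Fin (p + 1) → ℝ, f v = ∑ i, v i * f (Pi.single i 1) := by
      intro v
      conv_lhs => rw [pi_eq_sum_univ' v]
      simp [map_sum]
    have hgen : ∀ s, u < f (momentMap k p ω r (Pi.single s 1)) := fun s =>
      hfS _ ⟨_, single_mem_stdSimplex ℝ s, rfl⟩
    set g : Polynomial ℝ := ∑ i : Fin (p + 1),
      Polynomial.C (f (Pi.single i 1)) * Polynomial.X ^ (i : ℕ) with hg
    have hge : ∀ x : ℝ, g.eval x = f (fun i => x ^ (i : ℕ)) := by
      intro x
      rw [hf, hg, Polynomial.eval_finsetSum]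
      refine Finset.sum_congr rfl fun i _ => ?_
      rw [Polynomial.eval_C_mul, Polynomial.eval_X_pow, mul_comm]
    have hgd : ∀ x : ℝ, (Polynomial.derivative g).eval x
        = f (fun i => ((i : ℕ) : ℝ) * x ^ ((i : ℕ) - 1)) := by
      intro x
      rw [hf, hg, Polynomial.derivative_sum, Polynomial.eval_finsetSum]
      refine Finset.sum_congr rfl fun i _ => ?_
      rw [Polynomial.derivative_C_mul, Polynomial.derivative_X_pow, Polynomial.eval_C_mul,
        Polynomial.eval_C_mul, Polynomial.eval_X_pow, mul_comm]
    refine ⟨g - Polynomial.C u, ?_, ?_, ?_, ?_⟩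
    · rw [Polynomial.natDegree_sub_C]
      refine Polynomial.natDegree_sum_le_of_forall_le _ _ fun i _ => ?_
      exact (Polynomial.natDegree_C_mul_X_pow_le _ _).trans (Nat.lt_succ_iff.mp i.2)
    · intro j hj
      have := hgen (Sum.inl ⟨j, hj⟩)
      simp only [momentMap, Fintype.linearCombination_apply_single, Sum.elim_inl, one_smul] at this
      rw [Polynomial.eval_sub, Polynomial.eval_C, hge]
      linarith
    · intro j hj
      have := hgen (Sum.inr ⟨j, hj⟩)
      simp only [momentMap, Fintype.linearCombination_apply_single, Sum.elim_inr, one_smul] at this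
      rw [Polynomial.eval_sub, Polynomial.eval_C, hge, Polynomial.derivative_sub,
        Polynomial.derivative_C, sub_zero, hgd]
      have e : (fun m : Fin (p + 1) => (OmegaSum ω j) ^ (m : ℕ)
          + ((m : ℕ) : ℝ) * (OmegaSum ω j) ^ ((m : ℕ) - 1) / r)
          = (fun m : Fin (p + 1) => (OmegaSum ω j) ^ (m : ℕ))
          + r⁻¹ • (fun m : Fin (p + 1) => ((m : ℕ) : ℝ) * (OmegaSum ω j) ^ ((m : ℕ) - 1)) := by
        funext m
        simp only [Pi.add_apply, Pi.smul_apply, smul_eq_mul]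
        ring
      rw [e, map_add, map_smul, smul_eq_mul] at this
      have h2 := mul_lt_mul_of_pos_left this hr
      rw [mul_add, mul_inv_cancel_left₀ hr.ne'] at h2
      linarith
    · rw [Polynomial.eval_sub, Polynomial.eval_C, hge]
      linarith

/-- **Farkas-type alternative for SSP formulae.**  For `r > 0`, exactly one of the
following holds: (i) there is a `k`-step formula of order `p` with SSP coefficient at
least `r`; (ii) there is a real polynomial `q` of degree at most `p` with
`q(Ω_j) ≥ 0` and `q'(Ω_j) + r q(Ω_j) ≥ 0` for `0 ≤ j ≤ k−1`, and `q(Ω_k) < 0`. -/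
theorem ssp_farkas_alternative
    (k p : ℕ) (hk : 1 ≤ k) (hp : 1 ≤ p)
    (ω : ℕ → ℝ) (hω : ∀ i, 1 ≤ i → i ≤ k → 0 < ω i)
    (r : ℝ) (hr : 0 < r) :
    Xor'
      (∃ δ β : ℕ → ℝ,
        (∀ j < k, 0 ≤ δ j) ∧ (∀ j < k, 0 ≤ β j) ∧ OrderCond k p ω r δ β)
      (∃ q : Polynomial ℝ, q.natDegree ≤ p ∧
        (∀ j < k, 0 ≤ q.eval (OmegaSum ω j)) ∧
        (∀ j < k, 0 ≤ (Polynomial.derivative q).eval (OmegaSum ω j)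
          + r * q.eval (OmegaSum ω j)) ∧
        q.eval (OmegaSum ω k) < 0) := by
  rcases exists_alternative k p ω r hr with h | h
  · refine Or.inl ⟨h, ?_⟩
    obtain ⟨δ, β, hδ, hβ, ho⟩ := h
    rintro ⟨q, hq, h1, h2, h3⟩
    rw [orderCond_dual k p ω r δ β ho q hq] at h3
    refine absurd h3 (not_lt.mpr (Finset.sum_nonneg fun j hj => ?_))
    have hj := Finset.mem_range.mp hj
    exact add_nonneg (mul_nonneg (hδ j hj) (h1 j hj)) (mul_nonneg (hβ j hj) (h2 j hj))
  · refine Or.inr ⟨h, ?_⟩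
    obtain ⟨q, hq, h1, h2, h3⟩ := h
    rintro ⟨δ, β, hδ, hβ, ho⟩
    rw [orderCond_dual k p ω r δ β ho q hq] at h3
    refine absurd h3 (not_lt.mpr (Finset.sum_nonneg fun j hj => ?_))
    have hj := Finset.mem_range.mp hj
    exact add_nonneg (mul_nonneg (hδ j hj) (h1 j hj)) (mul_nonneg (hβ j hj) (h2 j hj))
end

section
/- Let Δ₁ > Δ₂ > 1 be real numbers and let P(x) = Δ₁Δ₂ x³ − (Δ₁Δ₂ + Δ₁ + Δ₂) x² + 2(Δ₁ + Δ₂ + 1) x − 6. If condition (C) holds, i.e. Δ₂² − (Δ₁ + 1)Δ₂ + 3Δ₁ > 0 or Δ₁ < 5 + 2√6, then P has exactly one real root. -/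
/-- Positivity of the normalized (negated) discriminant on the strip `1/3 ≤ m ≤ 1`. -/
lemma quartic_pos (m t : ℝ) (h1 : 1/3 ≤ m) (h2 : m ≤ 1) :
    0 < t^4 * (-m^2+6*m-1) + t^3 * (6*m^3-40*m^2+2*m) + t^2 * (149*m^2-46*m+5)
      + t * (6-34*m) + 2 := by
  obtain ⟨p, rfl⟩ : ∃ p, m = 1/3 + 2/3 * p := ⟨(m - 1/3) * (3/2), by ring⟩
  have hp0 : 0 ≤ p := by linarith
  have hp1 : p ≤ 1 := by linarith
  have q0 : ∀ n : ℕ, 0 ≤ p^n := fun n => by positivity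
  have q1 : ∀ n : ℕ, p^(n+1) ≤ p^n := fun n => pow_le_pow_of_le_one hp0 hp1 (Nat.le_succ n)
  have a1 := q1 1
  have a2 := q1 2
  have a3 := q1 3
  have a4 := q1 4
  have a5 := q1 5
  have b2 := q0 2
  have b3 := q0 3
  have b4 := q0 4
  have b5 := q0 5
  have b6 := q0 6
  norm_num at a1 a2 a3 a4 a5
  set m := 1/3 + 2/3 * p with hm
  have hA : 0 < -m^2+6*m-1 := by rw [hm]; nlinarith
  have hE2 : 0 < -18+308*m-1818*m^2+3936*m^3-2220*m^4+480*m^5-36*m^6 := by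
    rw [hm]; ring_nf; linarith
  have hS : 0 < -18-120*m-180*m^2+3168*m^3-2976*m^4+2304*m^5-1152*m^6 := by
    rw [hm]; ring_nf; linarith
  have key : 0 < (-18+308*m-1818*m^2+3936*m^3-2220*m^4+480*m^5-36*m^6) * t^2
      + (4*(-m^2+6*m-1)*(6-34*m) - 2*(6*m^3-40*m^2+2*m)*(1/2+4*m)) * t
      + (8*(-m^2+6*m-1) - (1/2+4*m)^2) := by
    have h := mul_pos hA hS
    have h4 : 0 < 4 * (-18+308*m-1818*m^2+3936*m^3-2220*m^4+480*m^5-36*m^6) := by linarith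
    refine pos_of_mul_pos_right (a := 4 * (-18+308*m-1818*m^2+3936*m^3-2220*m^4+480*m^5-36*m^6)) ?_ h4.le
    have := sq_nonneg (2 * (-18+308*m-1818*m^2+3936*m^3-2220*m^4+480*m^5-36*m^6) * t
      + (4*(-m^2+6*m-1)*(6-34*m) - 2*(6*m^3-40*m^2+2*m)*(1/2+4*m)))
    refine lt_of_lt_of_eq (add_pos_of_pos_of_nonneg h this) ?_
    ring
  have h4 : 0 < 4 * (-m^2+6*m-1) := by linarith
  refine pos_of_mul_pos_right (a := 4 * (-m^2+6*m-1)) ?_ h4.le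
  have := sq_nonneg (2*(-m^2+6*m-1)*t^2 + (6*m^3-40*m^2+2*m)*t + (1/2+4*m))
  refine lt_of_lt_of_eq (add_pos_of_pos_of_nonneg key this) ?_
  ring

lemma disc_neg (a b : ℝ) (h21 : 1 < b) (h12 : b < a)
    (hG : 0 < b^2 - (a+1)*b + 3*a) (e1 e2 e3 : ℝ) (h1 : e1 = a+b+1) (h2 : e2 = a*b+a+b)
    (h3 : e3 = a*b) :
    0 < 243*e3^2 + 8*e3*e1^3 + 6*e2^3 - 54*e1*e2*e3 - e1^2*e2^2 := by
  have hb : 0 < b := by linarith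
  have hd : 0 < a + 1 - b := by linarith
  obtain ⟨t, ht⟩ : ∃ t, t = (a+1-b)/b := ⟨_, rfl⟩
  obtain ⟨m, hm⟩ : ∃ m, m = a/(b*(a+1-b)) := ⟨_, rfl⟩
  have hbd : 0 < b*(a+1-b) := mul_pos hb hd
  have hm1 : 1/3 ≤ m := by rw [hm, le_div_iff₀ hbd]; linarith
  have hm2 : m ≤ 1 := by rw [hm, div_le_one hbd]; nlinarith
  have hbt : b * t = a + 1 - b := by rw [ht]; field_simp
  have hmt : b^2 * (m * t) = a := by rw [hm, ht]; field_simp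
  have h := mul_pos (pow_pos hb 6) (quartic_pos m t hm1 hm2)
  have g1 : e1 = b * (2+t) := by rw [h1]; linarith
  have g2 : e2 = b^2 * (m*t + 1 + t) := by
    rw [h2]; linear_combination (-1)*hmt - b * hbt
  have g3 : e3 = b^3 * (m*t) := by rw [h3]; linear_combination (-b)*hmt
  rw [g1, g2, g3]
  refine lt_of_lt_of_eq h ?_
  ring

lemma roots_unique (e1 e2 e3 x y : ℝ) (h3 : 0 < e3)
    (hD : 0 < 243*e3^2 + 8*e3*e1^3 + 6*e2^3 - 54*e1*e2*e3 - e1^2*e2^2)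
    (hx : e3 * x^3 - e2 * x^2 + 2*e1*x - 6 = 0)
    (hy : e3 * y^3 - e2 * y^2 + 2*e1*y - 6 = 0) : x = y := by
  by_contra hne
  have hne' : x - y ≠ 0 := sub_ne_zero.mpr hne
  obtain ⟨z, hz⟩ : ∃ z, z = e2/e3 - x - y := ⟨_, rfl⟩
  have k2 : e2 = e3 * (x+y+z) := by rw [hz]; field_simp; ring
  have k1 : 2 * e1 = e3 * (x*y+y*z+z*x) := by
    apply mul_left_cancel₀ hne'
    rw [k2] at hx hy
    linear_combination hx - hy
  have k1' : e1 = e3 * (x*y+y*z+z*x) / 2 := by linarith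
  have k0 : 6 = e3 * (x*y*z) := by
    rw [k2, k1'] at hx
    linear_combination -hx
  have hsq := sq_nonneg (e3^2*((x-y)*(y-z)*(z-x)))
  have : (e3^2*((x-y)*(y-z)*(z-x)))^2
      = -4 * (243*e3^2 + 8*e3*e1^3 + 6*e2^3 - 54*e1*e2*e3 - e1^2*e2^2) := by
    have e : -4 * (243*e3^2 + 8*e3*e1^3 + 6*e2^3 - 54*e1*e2*e3 - e1^2*e2^2)
        = 18 * e3 * e2 * (2*e1) * 6 - 4 * e2^3 * 6 + e2^2 * (2*e1)^2
          - 4 * e3 * (2*e1)^3 - 27 * e3^2 * 6^2 := by ring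
    have e' : 18 * e3 * e2 * (2*e1) * 6 - 4 * e2^3 * 6 + e2^2 * (2*e1)^2
          - 4 * e3 * (2*e1)^3 - 27 * e3^2 * 6^2 = 18 * e3 * e2 * (2*e1) * (e3 * (x*y*z))
          - 4 * e2^3 * (e3 * (x*y*z)) + e2^2 * (2*e1)^2
          - 4 * e3 * (2*e1)^3 - 27 * e3^2 * (e3 * (x*y*z))^2 := by rw [← k0]
    rw [e, e', k1, k2]
    ring
  linarith

/-- **Unique real root of the cubic `P` under condition (C).**  For `Δ₁ > Δ₂ > 1` and
`P(x) = Δ₁Δ₂ x³ − (Δ₁Δ₂ + Δ₁ + Δ₂) x² + 2(Δ₁ + Δ₂ + 1) x − 6`, if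
`Δ₂² − (Δ₁ + 1)Δ₂ + 3Δ₁ > 0` or `Δ₁ < 5 + 2√6`, then `P` has exactly one real root. -/
theorem cubic_unique_real_root
    (Δ₁ Δ₂ : ℝ) (h21 : 1 < Δ₂) (h12 : Δ₂ < Δ₁)
    (P : ℝ → ℝ)
    (hP : P = fun x => Δ₁ * Δ₂ * x ^ 3 - (Δ₁ * Δ₂ + Δ₁ + Δ₂) * x ^ 2
      + 2 * (Δ₁ + Δ₂ + 1) * x - 6)
    (hC : Δ₂ ^ 2 - (Δ₁ + 1) * Δ₂ + 3 * Δ₁ > 0 ∨ Δ₁ < 5 + 2 * Real.sqrt 6) :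
    ∃! x : ℝ, P x = 0 := by
  have ha : 0 < Δ₁ := by linarith
  have hb : 0 < Δ₂ := by linarith
  have hG : 0 < Δ₂ ^ 2 - (Δ₁ + 1) * Δ₂ + 3 * Δ₁ := by
    rcases hC with h | h
    · exact h
    · have hs : Real.sqrt 6 ^ 2 = 6 := Real.sq_sqrt (by norm_num)
      have hs0 : 2 ≤ Real.sqrt 6 := Real.le_sqrt_of_sq_le (by norm_num)
      have h5 : 0 < (5 + 2 * Real.sqrt 6 - Δ₁) * (Δ₁ - (5 - 2 * Real.sqrt 6)) := by
        apply mul_pos <;> linarith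
      nlinarith [sq_nonneg (2 * Δ₂ - (Δ₁ + 1))]
  have hD := disc_neg Δ₁ Δ₂ h21 h12 hG _ _ _ rfl rfl rfl
  have hab : 0 < Δ₁ * Δ₂ := mul_pos ha hb
  have hcont : Continuous P := by rw [hP]; fun_prop
  have h0 : P 0 ≤ 0 := by rw [hP]; norm_num
  have h3 : 0 ≤ P 3 := by
    rw [hP]
    show 0 ≤ Δ₁ * Δ₂ * 3 ^ 3 - (Δ₁ * Δ₂ + Δ₁ + Δ₂) * 3 ^ 2 + 2 * (Δ₁ + Δ₂ + 1) * 3 - 6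
    nlinarith
  obtain ⟨x, -, hx⟩ := intermediate_value_Icc (by norm_num : (0:ℝ) ≤ 3) hcont.continuousOn
    (⟨h0, h3⟩ : (0:ℝ) ∈ Set.Icc (P 0) (P 3))
  refine ⟨x, hx, fun y hy => ?_⟩
  rw [hP] at hx hy
  exact roots_unique _ _ _ y x hab hD hy hx
end

section
/- Let Δ₁ > Δ₂ > 1 be real numbers, let P(x) = Δ₁Δ₂ x³ − (Δ₁Δ₂ + Δ₁ + Δ₂) x² + 2(Δ₁ + Δ₂ + 1) x − 6, and for ρ ∈ ℝ let A(ρ) be the 3×3 real matrix with rows (ρ−2, ρ−1, ρ−3), (ρΔ₁² − 2Δ₁, ρΔ₁ − 1, ρΔ₁³ − 3Δ₁²), and (ρΔ₂² − 2Δ₂, ρΔ₂ − 1, ρΔ₂³ − 3Δ₂²). If there exists a triplet (r, a, b) ∈ ℝ³ such that A(r)·(a, b, 1)ᵀ = 0 and a² − 4b < 0, then condition (C) holds (i.e. Δ₂² − (Δ₁ + 1)Δ₂ + 3Δ₁ > 0 or Δ₁ < 5 + 2√6) and P(r) = 0. -/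
/-- **From a nullvector of `A(r)` with negative discriminant to a root of `P`.**
If `A(r)·(a, b, 1)ᵀ = 0` and `a² − 4b < 0` for some triplet `(r, a, b)`, then
condition (C) holds and `P(r) = 0`. -/
theorem nullvector_implies_condition_and_root
    (Δ₁ Δ₂ : ℝ) (h21 : 1 < Δ₂) (h12 : Δ₂ < Δ₁)
    (P : ℝ → ℝ)
    (hP : P = fun x => Δ₁ * Δ₂ * x ^ 3 - (Δ₁ * Δ₂ + Δ₁ + Δ₂) * x ^ 2
      + 2 * (Δ₁ + Δ₂ + 1) * x - 6)
    (A : ℝ → Matrix (Fin 3) (Fin 3) ℝ)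
    (hA : A = fun ρ =>
      !![ρ - 2, ρ - 1, ρ - 3;
         ρ * Δ₁ ^ 2 - 2 * Δ₁, ρ * Δ₁ - 1, ρ * Δ₁ ^ 3 - 3 * Δ₁ ^ 2;
         ρ * Δ₂ ^ 2 - 2 * Δ₂, ρ * Δ₂ - 1, ρ * Δ₂ ^ 3 - 3 * Δ₂ ^ 2])
    (r a b : ℝ)
    (hnull : (A r).mulVec ![a, b, 1] = 0)
    (hdisc : a ^ 2 - 4 * b < 0) :
    (Δ₂ ^ 2 - (Δ₁ + 1) * Δ₂ + 3 * Δ₁ > 0 ∨ Δ₁ < 5 + 2 * Real.sqrt 6) ∧ P r = 0 := by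
  subst hP hA
  have e0 := congrFun hnull 0
  have e1 := congrFun hnull 1
  have e2 := congrFun hnull 2
  simp [Matrix.mulVec, dotProduct, Fin.sum_univ_three] at e0 e1 e2
  -- divided differences
  have d01 : r * (Δ₁ ^ 2 + Δ₁ + 1) + (r * a - 3) * (Δ₁ + 1) + (r * b - 2 * a) = 0 := by
    have h : Δ₁ - 1 ≠ 0 := by linarith
    apply mul_left_cancel₀ h
    linear_combination e1 - e0
  have d02 : r * (Δ₂ ^ 2 + Δ₂ + 1) + (r * a - 3) * (Δ₂ + 1) + (r * b - 2 * a) = 0 := by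
    have h : Δ₂ - 1 ≠ 0 := by linarith
    apply mul_left_cancel₀ h
    linear_combination e2 - e0
  have v1 : r * a - 3 = - r * (1 + Δ₁ + Δ₂) := by
    have h : Δ₁ - Δ₂ ≠ 0 := by linarith
    apply mul_left_cancel₀ h
    linear_combination d01 - d02
  have v2 : r * b - 2 * a = r * (Δ₁ * Δ₂ + Δ₁ + Δ₂) := by
    linear_combination d01 - (Δ₁ + 1) * v1
  have v3 : b = r * (Δ₁ * Δ₂) := by
    linear_combination v1 + v2 - e0
  have hb : 0 < b := by nlinarith [sq_nonneg a]
  have h2 : 0 < Δ₂ := by linarith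
  have h1 : 0 < Δ₁ := by linarith
  have hr : 0 < r := by
    rw [v3] at hb
    exact pos_of_mul_pos_left hb (by positivity)
  refine ⟨Or.inl ?_, ?_⟩
  · have hN : 0 < Δ₂ ^ 2 + a * Δ₂ + b := by nlinarith [sq_nonneg (Δ₂ + a / 2)]
    have hrc : r * Δ₂ * (Δ₂ ^ 2 + a * Δ₂ + b) = 3 * Δ₂ ^ 2 + 2 * a * Δ₂ + b := by
      linear_combination e2
    have hQ : r * Δ₂ * (Δ₂ ^ 2 - (Δ₁ + 1) * Δ₂ + 3 * Δ₁)
        = r * Δ₂ ^ 2 * (2 * Δ₂ + a) - 3 * Δ₂ ^ 2 + 3 * b := by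
      linear_combination -Δ₂ ^ 2 * v1 - 3 * v3
    have key : (r * Δ₂ * (Δ₂ ^ 2 + a * Δ₂ + b)) * (Δ₂ ^ 2 - (Δ₁ + 1) * Δ₂ + 3 * Δ₁)
        = 2 * (Δ₂ ^ 2 + a * Δ₂ + b) ^ 2 + (Δ₂ ^ 2 - b) ^ 2 := by
      linear_combination (Δ₂ ^ 2 + a * Δ₂ + b) * hQ + Δ₂ * (2 * Δ₂ + a) * hrc
    have hpos : 0 < (r * Δ₂ * (Δ₂ ^ 2 + a * Δ₂ + b)) * (Δ₂ ^ 2 - (Δ₁ + 1) * Δ₂ + 3 * Δ₁) := by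
      rw [key]; positivity
    exact pos_of_mul_pos_right hpos (by positivity)
  · show Δ₁ * Δ₂ * r ^ 3 - (Δ₁ * Δ₂ + Δ₁ + Δ₂) * r ^ 2 + 2 * (Δ₁ + Δ₂ + 1) * r - 6 = 0
    linear_combination r * v2 + 2 * v1 - r ^ 2 * v3
end

section
/- Let Δ₁ > Δ₂ > 1 be real numbers, let P(x) = Δ₁Δ₂ x³ − (Δ₁Δ₂ + Δ₁ + Δ₂) x² + 2(Δ₁ + Δ₂ + 1) x − 6, and for ρ ∈ ℝ let A(ρ) be the 3×3 real matrix with rows (ρ−2, ρ−1, ρ−3), (ρΔ₁² − 2Δ₁, ρΔ₁ − 1, ρΔ₁³ − 3Δ₁²), and (ρΔ₂² − 2Δ₂, ρΔ₂ − 1, ρΔ₂³ − 3Δ₂²). Suppose condition (C) holds (i.e. Δ₂² − (Δ₁ + 1)Δ₂ + 3Δ₁ > 0 or Δ₁ < 5 + 2√6) and P(r) = 0 for some real r. Then there exist real numbers a, b such that A(r)·(a, b, 1)ᵀ = 0 and a² − 4b < 0, and moreover the triplet (r, a, b) with these two properties is unique. -/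
lemma key_pair (x y z : ℝ) (h : x * y * z + x + y + z = 2)
    (hG : 0 < (z - x) * (z - y) + 2 * (1 + x) * (1 + y)) : 0 < x * y + 2 := by
  by_contra hn
  push Not at hn
  have hid : ((z - x) * (z - y) + 2 * (1 + x) * (1 + y)) * (1 + x * y) ^ 2
      = (x * y + 2) * ((x + y + x * y - 1) ^ 2 + 2 * (x * y + 1) ^ 2) := by
    linear_combination (z * (1 + x * y) + 2 - (x + y) - (x + y) * (1 + x * y)) * h
  have h1 : 0 < (1 + x * y) ^ 2 := by
    have : 1 + x * y < 0 := by linarith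
    exact (sq_pos_iff.2 this.ne)
  have h2 := mul_pos hG h1
  have h3 : 0 ≤ (x + y + x * y - 1) ^ 2 + 2 * (x * y + 1) ^ 2 := by positivity
  nlinarith [mul_nonneg (neg_nonneg.2 hn) h3]

/-- At a root of `P`, the three conditions give negativity of the discriminant. -/
lemma root_disc (d₁ d₂ x : ℝ) (h2 : 1 < d₂) (h12 : d₂ < d₁)
    (hG : 0 < d₂ ^ 2 - (d₁ + 1) * d₂ + 3 * d₁) (hx : 0 < x)
    (h : d₁ * d₂ * x ^ 3 - (d₁ * d₂ + d₁ + d₂) * x ^ 2 + 2 * (d₁ + d₂ + 1) * x - 6 = 0) :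
    (3 - (d₁ + d₂ + 1) * x) ^ 2 - 4 * (d₁ * d₂) * x ^ 3 < 0 := by
  have hx2 : 0 < x ^ 2 := by positivity
  have a1 : 0 < (x - 1) * (d₁ * x - 1) + 2 := by
    apply key_pair _ _ (d₂ * x - 1)
    · linear_combination h
    · have := mul_pos hx2 hG
      nlinarith
  have a2 : 0 < (x - 1) * (d₂ * x - 1) + 2 := by
    apply key_pair _ _ (d₁ * x - 1)
    · linear_combination h
    · have h5 : 0 < (d₁ - 1) * (d₁ - d₂) + 2 * d₂ := by nlinarith
      have := mul_pos hx2 h5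
      nlinarith
  have a3 : 0 < (d₁ * x - 1) * (d₂ * x - 1) + 2 := by
    apply key_pair _ _ (x - 1)
    · linear_combination h
    · have h5 : 0 < (1 - d₁) * (1 - d₂) + 2 * (d₁ * d₂) := by nlinarith
      have := mul_pos hx2 h5
      nlinarith
  have hpos := mul_pos (mul_pos a1 a2) a3
  set u := x - 1 with hu
  set v := d₂ * x - 1 with hv
  set w := d₁ * x - 1 with hw
  have hY : u * v * w + u + v + w = 2 := by
    rw [hu, hv, hw]; linear_combination h
  have e : (3 - (d₁ + d₂ + 1) * x) ^ 2 - 4 * (d₁ * d₂) * x ^ 3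
      = (u + v + w) ^ 2 - 4 * (u + 1) * (v + 1) * (w + 1) := by
    rw [hu, hv, hw]; ring
  have e2 : (u + v + w) ^ 2 - 4 * (u + 1) * (v + 1) * (w + 1)
      = -((u * w + 2) * (u * v + 2) * (w * v + 2)) := by
    linear_combination (u * v * w + u + v + w - 2) * hY
  rw [e, e2]; linarith

lemma root_pos (d₁ d₂ x : ℝ) (h2 : 1 < d₂) (h12 : d₂ < d₁)
    (h : d₁ * d₂ * x ^ 3 - (d₁ * d₂ + d₁ + d₂) * x ^ 2 + 2 * (d₁ + d₂ + 1) * x - 6 = 0) :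
    0 < x := by
  by_contra hn
  push Not at hn
  have hd : 0 < d₁ * d₂ := by nlinarith
  have k1 : 0 ≤ (d₁ * d₂) * ((-x) * x ^ 2) :=
    mul_nonneg hd.le (mul_nonneg (by linarith) (sq_nonneg x))
  have k2 : 0 ≤ (d₁ * d₂ + d₁ + d₂) * x ^ 2 := mul_nonneg (by linarith) (sq_nonneg x)
  have k3 : 0 ≤ (d₁ + d₂ + 1) * (-x) := mul_nonneg (by linarith) (by linarith)
  nlinarith

lemma root_deriv (d₁ d₂ x : ℝ) (h2 : 1 < d₂) (h12 : d₂ < d₁)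
    (hG : 0 < d₂ ^ 2 - (d₁ + 1) * d₂ + 3 * d₁)
    (h : d₁ * d₂ * x ^ 3 - (d₁ * d₂ + d₁ + d₂) * x ^ 2 + 2 * (d₁ + d₂ + 1) * x - 6 = 0) :
    0 < 3 * (d₁ * d₂) * x ^ 2 - 2 * (d₁ * d₂ + d₁ + d₂) * x + 2 * (d₁ + d₂ + 1) := by
  have hx := root_pos d₁ d₂ x h2 h12 h
  have hD := root_disc d₁ d₂ x h2 h12 hG hx h
  have : 0 < x * (3 * (d₁ * d₂) * x ^ 2 - 2 * (d₁ * d₂ + d₁ + d₂) * x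
      + 2 * (d₁ + d₂ + 1)) := by
    nlinarith [sq_nonneg ((d₁ + d₂ + 1) * x - 7)]
  exact pos_of_mul_pos_right this hx.le

lemma root_unique (d₁ d₂ x y : ℝ) (h2 : 1 < d₂) (h12 : d₂ < d₁)
    (hG : 0 < d₂ ^ 2 - (d₁ + 1) * d₂ + 3 * d₁)
    (hx : d₁ * d₂ * x ^ 3 - (d₁ * d₂ + d₁ + d₂) * x ^ 2 + 2 * (d₁ + d₂ + 1) * x - 6 = 0)
    (hy : d₁ * d₂ * y ^ 3 - (d₁ * d₂ + d₁ + d₂) * y ^ 2 + 2 * (d₁ + d₂ + 1) * y - 6 = 0) :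
    x = y := by
  by_contra hne
  have hd : 0 < d₁ * d₂ := by nlinarith
  obtain ⟨t, ht⟩ : ∃ t, d₁ * d₂ + d₁ + d₂ = d₁ * d₂ * (x + y + t) :=
    ⟨(d₁ * d₂ + d₁ + d₂) / (d₁ * d₂) - x - y, by
      have h9 : d₁ * d₂ * ((d₁ * d₂ + d₁ + d₂) / (d₁ * d₂)) = d₁ * d₂ + d₁ + d₂ :=
        by rw [mul_comm, div_mul_cancel₀ _ hd.ne']
      linear_combination -h9⟩
  have hs : 2 * (d₁ + d₂ + 1) = d₁ * d₂ * (x * y + x * t + y * t) := by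
    apply mul_left_cancel₀ (sub_ne_zero.2 hne)
    linear_combination hx - hy + (x ^ 2 - y ^ 2) * ht
  have hp : 6 = d₁ * d₂ * (x * y * t) := by
    linear_combination -hx - x ^ 2 * ht + x * hs
  have htr : d₁ * d₂ * t ^ 3 - (d₁ * d₂ + d₁ + d₂) * t ^ 2 + 2 * (d₁ + d₂ + 1) * t - 6 = 0 := by
    linear_combination -t ^ 2 * ht + t * hs - hp
  have dx := root_deriv d₁ d₂ x h2 h12 hG hx
  have dy := root_deriv d₁ d₂ y h2 h12 hG hy
  have dt := root_deriv d₁ d₂ t h2 h12 hG htr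
  have ex : 0 < d₁ * d₂ * ((x - y) * (x - t)) := by
    have : 3 * (d₁ * d₂) * x ^ 2 - 2 * (d₁ * d₂ + d₁ + d₂) * x + 2 * (d₁ + d₂ + 1)
      = d₁ * d₂ * ((x - y) * (x - t)) := by linear_combination -2 * x * ht + hs
    linarith
  have ey : 0 < d₁ * d₂ * ((y - x) * (y - t)) := by
    have : 3 * (d₁ * d₂) * y ^ 2 - 2 * (d₁ * d₂ + d₁ + d₂) * y + 2 * (d₁ + d₂ + 1)
      = d₁ * d₂ * ((y - x) * (y - t)) := by linear_combination -2 * y * ht + hs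
    linarith
  have et : 0 < d₁ * d₂ * ((t - x) * (t - y)) := by
    have : 3 * (d₁ * d₂) * t ^ 2 - 2 * (d₁ * d₂ + d₁ + d₂) * t + 2 * (d₁ + d₂ + 1)
      = d₁ * d₂ * ((t - x) * (t - y)) := by linear_combination -2 * t * ht + hs
    linarith
  have ex' := pos_of_mul_pos_right ex hd.le
  have ey' := pos_of_mul_pos_right ey hd.le
  have et' := pos_of_mul_pos_right et hd.le
  have := mul_pos (mul_pos ex' ey') et'
  nlinarith [sq_nonneg ((x - y) * (x - t) * (y - t))]

lemma cond_pos (d₁ d₂ : ℝ) (h2 : 1 < d₂) (h12 : d₂ < d₁)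
    (hC : d₂ ^ 2 - (d₁ + 1) * d₂ + 3 * d₁ > 0 ∨ d₁ < 5 + 2 * Real.sqrt 6) :
    0 < d₂ ^ 2 - (d₁ + 1) * d₂ + 3 * d₁ := by
  rcases hC with h | h
  · exact h
  · have hs : Real.sqrt 6 ^ 2 = 6 := Real.sq_sqrt (by norm_num)
    have h0 : 2 < Real.sqrt 6 := by
      rw [Real.lt_sqrt (by norm_num)]; norm_num
    have h3 : 0 < (5 + 2 * Real.sqrt 6 - d₁) * (d₁ - (5 - 2 * Real.sqrt 6)) :=
      mul_pos (by linarith) (by linarith)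
    nlinarith [sq_nonneg (2 * d₂ - (d₁ + 1))]

/-- **From condition (C) and a root of `P` to a unique nullvector triplet.**
If condition (C) holds and `P(r) = 0`, then there exist `a, b` with
`A(r)·(a, b, 1)ᵀ = 0` and `a² − 4b < 0`, and the triplet `(r, a, b)` with these two
properties is unique. -/
theorem condition_and_root_implies_unique_nullvector
    (Δ₁ Δ₂ : ℝ) (h21 : 1 < Δ₂) (h12 : Δ₂ < Δ₁)
    (P : ℝ → ℝ)
    (hP : P = fun x => Δ₁ * Δ₂ * x ^ 3 - (Δ₁ * Δ₂ + Δ₁ + Δ₂) * x ^ 2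
      + 2 * (Δ₁ + Δ₂ + 1) * x - 6)
    (A : ℝ → Matrix (Fin 3) (Fin 3) ℝ)
    (hA : A = fun ρ =>
      !![ρ - 2, ρ - 1, ρ - 3;
         ρ * Δ₁ ^ 2 - 2 * Δ₁, ρ * Δ₁ - 1, ρ * Δ₁ ^ 3 - 3 * Δ₁ ^ 2;
         ρ * Δ₂ ^ 2 - 2 * Δ₂, ρ * Δ₂ - 1, ρ * Δ₂ ^ 3 - 3 * Δ₂ ^ 2])
    (hC : Δ₂ ^ 2 - (Δ₁ + 1) * Δ₂ + 3 * Δ₁ > 0 ∨ Δ₁ < 5 + 2 * Real.sqrt 6)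
    (r : ℝ) (hroot : P r = 0) :
    ∃ a b : ℝ,
      ((A r).mulVec ![a, b, 1] = 0 ∧ a ^ 2 - 4 * b < 0) ∧
      (∀ r' a' b' : ℝ,
        (A r').mulVec ![a', b', 1] = 0 → a' ^ 2 - 4 * b' < 0 →
        r' = r ∧ a' = a ∧ b' = b) := by
  have hG := cond_pos Δ₁ Δ₂ h21 h12 hC
  subst hP hA
  simp only at hroot
  have hr := root_pos Δ₁ Δ₂ r h21 h12 hroot
  have hD := root_disc Δ₁ Δ₂ r h21 h12 hG hr hroot
  have hr0 : r ≠ 0 := hr.ne'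
  obtain ⟨a, ha⟩ : ∃ a, r * a = 3 - (Δ₁ + Δ₂ + 1) * r :=
    ⟨(3 - (Δ₁ + Δ₂ + 1) * r) / r, by field_simp⟩
  obtain ⟨b, hb⟩ : ∃ b, b = r * (Δ₁ * Δ₂) := ⟨_, rfl⟩
  have hc : r * b - 2 * a = r * (Δ₁ * Δ₂ + Δ₁ + Δ₂) := by
    apply mul_left_cancel₀ hr0
    linear_combination hroot - 2 * ha + r ^ 2 * hb
  refine ⟨a, b, ⟨?_, ?_⟩, ?_⟩
  · ext i
    fin_cases i <;> simp [Matrix.mulVec, dotProduct, Fin.sum_univ_three]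
    · linear_combination ha + hc - hb
    · linear_combination Δ₁ ^ 2 * ha + Δ₁ * hc - hb
    · linear_combination Δ₂ ^ 2 * ha + Δ₂ * hc - hb
  · have h1 : r ^ 2 * (a ^ 2 - 4 * b) < 0 := by
      have : r ^ 2 * (a ^ 2 - 4 * b)
          = (3 - (Δ₁ + Δ₂ + 1) * r) ^ 2 - 4 * (Δ₁ * Δ₂) * r ^ 3 := by
        rw [← ha, hb]; ring
      linarith
    by_contra hn
    push Not at hn
    nlinarith [mul_nonneg (sq_nonneg r) hn]
  · intro r' a' b' hM _
    have e0 := congrFun hM 0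
    have e1 := congrFun hM 1
    have e2 := congrFun hM 2
    simp [Matrix.mulVec, dotProduct, Fin.sum_univ_three] at e0 e1 e2
    have f1 : r' * (Δ₁ ^ 2 + Δ₁ + 1) + (r' * a' - 3) * (Δ₁ + 1) + (r' * b' - 2 * a') = 0 := by
      apply mul_left_cancel₀ (show Δ₁ - 1 ≠ 0 by linarith)
      linear_combination e1 - e0
    have f2 : r' * (Δ₂ ^ 2 + Δ₂ + 1) + (r' * a' - 3) * (Δ₂ + 1) + (r' * b' - 2 * a') = 0 := by
      apply mul_left_cancel₀ (show Δ₂ - 1 ≠ 0 by linarith)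
      linear_combination e2 - e0
    have g : r' * (Δ₁ + Δ₂ + 1) + (r' * a' - 3) = 0 := by
      apply mul_left_cancel₀ (show Δ₁ - Δ₂ ≠ 0 by linarith)
      linear_combination f1 - f2
    have g1 : r' * b' - 2 * a' = r' * (Δ₁ * Δ₂ + Δ₁ + Δ₂) := by
      linear_combination f1 - (Δ₁ + 1) * g
    have g0 : b' = r' * (Δ₁ * Δ₂) := by
      linear_combination g + g1 - e0
    have hroot' : Δ₁ * Δ₂ * r' ^ 3 - (Δ₁ * Δ₂ + Δ₁ + Δ₂) * r' ^ 2
        + 2 * (Δ₁ + Δ₂ + 1) * r' - 6 = 0 := by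
      linear_combination r' * g1 + 2 * g - r' ^ 2 * g0
    have hrr := root_unique Δ₁ Δ₂ r' r h21 h12 hG hroot' hroot
    subst hrr
    refine ⟨rfl, ?_, ?_⟩
    · apply mul_left_cancel₀ hr0
      linear_combination g - ha
    · linarith
end

section
/- Fix an integer k ≥ 3 and a real number A > 0. Let τ₁, …, τ_{k−1} be nonnegative reals with τ₁ + ⋯ + τ_{k−1} > 0, and define recursively for n ≥ k: τ_n = S_n / (A + S_n), where S_n = Σ_{j=1}^{k−1} τ_{n−j}. Then τ_n converges as n → ∞; its limit equals 0 if A ≥ k−1, and equals (k−1−A)/(k−1) if 0 < A < k−1. -/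
theorem aux_windows (m : ℕ) (e b : ℕ → ℝ) (N : ℕ) (he : ∀ n, 0 ≤ e n)
    (h0 : ∀ n, N ≤ n → e n ≤ b 0)
    (hb : Filter.Tendsto b Filter.atTop (nhds 0))
    (hs : ∀ i n, N + m ≤ n → (∀ j, 1 ≤ j → j ≤ m → e (n - j) ≤ b i) → e n ≤ b (i + 1)) :
    Filter.Tendsto e Filter.atTop (nhds 0) := by
  have key : ∀ i n, N + i * m ≤ n → e n ≤ b i := by
    intro i
    induction i with
    | zero => intro n hn; exact h0 n (by omega)
    | succ i ih =>
      intro n hn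
      rw [Nat.succ_mul] at hn
      have := Nat.zero_le (i * m)
      exact hs i n (by omega) (fun j h1 h2 => ih _ (by omega))
  rw [Metric.tendsto_atTop] at hb ⊢
  intro ε hε
  obtain ⟨i, hi⟩ := hb ε hε
  refine ⟨N + i * m, fun n hn => ?_⟩
  have h1 := hi i le_rfl
  have h2 := key i n hn
  rw [Real.dist_eq, sub_zero] at h1 ⊢
  rw [abs_of_nonneg (he n)]
  exact lt_of_le_of_lt (h2.trans (le_abs_self _)) h1

/-- **Global attractivity of the rational recursion.**  For `k ≥ 3`, `A > 0`,
nonnegative starting values `τ₁, …, τ_{k−1}` with positive sum, and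
`τ_n = S_n / (A + S_n)` with `S_n = Σ_{j=1}^{k−1} τ_{n−j}` for `n ≥ k`, the sequence
`τ_n` converges: to `0` if `k − 1 ≤ A`, and to `(k−1−A)/(k−1)` if `0 < A < k − 1`. -/
theorem rational_recursion_global_attractivity
    (k : ℕ) (hk : 3 ≤ k) (A : ℝ) (hA : 0 < A)
    (τ : ℕ → ℝ)
    (hτnn : ∀ j, 1 ≤ j → j ≤ k - 1 → 0 ≤ τ j)
    (hτpos : 0 < ∑ j ∈ Finset.Icc 1 (k - 1), τ j)
    (hrec : ∀ n, k ≤ n →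
      τ n = (∑ j ∈ Finset.Icc 1 (k - 1), τ (n - j))
        / (A + ∑ j ∈ Finset.Icc 1 (k - 1), τ (n - j))) :
    Filter.Tendsto τ Filter.atTop
      (nhds (if ((k : ℝ) - 1) ≤ A then 0 else ((k : ℝ) - 1 - A) / ((k : ℝ) - 1))) := by
  obtain ⟨m, rfl⟩ : ∃ m, k = m + 1 := ⟨k - 1, by omega⟩
  simp only [Nat.add_sub_cancel] at hτnn hτpos hrec
  push_cast
  simp only [add_sub_cancel_right]
  have hm : (0 : ℝ) < m := by exact_mod_cast (by omega : 0 < m)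
  set S : ℕ → ℝ := fun n => ∑ j ∈ Finset.Icc 1 m, τ (n - j) with hS
  have hrec' : ∀ n, m + 1 ≤ n → τ n = S n / (A + S n) := hrec
  have nn : ∀ n, 1 ≤ n → 0 ≤ τ n := by
    intro n
    induction n using Nat.strong_induction_on with
    | _ n ih =>
      intro h1
      by_cases h : n ≤ m
      · exact hτnn n h1 h
      · rw [hrec' n (by omega)]
        have : 0 ≤ S n := Finset.sum_nonneg (fun j hj => by
          rw [Finset.mem_Icc] at hj
          exact ih _ (by omega) (by omega))
        positivity
  have Snn : ∀ n, m + 1 ≤ n → 0 ≤ S n := fun n hn => Finset.sum_nonneg (fun j hj => by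
    rw [Finset.mem_Icc] at hj
    exact nn _ (by omega))
  have Sup : ∀ n (U : ℝ), (∀ j, 1 ≤ j → j ≤ m → τ (n - j) ≤ U) → S n ≤ m * U := by
    intro n U h
    have := Finset.sum_le_card_nsmul (Finset.Icc 1 m) (fun j => τ (n - j)) U (fun j hj => by
      rw [Finset.mem_Icc] at hj
      exact h j hj.1 hj.2)
    simpa using this
  have Slo : ∀ n (U : ℝ), (∀ j, 1 ≤ j → j ≤ m → U ≤ τ (n - j)) → m * U ≤ S n := by
    intro n U h
    have := Finset.card_nsmul_le_sum (Finset.Icc 1 m) (fun j => τ (n - j)) U (fun j hj => by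
      rw [Finset.mem_Icc] at hj
      exact h j hj.1 hj.2)
    simpa using this
  have le1 : ∀ n, m + 1 ≤ n → τ n ≤ 1 := by
    intro n hn
    have := Snn n hn
    rw [hrec' n hn, div_le_one (by positivity)]
    linarith
  have shift : ∀ c : ℝ, Filter.Tendsto (fun n => |τ n - c|) Filter.atTop (nhds 0) →
      Filter.Tendsto τ Filter.atTop (nhds c) := by
    intro c h
    rw [tendsto_iff_dist_tendsto_zero]
    exact h
  split_ifs with hc
  · apply shift
    refine aux_windows m _ (fun i => 1 / ((i : ℝ) + 1)) (m + 1) (fun n => abs_nonneg _) ?_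
      tendsto_one_div_add_atTop_nhds_zero_nat ?_
    · intro n hn
      rw [sub_zero, abs_of_nonneg (nn n (by omega))]
      simpa using le1 n hn
    · intro i n hn h
      have h' : S n ≤ m * (1 / ((i : ℝ) + 1)) := Sup n _ (fun j h1 h2 => by
        have := h j h1 h2
        rw [sub_zero] at this
        exact (le_abs_self _).trans this)
      have h0 := Snn n (by omega)
      rw [sub_zero, abs_of_nonneg (nn n (by omega)), hrec' n (by omega),
        div_le_div_iff₀ (by positivity) (by positivity)]
      push_cast
      rw [mul_one_div, le_div_iff₀ (by positivity)] at h'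
      linarith
  · push Not at hc
    set c : ℝ := (m - A) / m with hcdef
    have hmc : m * c = m - A := by rw [hcdef]; field_simp
    have hc0 : 0 < c := div_pos (by linarith) hm
    have hc1 : c ≤ 1 := by rw [hcdef, div_le_one hm]; linarith
    have Spos : 0 < S (m + 1) := by
      have : S (m + 1) = ∑ j ∈ Finset.Icc 1 m, τ j := by
        refine Finset.sum_nbij' (fun j => m + 1 - j) (fun j => m + 1 - j) ?_ ?_ ?_ ?_ ?_
        all_goals intro j hj
        all_goals simp only [Finset.mem_Icc] at hj ⊢
        all_goals omega
      rw [this]; exact hτpos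
    have pos : ∀ n, m + 1 ≤ n → 0 < τ n := by
      intro n hn
      induction n, hn using Nat.le_induction with
      | base => rw [hrec' _ le_rfl]; positivity
      | succ n hn ih =>
        have : 0 < S (n + 1) := by
          have h := Finset.single_le_sum (s := Finset.Icc 1 m) (f := fun j => τ (n + 1 - j))
            (fun j hj => by
              rw [Finset.mem_Icc] at hj
              exact nn _ (by omega)) (Finset.mem_Icc.2 ⟨le_rfl, by omega⟩ : 1 ∈ Finset.Icc 1 m)
          simp only [Nat.add_sub_cancel] at h
          exact lt_of_lt_of_le ih h
        rw [hrec' _ (by omega)]; positivity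
    obtain ⟨L, hL0, hLc, hL⟩ : ∃ L : ℝ, 0 < L ∧ L ≤ c ∧ ∀ n, m + 1 ≤ n → L ≤ τ n := by
      obtain ⟨p, hp, hpm⟩ := Finset.exists_min_image (Finset.Icc (m + 1) (m + m)) τ
        ⟨m + 1, Finset.mem_Icc.2 ⟨le_rfl, by omega⟩⟩
      rw [Finset.mem_Icc] at hp
      refine ⟨min c (τ p), lt_min hc0 (pos p hp.1), min_le_left _ _, ?_⟩
      have hl0 := lt_min hc0 (pos p hp.1)
      have hlc := min_le_left c (τ p)
      have hlp := min_le_right c (τ p)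
      generalize min c (τ p) = L at *
      intro n
      induction n using Nat.strong_induction_on with
      | _ n ih =>
        intro hn
        by_cases h : n ≤ m + m
        · exact hlp.trans (hpm n (Finset.mem_Icc.2 ⟨hn, h⟩))
        · have h1 : m * L ≤ S n := Slo n L (fun j h1 h2 => ih _ (by omega) (by omega))
          have h0 := Snn n hn
          rw [hrec' n hn, le_div_iff₀ (by positivity)]
          have h2 : m * L ≤ m * c := by gcongr
          have h3 : 0 ≤ (1 - L) * (S n - m * L) :=
            mul_nonneg (by linarith) (by linarith)
          nlinarith
    apply shift
    set q : ℝ := A / (A + m * L) with hq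
    have hmL : 0 < m * L := by positivity
    have hq0 : 0 < q := by positivity
    have hq1 : q < 1 := by rw [hq, div_lt_one (by positivity)]; linarith
    refine aux_windows m _ (fun i => q ^ i) (m + 1) (fun n => abs_nonneg _) ?_
      (tendsto_pow_atTop_nhds_zero_of_lt_one hq0.le hq1) ?_
    · intro n hn
      have := le1 n hn
      have := nn n (by omega)
      rw [pow_zero, abs_le]
      constructor <;> linarith
    · intro i n hn h
      have hu : S n ≤ m * (c + q ^ i) := Sup n _ (fun j h1 h2 => by
        have := (abs_le.1 (h j h1 h2)).2
        linarith)
      have hl : m * (c - q ^ i) ≤ S n := Slo n _ (fun j h1 h2 => by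
        have := (abs_le.1 (h j h1 h2)).1
        linarith)
      have hSL : m * L ≤ S n := Slo n L (fun j h1 h2 => hL _ (by omega))
      have h0 := Snn n (by omega)
      have e1 : τ n - c = A / (A + S n) * ((S n - m * c) / m) := by
        rw [hrec' n (by omega), hmc, hcdef]
        field_simp
        ring
      have e2 : |(S n - m * c) / m| ≤ q ^ i := by
        rw [abs_div, abs_of_pos hm, div_le_iff₀ hm, abs_le]
        constructor <;> linarith
      have e3 : A / (A + S n) ≤ q := by rw [hq]; gcongr
      rw [e1, abs_mul, abs_of_nonneg (by positivity), pow_succ, mul_comm (q ^ i)]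
      exact mul_le_mul e3 e2 (abs_nonneg _) hq0.le
end

section
/- Let a ≤ b be real numbers and k ≥ 3 an integer. Let f : [a,b]^{k−1} → [a,b] be continuous and nondecreasing in each of its k−1 arguments, and suppose there is a unique x̄ ∈ [a,b] with f(x̄, x̄, …, x̄) = x̄. Let x₁, …, x_{k−1} ∈ [a,b] and define for n ≥ k: x_n = f(x_{n−1}, x_{n−2}, …, x_{n−(k−1)}). Then x_n → x̄ as n → ∞. -/
/-- **Convergence for monotone maps of higher-order difference equations
(Theorem A.0.1 of Kulenović–Ladas).**  Let `f : [a,b]^{k−1} → [a,b]` be continuous and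
nondecreasing in each argument, with a unique fixed point `x̄` of
`x ↦ f(x, …, x)` in `[a,b]`.  Then every solution of
`x_n = f(x_{n−1}, …, x_{n−(k−1)})` with starting values in `[a,b]` converges to `x̄`. -/
theorem monotone_difference_equation_convergence
    (a b : ℝ) (hab : a ≤ b) (k : ℕ) (hk : 3 ≤ k)
    (f : (Fin (k - 1) → ℝ) → ℝ)
    (hmap : ∀ y : Fin (k - 1) → ℝ, (∀ i, y i ∈ Set.Icc a b) → f y ∈ Set.Icc a b)
    (hcont : ContinuousOn f (Set.univ.pi fun _ : Fin (k - 1) => Set.Icc a b))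
    (hmono : ∀ y z : Fin (k - 1) → ℝ,
      (∀ i, y i ∈ Set.Icc a b) → (∀ i, z i ∈ Set.Icc a b) →
      (∀ i, y i ≤ z i) → f y ≤ f z)
    (xbar : ℝ) (hxbar : xbar ∈ Set.Icc a b)
    (hfix : f (fun _ => xbar) = xbar)
    (huniq : ∀ y ∈ Set.Icc a b, f (fun _ => y) = y → y = xbar)
    (x : ℕ → ℝ)
    (hx0 : ∀ j, 1 ≤ j → j ≤ k - 1 → x j ∈ Set.Icc a b)
    (hrec : ∀ n, k ≤ n → x n = f (fun i => x (n - 1 - (i : ℕ)))) :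
    Filter.Tendsto x Filter.atTop (nhds xbar) := by
  have hg_mem : ∀ t ∈ Set.Icc a b, f (fun _ => t) ∈ Set.Icc a b :=
    fun t ht => hmap _ (fun _ => ht)
  have hg_mono : ∀ s ∈ Set.Icc a b, ∀ t ∈ Set.Icc a b, s ≤ t →
      f (fun _ => s) ≤ f (fun _ => t) :=
    fun s hs t ht hst => hmono _ _ (fun _ => hs) (fun _ => ht) (fun _ => hst)
  -- all terms lie in `[a,b]`
  have hx : ∀ n, 1 ≤ n → x n ∈ Set.Icc a b := by
    intro n
    induction n using Nat.strong_induction_on with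
    | _ n ih =>
      intro hn
      by_cases h : n ≤ k - 1
      · exact hx0 n hn h
      · rw [hrec n (by omega)]
        apply hmap
        intro i
        have := i.2
        exact ih _ (by omega) (by omega)
  -- iterates of the diagonal map
  let m : ℕ → ℝ → ℝ := fun j t => (fun s => f (fun _ => s))^[j] t
  have m_succ : ∀ j t, m (j + 1) t = f (fun _ => m j t) := by
    intro j t
    simp only [m, Function.iterate_succ_apply']
  have m_mem : ∀ t ∈ Set.Icc a b, ∀ j, m j t ∈ Set.Icc a b := by
    intro t ht j
    induction j with
    | zero => exact ht
    | succ j ih => rw [m_succ]; exact hg_mem _ ih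
  have ha : a ∈ Set.Icc a b := ⟨le_rfl, hab⟩
  have hb : b ∈ Set.Icc a b := ⟨hab, le_rfl⟩
  -- a limit of iterates is the fixed point
  have m_lim : ∀ t ∈ Set.Icc a b, ∀ L, Filter.Tendsto (fun j => m j t) Filter.atTop (nhds L) →
      L = xbar := by
    intro t ht L hL
    have hLm : L ∈ Set.Icc a b :=
      isClosed_Icc.mem_of_tendsto hL (Filter.Eventually.of_forall (m_mem t ht))
    apply huniq L hLm
    have h1 : Filter.Tendsto (fun j => m (j + 1) t) Filter.atTop (nhds L) :=
      hL.comp (Filter.tendsto_add_atTop_nat 1)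
    have h2 : Filter.Tendsto (fun j => f (fun _ => m j t)) Filter.atTop
        (nhds (f (fun _ => L))) := by
      have hc := hcont (fun _ => L) (fun _ _ => hLm)
      refine hc.tendsto.comp (tendsto_nhdsWithin_iff.2 ⟨?_, ?_⟩)
      · exact tendsto_pi_nhds.2 (fun _ => hL)
      · exact Filter.Eventually.of_forall (fun j _ _ => m_mem t ht j)
    simp only [m_succ] at h1
    exact tendsto_nhds_unique h2 h1
  have hlo : Filter.Tendsto (fun j => m j a) Filter.atTop (nhds xbar) := by
    have hmon : Monotone (fun j => m j a) := by
      apply monotone_nat_of_le_succ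
      intro j
      induction j with
      | zero => exact (m_mem a ha 1).1
      | succ j ih =>
        rw [m_succ, m_succ (j + 1)]
        exact hg_mono _ (m_mem a ha _) _ (m_mem a ha _) ih
    have h := tendsto_atTop_ciSup hmon ⟨b, by rintro _ ⟨j, rfl⟩; exact (m_mem a ha j).2⟩
    rwa [m_lim a ha _ h] at h
  have hhi : Filter.Tendsto (fun j => m j b) Filter.atTop (nhds xbar) := by
    have hmon : Antitone (fun j => m j b) := by
      apply antitone_nat_of_succ_le
      intro j
      induction j with
      | zero => exact (m_mem b hb 1).2
      | succ j ih =>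
        rw [m_succ (j + 1), m_succ j]
        have h := hg_mono _ (m_mem b hb _) _ (m_mem b hb _) ih
        rwa [m_succ j] at h
    have h := tendsto_atTop_ciInf hmon ⟨a, by rintro _ ⟨j, rfl⟩; exact (m_mem b hb j).1⟩
    rwa [m_lim b hb _ h] at h
  -- eventual bounds
  have key : ∀ j, ∃ N, 1 ≤ N ∧ ∀ n, N ≤ n → m j a ≤ x n ∧ x n ≤ m j b := by
    intro j
    induction j with
    | zero => exact ⟨1, le_rfl, fun n hn => hx n hn⟩
    | succ j ih =>
      obtain ⟨N, hN, h⟩ := ih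
      refine ⟨N + k, by omega, fun n hn => ?_⟩
      have hi : ∀ i : Fin (k - 1), N ≤ n - 1 - (i : ℕ) := by
        intro i
        have := i.2
        omega
      have hxi : ∀ i : Fin (k - 1), x (n - 1 - (i : ℕ)) ∈ Set.Icc a b :=
        fun i => hx _ (hN.trans (hi i))
      rw [hrec n (by omega), m_succ, m_succ]
      exact ⟨hmono _ _ (fun _ => m_mem a ha j) hxi (fun i => (h _ (hi i)).1),
        hmono _ _ hxi (fun _ => m_mem b hb j) (fun i => (h _ (hi i)).2)⟩
  rw [tendsto_order]
  constructor
  · intro c hc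
    obtain ⟨j, hj⟩ := (hlo.eventually (lt_mem_nhds hc)).exists
    obtain ⟨N, -, h⟩ := key j
    filter_upwards [Filter.eventually_ge_atTop N] with n hn
    exact lt_of_lt_of_le hj (h n hn).1
  · intro c hc
    obtain ⟨j, hj⟩ := (hhi.eventually (gt_mem_nhds hc)).exists
    obtain ⟨N, -, h⟩ := key j
    filter_upwards [Filter.eventually_ge_atTop N] with n hn
    exact lt_of_le_of_lt (h n hn).2 hj
end
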